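/- arXiv:2402.09647 — 3 statements merged into one kernel-verified Lean document; each statement's English description precedes it below -/
import Mathlib

section
/- Fix an integer k ≥ 2 and let g : ℤ → ℤ be given by g(n) = n² if n = k^(k^m) for some integer m ≥ 0, and g(n) = 0 otherwise. Then the first-order theory of the structure (ℤ; <, +, g) is decidable; that is, the set of sentences of the first-order language with one binary relation symbol <, one binary function symbol +, and one unary function symbol g that are true in ℤ (with the standard order and addition, and g interpreted as above) is a computable set of sentences (under an effective encoding of sentences). -/
/-!
STATEMENT 4: Fix an integer k ≥ 2 and let g : ℤ → ℤ be given by g(n) = n² if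
n = k^(k^m) for some integer m ≥ 0, and g(n) = 0 otherwise. Then the first-order
theory of (ℤ; <, +, g) is decidable.
-/

open FirstOrder Language

namespace Stmt4

/-- The language with one binary relation `<`, one binary function `+`,
and one unary function `g`. -/
def L : Language :=
  ⟨fun n => match n with | 1 => Unit | 2 => Unit | _ => Empty,
   fun n => match n with | 2 => Unit | _ => Empty⟩

instance instEncF : (n : ℕ) → Encodable (L.Functions n)
  | 0 => inferInstanceAs (Encodable Empty)
  | 1 => inferInstanceAs (Encodable Unit)
  | 2 => inferInstanceAs (Encodable Unit)
  | (_ + 3) => inferInstanceAs (Encodable Empty)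

instance instEncR : (n : ℕ) → Encodable (L.Relations n)
  | 0 => inferInstanceAs (Encodable Empty)
  | 1 => inferInstanceAs (Encodable Empty)
  | 2 => inferInstanceAs (Encodable Unit)
  | (_ + 3) => inferInstanceAs (Encodable Empty)

/-- Partial inverse to `BoundedFormula.listEncode` on sentences. -/
def decodeSentence
    (l : List ((Σ k, L.Term (Empty ⊕ Fin k)) ⊕ ((Σ n, L.Relations n) ⊕ ℕ))) :
    Option L.Sentence :=
  (BoundedFormula.listDecode l)[0]?.bind
    (fun x => if h : x.1 = 0 then
      some (cast (congrArg (L.BoundedFormula Empty) h) x.2) else none)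

/-- An effective encoding of sentences (via their encodings as lists of symbols). -/
instance instEncSentence : Encodable L.Sentence :=
  Encodable.ofLeftInjection
    (fun φ => BoundedFormula.listEncode φ)
    decodeSentence
    (fun φ => by
      have h := BoundedFormula.listDecode_encode_list (L := L) (α := Empty) [⟨0, φ⟩]
      rw [List.flatMap_singleton] at h
      have h' : BoundedFormula.listDecode (BoundedFormula.listEncode φ) =
          [⟨0, φ⟩] := h
      simp [decodeSentence, h'])

/-- The structure on ℤ interpreting `<`, `+` and `g`. -/
def S (g : ℤ → ℤ) : L.Structure ℤ where
  funMap {n} f x :=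
    match n, f with
    | 1, _ => g (x 0)
    | 2, _ => x 0 + x 1
  RelMap {n} r x :=
    match n, r with
    | 2, _ => x 0 < x 1

/-- The first-order theory of (ℤ; <, +, g), as a set of codes of sentences. -/
def theoryCodes (g : ℤ → ℤ) : Set ℕ :=
  {c | ∃ φ : L.Sentence, Encodable.encode φ = c ∧ @Sentence.Realize L ℤ (S g) φ}

/-!
Write integers in base `k` and mark the numbers `k ^ k ^ m` and their squares. Marks and addition
determine `g`: the square of `k ^ k ^ m` is the least marked square above it. Addition with carries
and the marks are local in the digits, so the rank-`n` type of a tuple of integers is determined by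
the rank-`n` types of the segments of its digit strings.

Between the positions `k ^ a` and `k ^ (a + 1)` only `k ^ a` and `2 * k ^ a` are marked, which cut
that range into two unmarked stretches. The type of a long string of constant digits in such a
stretch depends only on its length modulo a factorial, hence only on the residue of `a` modulo a
larger one. A witness of an existential quantifier can therefore be shortened by pumping until it is
below a computable bound. Restricting all quantifiers to such bounds turns the truth of a sentence
into a finite computation.
-/

/-! ### Rank-`n` types and their composition -/

/-- The atomic facts about a tuple indexed by `ι`: `add i j l ε δ` says that entries `i` and `j`
with incoming carry `ε` add up to entry `l` with outgoing carry `δ`. -/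
inductive Atom (ι : Type) : Type
  | add (i j l : ι) (ε δ : Bool)
  | zero (i : ι)
  | neg (i : ι)
  | mark (b : Bool) (i : ι)

namespace Atom

variable {ι : Type}

/-- Encodes atoms as a disjoint union, in order to count them. -/
def toSum : Atom ι → (ι × ι × ι × Bool × Bool) ⊕ (Option (Option Bool) × ι)
  | add i j l ε δ => .inl (i, j, l, ε, δ)
  | zero i => .inr (none, i)
  | neg i => .inr (some none, i)
  | mark b i => .inr (some (some b), i)

lemma toSum_injective : Function.Injective (toSum : Atom ι → _) := by
  rintro (_ | _ | _ | _) (_ | _ | _ | _) h <;> simp_all [toSum]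

instance [Finite ι] : Finite (Atom ι) :=
  Finite.of_injective _ toSum_injective

lemma card_le [Finite ι] : Nat.card (Atom ι) ≤ 4 * Nat.card ι ^ 3 + 4 * Nat.card ι := by
  refine (Nat.card_le_card_of_injective _ toSum_injective).trans_eq ?_
  simp only [Nat.card_sum, Nat.card_prod, Finite.card_option, Nat.card_eq_fintype_card (α := Bool),
    Fintype.card_bool]
  ring

end Atom

/-- Rank-`n` types of tuples indexed by `ι`: the atomic facts about the tuple, together with (for
positive rank) the types of the next lower rank of its one-point extensions, the new entry being
indexed by `none`. -/
def NType : ℕ → Type → Type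
  | 0, ι => Set (Atom ι)
  | n + 1, ι => Set (Atom ι) × Set (NType n (Option ι))

instance NType.finite : ∀ (n : ℕ) (ι : Type) [Finite ι], Finite (NType n ι)
  | 0, ι, _ => inferInstanceAs (Finite (Set (Atom ι)))
  | n + 1, ι, _ =>
    have := NType.finite n (Option ι)
    inferInstanceAs (Finite (Set (Atom ι) × Set (NType n (Option ι))))

/-- An upper bound for the number of rank-`n` types of tuples with at most `s - n` entries. -/
def typeBound (s : ℕ) : ℕ → ℕ
  | 0 => 2 ^ (4 * s ^ 3 + 4 * s)
  | n + 1 => 2 ^ (4 * s ^ 3 + 4 * s + typeBound s n)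

lemma card_set {α : Type} [Finite α] : Nat.card (Set α) = 2 ^ Nat.card α :=
  (Nat.card_fun (α := α) (β := Prop)).trans (by simp)

lemma card_nType_succ (n : ℕ) (ι : Type) [Finite ι] : Nat.card (NType (n + 1) ι) =
    2 ^ (Nat.card (Atom ι) + Nat.card (NType n (Option ι))) := by
  rw [NType, Nat.card_prod, card_set, card_set, pow_add]

lemma card_nType_option_le (n : ℕ) (ι : Type) [Finite ι] :
    Nat.card (NType n (Option ι)) ≤ Nat.card (NType (n + 1) ι) := by
  rw [card_nType_succ]
  exact (Nat.le_add_left _ _).trans Nat.lt_two_pow_self.le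

lemma card_nType_le {s : ℕ} (n : ℕ) (ι : Type) [Finite ι] (h : Nat.card ι + n ≤ s) :
    Nat.card (NType n ι) ≤ typeBound s n := by
  have hAtom : ∀ (κ : Type) [Finite κ], Nat.card κ ≤ s →
      Nat.card (Atom κ) ≤ 4 * s ^ 3 + 4 * s := fun κ _ hκ => by
    refine Atom.card_le.trans ?_
    gcongr
  induction n generalizing ι with
  | zero =>
    rw [NType, card_set]
    exact Nat.pow_le_pow_right two_pos (hAtom ι h)
  | succ n ih =>
    rw [card_nType_succ]
    have hOption := ih (Option ι) (by rw [Finite.card_option]; omega)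
    exact Nat.pow_le_pow_right two_pos (add_le_add (hAtom ι (by omega)) hOption)

lemma typeBound_mono (s : ℕ) : Monotone (typeBound s) := by
  refine monotone_nat_of_le_succ fun n => ?_
  exact (Nat.le_add_left _ _).trans Nat.lt_two_pow_self.le

/-- The tuple `p` with a new entry `x`, indexed by `none`. -/
def extend {ι : Type} (p : ι → ℤ) (x : ℤ) : Option ι → ℤ
  | none => x
  | some i => p i

/-- A set of digit strings, coded by integers, with the relations that enter into atomic facts. It
stands for a section of the positions of a `k`-adic expansion. -/
structure Piece where
  dom : Set ℤ
  add : ℤ → ℤ → ℤ → Bool → Bool → Prop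
  neg : ℤ → Prop
  mark : Bool → ℤ → Prop

namespace Piece

variable {ι : Type} {P Q W P' Q' W' : Piece} {p q p' q' : ι → ℤ}

/-- The truth of an atomic fact about the tuple `p` in the piece `P`. -/
def Sat (P : Piece) (p : ι → ℤ) : Atom ι → Prop
  | .add i j l ε δ => P.add (p i) (p j) (p l) ε δ
  | .zero i => p i = 0
  | .neg i => P.neg (p i)
  | .mark b i => P.mark b (p i)

/-- The rank-`n` type of the tuple `p` in the piece `P`. -/
def nType (P : Piece) : (n : ℕ) → {ι : Type} → (ι → ℤ) → NType n ι
  | 0, _, p => {a | P.Sat p a}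
  | n + 1, _, p => ({a | P.Sat p a}, {t | ∃ x ∈ P.dom, P.nType n (extend p x) = t})

lemma nType_zero_eq_iff : P.nType 0 p = P'.nType 0 p' ↔ ∀ a, P.Sat p a ↔ P'.Sat p' a :=
  Set.ext_iff

lemma nType_succ_eq_iff {n : ℕ} : P.nType (n + 1) p = P'.nType (n + 1) p' ↔
    (∀ a, P.Sat p a ↔ P'.Sat p' a) ∧
    (∀ x ∈ P.dom, ∃ y ∈ P'.dom, P.nType n (extend p x) = P'.nType n (extend p' y)) ∧
    ∀ y ∈ P'.dom, ∃ x ∈ P.dom, P.nType n (extend p x) = P'.nType n (extend p' y) := by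
  refine Prod.ext_iff.trans (and_congr Set.ext_iff ?_)
  refine Set.Subset.antisymm_iff.trans (and_congr ?_ ?_)
  · exact ⟨fun h x hx => let ⟨y, hy, e⟩ := h ⟨x, hx, rfl⟩; ⟨y, hy, e.symm⟩,
      fun h _ ⟨x, hx, e⟩ => let ⟨y, hy, e'⟩ := h x hx; ⟨y, hy, e'.symm.trans e⟩⟩
  · exact ⟨fun h y hy => h ⟨y, hy, rfl⟩,
      fun h _ ⟨y, hy, e⟩ => let ⟨x, hx, e'⟩ := h y hy; ⟨x, hx, e'.trans e⟩⟩

lemma nType_eq_of_succ {n : ℕ} (h : P.nType (n + 1) p = P'.nType (n + 1) p') :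
    P.nType n p = P'.nType n p' := by
  induction n generalizing ι with
  | zero => exact nType_zero_eq_iff.2 (nType_succ_eq_iff.1 h).1
  | succ n ih =>
    obtain ⟨hSat, hForth, hBack⟩ := nType_succ_eq_iff.1 h
    refine nType_succ_eq_iff.2 ⟨hSat, fun x hx => ?_, fun y hy => ?_⟩
    · exact (hForth x hx).imp fun y => And.imp_right ih
    · exact (hBack y hy).imp fun x => And.imp_right ih

lemma extend_mem {D : Set ℤ} (hp : ∀ i, p i ∈ D) {x : ℤ} (hx : x ∈ D) : ∀ i, extend p x i ∈ D
  | none => hx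
  | some i => hp i

lemma nType_congr (hDom : P.dom = P'.dom)
    (hSat : ∀ (κ : Type) (p : κ → ℤ), (∀ i, p i ∈ P.dom) → ∀ a, P.Sat p a ↔ P'.Sat p a)
    (n : ℕ) (hp : ∀ i, p i ∈ P.dom) : P.nType n p = P'.nType n p := by
  induction n generalizing ι with
  | zero => exact nType_zero_eq_iff.2 (hSat ι p hp)
  | succ n ih =>
    refine nType_succ_eq_iff.2 ⟨hSat ι p hp, fun x hx => ?_, fun x hx => ?_⟩
    · exact ⟨x, hDom ▸ hx, ih (extend_mem hp hx)⟩
    · exact ⟨x, hDom ▸ hx, ih (extend_mem hp (hDom ▸ hx))⟩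

/-- `W` is the concatenation of `P` (low positions) and `Q` (high positions), `f` being the
concatenation of strings. -/
structure IsConcat (P Q W : Piece) (f : ℤ → ℤ → ℤ) : Prop where
  dom : W.dom = Set.image2 f P.dom Q.dom
  add {x y z x' y' z' : ℤ} (ε ε' : Bool) : x ∈ P.dom → y ∈ P.dom → z ∈ P.dom →
    (W.add (f x x') (f y y') (f z z') ε ε' ↔ ∃ δ, P.add x y z ε δ ∧ Q.add x' y' z' δ ε')
  zero {x y : ℤ} : x ∈ P.dom → (f x y = 0 ↔ x = 0 ∧ y = 0)
  neg {x y : ℤ} : x ∈ P.dom → (W.neg (f x y) ↔ Q.neg y)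
  mark {x y : ℤ} (b : Bool) : x ∈ P.dom →
    (W.mark b (f x y) ↔ P.mark b x ∧ y = 0 ∨ x = 0 ∧ Q.mark b y)

lemma extend_concat (f : ℤ → ℤ → ℤ) (p q : ι → ℤ) (x y : ℤ) :
    (fun i => f (extend p x i) (extend q y i)) = extend (fun i => f (p i) (q i)) (f x y) := by
  funext i
  cases i <;> rfl

namespace IsConcat

variable {f f' : ℤ → ℤ → ℤ} (h : IsConcat P Q W f) (h' : IsConcat P' Q' W' f')
  (hp : ∀ i, p i ∈ P.dom) (hp' : ∀ i, p' i ∈ P'.dom)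
include h h' hp hp'

lemma sat_congr (hP : ∀ a, P.Sat p a ↔ P'.Sat p' a) (hQ : ∀ a, Q.Sat q a ↔ Q'.Sat q' a)
    (a : Atom ι) :
    W.Sat (fun i => f (p i) (q i)) a ↔ W'.Sat (fun i => f' (p' i) (q' i)) a := by
  cases a with
  | add i j l ε ε' =>
    refine (h.add ε ε' (hp i) (hp j) (hp l)).trans <|
      (exists_congr fun δ => ?_).trans (h'.add ε ε' (hp' i) (hp' j) (hp' l)).symm
    exact and_congr (hP (.add i j l ε δ)) (hQ (.add i j l δ ε'))
  | zero i =>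
    exact (h.zero (hp i)).trans <|
      (and_congr (hP (.zero i)) (hQ (.zero i))).trans (h'.zero (hp' i)).symm
  | neg i => exact (h.neg (hp i)).trans <| (hQ (.neg i)).trans (h'.neg (hp' i)).symm
  | mark b i =>
    refine (h.mark b (hp i)).trans <| (or_congr ?_ ?_).trans (h'.mark b (hp' i)).symm
    · exact and_congr (hP (.mark b i)) (hQ (.zero i))
    · exact and_congr (hP (.zero i)) (hQ (.mark b i))

theorem nType_congr (n : ℕ) (hP : P.nType n p = P'.nType n p')
    (hQ : Q.nType n q = Q'.nType n q') :
    W.nType n (fun i => f (p i) (q i)) = W'.nType n (fun i => f' (p' i) (q' i)) := by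
  induction n generalizing ι with
  | zero =>
    rw [nType_zero_eq_iff] at hP hQ ⊢
    exact h.sat_congr h' hp hp' hP hQ
  | succ n ih =>
    rw [nType_succ_eq_iff] at hP hQ ⊢
    obtain ⟨hPsat, hPforth, hPback⟩ := hP
    obtain ⟨hQsat, hQforth, hQback⟩ := hQ
    refine ⟨h.sat_congr h' hp hp' hPsat hQsat, ?_, ?_⟩
    · rw [h.dom, h'.dom]
      rintro _ ⟨x, hx, y, hy, rfl⟩
      obtain ⟨x', hx', hxx'⟩ := hPforth x hx
      obtain ⟨y', hy', hyy'⟩ := hQforth y hy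
      refine ⟨f' x' y', Set.mem_image2_of_mem hx' hy', ?_⟩
      rw [← extend_concat, ← extend_concat]
      exact ih (extend_mem hp hx) (extend_mem hp' hx') hxx' hyy'
    · rw [h.dom, h'.dom]
      rintro _ ⟨x', hx', y', hy', rfl⟩
      obtain ⟨x, hx, hxx'⟩ := hPback x' hx'
      obtain ⟨y, hy, hyy'⟩ := hQback y' hy'
      refine ⟨f x y, Set.mem_image2_of_mem hx hy, ?_⟩
      rw [← extend_concat, ← extend_concat]
      exact ih (extend_mem hp hx) (extend_mem hp' hx') hxx' hyy'

end IsConcat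

end Piece

/-! ### Digit segments and tails -/

namespace Piece

/-- The marks seen from position `s` on. -/
def shift (M : Bool → ℕ → Prop) (s : ℕ) : Bool → ℕ → Prop := fun b e => M b (s + e)

/-- Strings of `s` digits in base `k`, coded by the number they represent. A number carries the
mark `b` if its only nonzero digit is a `1` at one of the positions in `M b`. -/
def segment (k s : ℕ) (M : Bool → ℕ → Prop) : Piece where
  dom := Set.Ico 0 ((k : ℤ) ^ s)
  add x y z ε δ := x + y + ε.toInt = z + (k : ℤ) ^ s * δ.toInt
  neg _ := False
  mark b x := ∃ e, M b e ∧ x = (k : ℤ) ^ e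

/-- Infinite strings of digits in base `k`, eventually constant with value `0` or (for negative
integers) `k - 1`. -/
def tail (k : ℕ) (M : Bool → ℕ → Prop) : Piece where
  dom := Set.univ
  add x y z ε δ := x + y + ε.toInt = z ∧ δ = false
  neg x := x < 0
  mark b x := ∃ e, M b e ∧ x = (k : ℤ) ^ e

/-- The integer whose digits are those of `x` below position `s` followed by those of `y`. -/
def glue (k s : ℕ) (x y : ℤ) : ℤ := x + (k : ℤ) ^ s * y

section Glue

variable {k s : ℕ} {x y : ℤ}

lemma glue_emod_ediv (k s : ℕ) (x : ℤ) : glue k s (x % (k : ℤ) ^ s) (x / (k : ℤ) ^ s) = x :=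
  Int.emod_add_mul_ediv x _

lemma glue_ediv (hx : x ∈ Set.Ico 0 ((k : ℤ) ^ s)) (y : ℤ) : glue k s x y / (k : ℤ) ^ s = y := by
  rw [glue, Int.add_mul_ediv_left _ _ (hx.1.trans_lt hx.2).ne', Int.ediv_eq_zero_of_lt hx.1 hx.2,
    zero_add]

lemma glue_eq_zero_iff (hx : x ∈ Set.Ico 0 ((k : ℤ) ^ s)) : glue k s x y = 0 ↔ x = 0 ∧ y = 0 := by
  refine ⟨fun h => ?_, ?_⟩
  · have hy : y = 0 := by rw [← glue_ediv hx y, h, Int.zero_ediv]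
    exact ⟨by simpa [glue, hy] using h, hy⟩
  · rintro ⟨rfl, rfl⟩
    simp [glue]

lemma glue_add_eq_iff {y z x' y' z' : ℤ} (w : ℤ) (ε : Bool) (hx : x ∈ Set.Ico 0 ((k : ℤ) ^ s))
    (hy : y ∈ Set.Ico 0 ((k : ℤ) ^ s)) (hz : z ∈ Set.Ico 0 ((k : ℤ) ^ s)) :
    glue k s x x' + glue k s y y' + ε.toInt = glue k s z z' + (k : ℤ) ^ s * w ↔
      ∃ δ : Bool, x + y + ε.toInt = z + (k : ℤ) ^ s * δ.toInt ∧ x' + y' + δ.toInt = z' + w := by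
  simp only [glue]
  generalize (k : ℤ) ^ s = K at *
  obtain ⟨hx0, hxK⟩ := hx
  obtain ⟨hy0, hyK⟩ := hy
  obtain ⟨hz0, hzK⟩ := hz
  constructor
  · intro h
    have hε : 0 ≤ ε.toInt ∧ ε.toInt ≤ 1 := by cases ε <;> simp
    have : x + y + ε.toInt - z = K * (z' + w - x' - y') := by linarith
    have hcarry_gt : -1 < z' + w - x' - y' := by nlinarith
    have hcarry_lt : z' + w - x' - y' < 2 := by nlinarith
    obtain ⟨δ, hδ⟩ : ∃ δ : Bool, δ.toInt = z' + w - x' - y' := by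
      obtain h | h : z' + w - x' - y' = 0 ∨ z' + w - x' - y' = 1 := by omega
      exacts [⟨false, h.symm⟩, ⟨true, h.symm⟩]
    exact ⟨δ, by rw [hδ]; linarith, by rw [hδ]; ring⟩
  · rintro ⟨δ, hlow, hhigh⟩
    linear_combination hlow + K * hhigh

lemma glue_eq_pow_iff (hk : 1 < k) (A : ℕ → Prop) (hx : x ∈ Set.Ico 0 ((k : ℤ) ^ s)) :
    (∃ e, A e ∧ glue k s x y = (k : ℤ) ^ e) ↔
      (∃ e, A e ∧ x = (k : ℤ) ^ e) ∧ y = 0 ∨ x = 0 ∧ ∃ e, A (s + e) ∧ y = (k : ℤ) ^ e := by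
  have hdiv := glue_ediv hx y
  constructor
  · rintro ⟨e, hA, he⟩
    rw [he] at hdiv
    rcases lt_or_ge e s with hes | hes
    · have hlt : (k : ℤ) ^ e < (k : ℤ) ^ s := pow_lt_pow_right₀ (by exact_mod_cast hk) hes
      obtain rfl : y = 0 := by rw [← hdiv, Int.ediv_eq_zero_of_lt (by positivity) hlt]
      exact Or.inl ⟨⟨e, hA, by simpa [glue] using he⟩, rfl⟩
    · obtain ⟨t, rfl⟩ := Nat.exists_eq_add_of_le hes
      have hy : y = (k : ℤ) ^ t := by
        rw [← hdiv, pow_add, Int.mul_ediv_cancel_left _ (hx.1.trans_lt hx.2).ne']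
      rw [hy, pow_add] at he
      exact Or.inr ⟨by simpa [glue] using he, t, hA, hy⟩
  · rintro (⟨⟨e, hA, rfl⟩, rfl⟩ | ⟨rfl, e, hA, rfl⟩)
    · exact ⟨e, hA, by simp [glue]⟩
    · exact ⟨s + e, hA, by simp [glue, pow_add]⟩

end Glue

section Concat

variable {k : ℕ} (hk : 1 < k) (s : ℕ) (M : Bool → ℕ → Prop)
include hk

lemma emod_mem_segment (x : ℤ) : x % (k : ℤ) ^ s ∈ (segment k s M).dom :=
  have hpos : (0 : ℤ) < (k : ℤ) ^ s := by positivity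
  ⟨Int.emod_nonneg _ hpos.ne', Int.emod_lt_of_pos _ hpos⟩

lemma glue_mem_segment_iff (t : ℕ) {x : ℤ} (hx : x ∈ (segment k s M).dom) (y : ℤ) :
    glue k s x y ∈ (segment k (s + t) M).dom ↔ y ∈ (segment k t (shift M s)).dom := by
  have hpos : (0 : ℤ) < (k : ℤ) ^ s := by positivity
  have hdiv := glue_ediv hx y
  simp only [segment, Set.mem_Ico, pow_add]
  rw [← hdiv, Int.ediv_nonneg_iff_of_pos hpos, Int.ediv_lt_iff_lt_mul hpos, hdiv, mul_comm]

theorem isConcat_segment_segment (t : ℕ) :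
    IsConcat (segment k s M) (segment k t (shift M s)) (segment k (s + t) M) (glue k s) where
  dom := by
    refine Set.Subset.antisymm (fun x hx => ?_) ?_
    · rw [← glue_emod_ediv k s x, glue_mem_segment_iff hk s M t (emod_mem_segment hk s M x)] at hx
      exact ⟨_, emod_mem_segment hk s M x, _, hx, glue_emod_ediv k s x⟩
    · rintro _ ⟨x, hx, y, hy, rfl⟩
      exact (glue_mem_segment_iff hk s M t hx y).2 hy
  add {_ _ _ _ _ _} ε ε' hx hy hz := by
    simp only [segment, pow_add, mul_assoc]
    exact glue_add_eq_iff _ ε hx hy hz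
  zero := glue_eq_zero_iff
  neg _ := Iff.rfl
  mark b hx := glue_eq_pow_iff hk (M b) hx

theorem isConcat_segment_tail :
    IsConcat (segment k s M) (tail k (shift M s)) (tail k M) (glue k s) where
  dom := Eq.symm <| Set.eq_univ_of_forall fun x => Set.mem_image2.2
    ⟨_, emod_mem_segment hk s M x, _, trivial, glue_emod_ediv k s x⟩
  add {x y z x' y' z'} ε ε' hx hy hz := by
    have h := glue_add_eq_iff (x' := x') (y' := y') (z' := z') 0 ε hx hy hz
    simp only [mul_zero, add_zero] at h
    simp only [segment, tail, h, ← and_assoc, exists_and_right]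
  zero := glue_eq_zero_iff
  neg {x y} hx := by
    have hpos : (0 : ℤ) < (k : ℤ) ^ s := by positivity
    have h := Int.ediv_nonneg_iff_of_pos (a := glue k s x y) hpos
    rw [glue_ediv hx] at h
    simpa only [tail, not_le] using not_congr h.symm
  mark b hx := glue_eq_pow_iff hk (M b) hx

end Concat

lemma nType_segment_congr {k : ℕ} (hk : 1 < k) {s : ℕ} {M M' : Bool → ℕ → Prop}
    (hM : ∀ b, ∀ e < s, M b e ↔ M' b e) (n : ℕ) {ι : Type} {p : ι → ℤ}
    (hp : ∀ i, p i ∈ (segment k s M).dom) :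
    (segment k s M).nType n p = (segment k s M').nType n p := by
  refine nType_congr (P := segment k s M) (P' := segment k s M') rfl (fun κ p hp a => ?_) n hp
  cases a with
  | mark b i =>
    refine exists_congr fun e => and_congr_left fun he => hM b e ?_
    have hlt := (hp i).2
    rwa [he, pow_lt_pow_iff_right₀ (by exact_mod_cast hk)] at hlt
  | _ => exact Iff.rfl

end Piece

/-! ### Periodicity of the types of constant strings -/

lemma exists_lt_map_eq_of_card_le {α : Type} [Finite α] {N : ℕ} (hN : Nat.card α ≤ N)
    (a : ℕ → α) : ∃ i j, i < j ∧ j ≤ N ∧ a i = a j := by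
  have := Fintype.ofFinite α
  rw [Nat.card_eq_fintype_card] at hN
  obtain ⟨i, j, hij, h⟩ := Fintype.exists_ne_map_eq_of_card_lt (fun i : Fin (N + 1) => a i)
    (by simpa using Nat.lt_succ_of_le hN)
  rcases lt_or_gt_of_ne hij with hlt | hlt
  · exact ⟨i, j, hlt, j.is_le, h⟩
  · exact ⟨j, i, hlt, i.is_le, h.symm⟩

open Nat in
lemma eq_add_factorial_of_succ_congr {α : Type} [Finite α] {N : ℕ} (hN : Nat.card α ≤ N)
    {a : ℕ → α} (ha : ∀ s t, a s = a t → a (s + 1) = a (t + 1)) {s : ℕ} (hs : N ≤ s) :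
    a (s + N !) = a s := by
  have hadd : ∀ r s t, a s = a t → a (s + r) = a (t + r) := fun r => by
    induction r with
    | zero => exact fun s t h => h
    | succ r ih => exact fun s t h => ha _ _ (ih s t h)
  obtain ⟨i, j, hij, hjN, hcycle⟩ := exists_lt_map_eq_of_card_le hN a
  have hperiod : Function.Periodic (fun r => a (i + r)) (j - i) := fun r => by
    beta_reduce
    rw [show i + (r + (j - i)) = j + r by omega, hadd r i j hcycle]
  obtain ⟨r, rfl⟩ := Nat.exists_eq_add_of_le (show i ≤ s by omega)
  obtain ⟨m, hm⟩ := Nat.dvd_factorial (show 0 < j - i by omega) (show j - i ≤ N by omega)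
  have := hperiod.nat_mul m r
  rw [hm, mul_comm, add_assoc]
  exact this

open Nat in
/-- The common period `N !` works because the cycle length is at most `N`. -/
lemma eq_of_modEq_factorial {α : Type} [Finite α] {N : ℕ} (hN : Nat.card α ≤ N) {a : ℕ → α}
    (ha : ∀ s t, a s = a t → a (s + 1) = a (t + 1)) {s t : ℕ} (hs : N ≤ s) (ht : N ≤ t)
    (hst : s ≡ t [MOD N !]) : a s = a t := by
  wlog hle : s ≤ t generalizing s t
  · exact (this ht hs hst.symm (le_of_not_ge hle)).symm
  obtain ⟨m, hm⟩ := (Nat.modEq_iff_dvd' hle).1 hst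
  have hperiod : Function.Periodic (fun r => a (N + r)) N ! := fun r => by
    beta_reduce
    rw [← add_assoc]
    exact eq_add_factorial_of_succ_congr hN ha (Nat.le_add_right N r)
  have := hperiod.nat_mul m (s - N)
  simp only [Nat.cast_id, mul_comm m, ← hm] at this
  convert this.symm using 2 <;> omega

/-- The integers all of whose `k`-adic digits agree: `0` and `-1`. -/
def IsConst (x : ℤ) : Prop := x = 0 ∨ x = -1

namespace IsConst

variable {x : ℤ}

lemma iff_ediv {m : ℤ} (hm : 0 < m) : IsConst (x / m) ↔ x ∈ Set.Ico (-m) m := by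
  have hmod := Int.emod_add_mul_ediv x m
  have h0 := Int.emod_nonneg x hm.ne'
  have hlt := Int.emod_lt_of_pos x hm
  constructor
  · rintro (h | h) <;> rw [h] at hmod <;> constructor <;> linarith
  · rintro ⟨hlow, hhigh⟩
    have : x / m < 1 := by nlinarith
    have : -2 < x / m := by nlinarith
    rw [IsConst]
    omega

lemma ediv_eq (hx : IsConst x) {m : ℤ} (hm : 0 < m) : x / m = x := by
  rcases hx with rfl | rfl
  · exact Int.zero_ediv m
  · exact Int.ediv_eq_neg_one_of_neg_of_le (by omega) (by omega)

lemma emod_mul (hx : IsConst x) {a b : ℤ} (ha : 0 < a) (hb : 0 < b) :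
    x % (a * b) = x % a + a * (x % b) := by
  simp only [Int.emod_def, hx.ediv_eq ha, hx.ediv_eq hb, hx.ediv_eq (mul_pos ha hb)]
  ring

lemma extend {ι : Type} {z : ι → ℤ} (hz : ∀ i, IsConst (z i)) (hx : IsConst x) :
    ∀ i, IsConst (Stmt4.extend z x i)
  | none => hx
  | some i => hz i

end IsConst

namespace Piece

variable {k : ℕ} (hk : 1 < k) {n N s t s' t' : ℕ} {M M' : Bool → ℕ → Prop} {ι : Type} {z : ι → ℤ}
  (hz : ∀ i, IsConst (z i))

/-- The rank-`n` type of the constant strings `z` cut down to length `s`. -/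
def constType (k s : ℕ) (M : Bool → ℕ → Prop) (n : ℕ) {ι : Type} (z : ι → ℤ) : NType n ι :=
  (segment k s M).nType n fun i => z i % (k : ℤ) ^ s

include hk in
lemma constType_congr (hM : ∀ b, ∀ e < s, M b e ↔ M' b e) :
    constType k s M n z = constType k s M' n z :=
  nType_segment_congr hk hM n fun i => emod_mem_segment hk s M (z i)

include hk hz

lemma constType_add (hs : constType k s M n z = constType k s' M' n z)
    (ht : constType k t (shift M s) n z = constType k t' (shift M' s') n z) :
    constType k (s + t) M n z = constType k (s' + t') M' n z := by
  have hpow : ∀ s : ℕ, (0 : ℤ) < (k : ℤ) ^ s := fun s => by positivity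
  have hglue : ∀ s t : ℕ, (fun i => z i % (k : ℤ) ^ (s + t)) =
      fun i => glue k s (z i % (k : ℤ) ^ s) (z i % (k : ℤ) ^ t) := fun s t => by
    funext i
    rw [pow_add, (hz i).emod_mul (hpow s) (hpow t), glue]
  rw [constType, constType, hglue, hglue]
  exact (isConcat_segment_segment hk s M t).nType_congr (isConcat_segment_segment hk s' M' t')
    (fun i => emod_mem_segment hk s M (z i)) (fun i => emod_mem_segment hk s' M' (z i)) n hs ht

open Nat in
lemma constType_unmarked_eq [Finite ι] (hN : Nat.card (NType n ι) ≤ N) (hs : N ≤ s) (ht : N ≤ t)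
    (hst : s ≡ t [MOD N !]) (hM : ∀ b, ∀ e < s, ¬ M b e) (hM' : ∀ b, ∀ e < t, ¬ M' b e) :
    constType k s M n z = constType k t M' n z := by
  rw [constType_congr hk (M' := fun _ _ => False) fun b e he => iff_false_intro (hM b e he),
    constType_congr hk (s := t) (M' := fun _ _ => False) fun b e he => iff_false_intro (hM' b e he)]
  exact eq_of_modEq_factorial (a := fun s => constType k s (fun _ _ => False) n z) hN
    (fun s t h => constType_add hk hz h rfl) hs ht hst

open Nat in
/-- The string falls into its first position, which carries the only marks, and the rest. -/
lemma constType_marked_eq [Finite ι] (hN : Nat.card (NType n ι) ≤ N) (hs : N < s) (ht : N < t)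
    (hst : s ≡ t [MOD N !]) (h0 : ∀ b, M b 0 ↔ M' b 0) (hM : ∀ b e, 0 < e → e < s → ¬ M b e)
    (hM' : ∀ b e, 0 < e → e < t → ¬ M' b e) : constType k s M n z = constType k t M' n z := by
  obtain ⟨s, rfl⟩ := Nat.exists_eq_add_of_le (show 1 ≤ s by omega)
  obtain ⟨t, rfl⟩ := Nat.exists_eq_add_of_le (show 1 ≤ t by omega)
  refine constType_add hk hz (constType_congr hk fun b e he => ?_) ?_
  · obtain rfl : e = 0 := by omega
    exact h0 b
  · exact constType_unmarked_eq hk hz hN (by omega) (by omega) (Nat.ModEq.add_left_cancel' 1 hst)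
      (fun b e he => hM b _ (by omega) (by omega)) fun b e he => hM' b _ (by omega) (by omega)

end Piece

/-! ### The blocks between consecutive powers of `k` -/

/-- The positions of the nonzero digits of the numbers `u = k ^ k ^ m` (mark `false`) and of their
squares (mark `true`). -/
def digitMark (k : ℕ) : Bool → ℕ → Prop
  | false, e => ∃ m, e = k ^ m
  | true, e => ∃ m, e = 2 * k ^ m

section DigitMark

variable {k : ℕ} (hk : 1 < k)
include hk

lemma not_digitMark {a e : ℕ} (hlow : k ^ a < e) (hhigh : e < k ^ (a + 1)) (he : e ≠ 2 * k ^ a)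
    (b : Bool) : ¬ digitMark k b e := by
  cases b with
  | false =>
    rintro ⟨m, rfl⟩
    rw [Nat.pow_lt_pow_iff_right hk] at hlow hhigh
    omega
  | true =>
    rintro ⟨m, rfl⟩
    rcases lt_trichotomy m a with hm | rfl | hm
    · have hle : k ^ (m + 1) ≤ k ^ a := Nat.pow_le_pow_right (by omega) hm
      rw [pow_succ] at hle
      nlinarith [Nat.mul_le_mul_left (k ^ m) hk]
    · exact he rfl
    · have hle : k ^ (a + 1) ≤ k ^ m := Nat.pow_le_pow_right (by omega) hm
      omega

lemma digitMark_true_pow_iff {a : ℕ} (ha : 1 ≤ a) : digitMark k true (k ^ a) ↔ k = 2 := by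
  constructor
  · rintro ⟨m, hm⟩
    have hlt : m < a := by
      rw [← Nat.pow_lt_pow_iff_right hk, hm]
      have : 0 < k ^ m := by positivity
      omega
    have hle : k ^ (m + 1) ≤ k ^ a := Nat.pow_le_pow_right (by omega) hlt
    rw [hm, pow_succ, mul_comm] at hle
    have := Nat.le_of_mul_le_mul_right hle (by positivity)
    omega
  · rintro rfl
    exact ⟨a - 1, by rw [← pow_succ', Nat.sub_add_cancel ha]⟩

lemma two_mul_pow_lt {a : ℕ} (hk' : 2 < k) : 2 * k ^ a < k ^ (a + 1) := by
  rw [pow_succ']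
  have : 0 < k ^ a := by positivity
  gcongr

end DigitMark

open Nat in
lemma pow_modEq_pow (k : ℕ) {Q a b : ℕ} (hQ : 0 < Q) (ha : Q ≤ a) (hb : Q ≤ b)
    (h : a ≡ b [MOD Q !]) :
    k ^ a ≡ k ^ b [MOD Q] := by
  have : NeZero Q := ⟨hQ.ne'⟩
  rw [← ZMod.natCast_eq_natCast_iff]
  push_cast
  exact eq_of_modEq_factorial (a := fun a => (k : ZMod Q) ^ a) (by simp)
    (fun s t hst => by simp only [pow_succ, hst]) ha hb h

namespace Piece

section Block

variable {k : ℕ} (hk : 1 < k) {n N : ℕ} {ι : Type} [Finite ι] (hN : Nat.card (NType n ι) ≤ N)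
  {z : ι → ℤ} (hz : ∀ i, IsConst (z i)) {a b : ℕ}
include hk hN hz

open Nat in
lemma constType_firstPart_eq (ha : N + N ! ≤ a) (hb : N + N ! ≤ b)
    (hab : k ^ a ≡ k ^ b [MOD N !]) :
    constType k (k ^ a) (shift (digitMark k) (k ^ a)) n z =
      constType k (k ^ b) (shift (digitMark k) (k ^ b)) n z := by
  have hpos := Nat.factorial_pos N
  have hlarge : ∀ a, N + N ! ≤ a → N < k ^ a := fun a ha =>
    (show N ≤ a by omega).trans_lt (Nat.lt_pow_self hk)
  have hunmarked : ∀ a c e, 0 < e → e < k ^ a → ¬ shift (digitMark k) (k ^ a) c e :=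
    fun a c e he hea => by
      have : k ^ a * 2 ≤ k ^ a * k := Nat.mul_le_mul_left _ hk
      exact not_digitMark hk (a := a) (by omega) (by rw [pow_succ]; omega) (by omega) c
  refine constType_marked_eq hk hz hN (hlarge a ha) (hlarge b hb) hab (fun c => ?_)
    (hunmarked a) (hunmarked b)
  cases c with
  | false => exact iff_of_true ⟨a, rfl⟩ ⟨b, rfl⟩
  | true =>
    exact (digitMark_true_pow_iff hk (a := a) (by omega)).trans
      (digitMark_true_pow_iff hk (a := b) (by omega)).symm

open Nat in
lemma constType_secondPart_eq (ha : N + N ! ≤ a) (hb : N + N ! ≤ b)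
    (hab : k ^ a ≡ k ^ b [MOD N !]) :
    constType k ((k - 2) * k ^ a) (shift (digitMark k) (2 * k ^ a)) n z =
      constType k ((k - 2) * k ^ b) (shift (digitMark k) (2 * k ^ b)) n z := by
  obtain rfl | hk2 := (show 2 ≤ k from hk).eq_or_lt
  · simp only [Nat.sub_self, zero_mul]
    exact constType_congr hk (by simp)
  have hpos := Nat.factorial_pos N
  have hlarge : ∀ a, N + N ! ≤ a → N < (k - 2) * k ^ a := fun a ha =>
    ((show N ≤ a by omega).trans_lt (Nat.lt_pow_self hk)).trans_le
      (Nat.le_mul_of_pos_left _ (by omega))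
  have hunmarked : ∀ a c e, 0 < e → e < (k - 2) * k ^ a →
      ¬ shift (digitMark k) (2 * k ^ a) c e := fun a c e he hea => by
    rw [Nat.sub_mul, mul_comm k, ← pow_succ] at hea
    exact not_digitMark hk (a := a) (by omega) (by omega) (by omega) c
  refine constType_marked_eq hk hz hN (hlarge a ha) (hlarge b hb) (hab.mul_left _) (fun c => ?_)
    (hunmarked a) (hunmarked b)
  have hfalse : ∀ a, ¬ digitMark k false (2 * k ^ a) := by
    rintro a ⟨m, hm⟩
    have hlt := two_mul_pow_lt hk hk2 (a := a)
    have hpos : 0 < k ^ a := by positivity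
    have hlow : k ^ a < k ^ m := by omega
    rw [hm] at hlt
    rw [Nat.pow_lt_pow_iff_right hk] at hlow hlt
    omega
  cases c with
  | false => exact iff_of_false (hfalse a) (hfalse b)
  | true => exact iff_of_true ⟨a, rfl⟩ ⟨b, rfl⟩

open Nat in
theorem constType_block_eq (ha : N + N ! ≤ a) (hb : N + N ! ≤ b) (hab : a ≡ b [MOD (N !)!]) :
    constType k (k ^ (a + 1) - k ^ a) (shift (digitMark k) (k ^ a)) n z =
      constType k (k ^ (b + 1) - k ^ b) (shift (digitMark k) (k ^ b)) n z := by
  have hpow : k ^ a ≡ k ^ b [MOD N !] :=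
    pow_modEq_pow k N.factorial_pos (by omega) (by omega) hab
  have hlen : ∀ a, k ^ (a + 1) - k ^ a = k ^ a + (k - 2) * k ^ a := fun a => by
    have : 2 * k ^ a ≤ k * k ^ a := Nat.mul_le_mul_right _ hk
    rw [pow_succ', Nat.sub_mul]
    omega
  rw [hlen, hlen]
  refine constType_add hk hz (constType_firstPart_eq hk hN hz ha hb hpow) ?_
  have hshift : ∀ a, shift (shift (digitMark k) (k ^ a)) (k ^ a) =
      shift (digitMark k) (2 * k ^ a) := fun a => by
    funext c e
    simp only [shift, two_mul, add_assoc]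
  rw [hshift, hshift]
  exact constType_secondPart_eq hk hN hz ha hb hpow

end Block

end Piece

/-! ### Pumping -/

namespace Piece

/-- The blocks `[start a, start (a + 1))` are periodic in `a` with period `Q` from `T` on, as far as
constant strings and types with at most `N` values are concerned. -/
def HasPeriodicBlocks (k : ℕ) (start : ℕ → ℕ) (M : Bool → ℕ → Prop) (N T Q : ℕ) : Prop :=
  ∀ ⦃n : ℕ⦄ ⦃ι : Type⦄ [Finite ι], Nat.card (NType n ι) ≤ N →
    ∀ ⦃z : ι → ℤ⦄, (∀ i, IsConst (z i)) → ∀ ⦃a b : ℕ⦄, T ≤ a → T ≤ b → a ≡ b [MOD Q] →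
      constType k (start (a + 1) - start a) (shift M (start a)) n z =
        constType k (start (b + 1) - start b) (shift M (start b)) n z

/-- The digits of `c`, placed from the beginning of block `a` on, are constant after `I` blocks. -/
def ConstAfter (k : ℕ) (start : ℕ → ℕ) (a I : ℕ) (c : ℤ) : Prop :=
  IsConst (c / (k : ℤ) ^ (start (a + I) - start a))

section Tail

variable {k : ℕ} (hk : 1 < k) {M : Bool → ℕ → Prop} {ι : Type} {z : ι → ℤ}
include hk

lemma isConcat_tail {s t : ℕ} (hst : s ≤ t) :
    IsConcat (segment k (t - s) (shift M s)) (tail k (shift M t)) (tail k (shift M s))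
      (glue k (t - s)) := by
  have hshift : shift (shift M s) (t - s) = shift M t := by
    funext b e
    rw [shift, shift, ← add_assoc, Nat.add_sub_cancel' hst, shift]
  exact hshift ▸ isConcat_segment_tail hk (t - s) (shift M s)

lemma nType_tail_extend_glue (hz : ∀ i, IsConst (z i)) {n s t s' t' : ℕ} (hst : s ≤ t)
    (hst' : s' ≤ t') {x y x' y' : ℤ} (hx : x ∈ (segment k (t - s) (shift M s)).dom)
    (hx' : x' ∈ (segment k (t' - s') (shift M s')).dom)
    (hlow : (segment k (t - s) (shift M s)).nType n
        (extend (fun i => z i % (k : ℤ) ^ (t - s)) x) =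
      (segment k (t' - s') (shift M s')).nType n
        (extend (fun i => z i % (k : ℤ) ^ (t' - s')) x'))
    (hhigh : (tail k (shift M t)).nType n (extend z y) =
      (tail k (shift M t')).nType n (extend z y')) :
    (tail k (shift M s)).nType n (extend z (glue k (t - s) x y)) =
      (tail k (shift M s')).nType n (extend z (glue k (t' - s') x' y')) := by
  have hglue : ∀ s, (fun i => glue k s (z i % (k : ℤ) ^ s) (z i)) = z := fun s => by
    funext i
    simpa only [(hz i).ediv_eq (show (0 : ℤ) < (k : ℤ) ^ s by positivity)] using
      glue_emod_ediv k s (z i)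
  have h := (isConcat_tail (M := M) hk hst).nType_congr (isConcat_tail hk hst')
    (extend_mem (fun i => emod_mem_segment hk _ _ (z i)) hx)
    (extend_mem (fun i => emod_mem_segment hk _ _ (z i)) hx') n hlow hhigh
  simpa only [extend_concat, hglue] using h

lemma nType_zero_tail_eq (hz : ∀ i, IsConst (z i)) (M M' : Bool → ℕ → Prop) :
    (tail k M).nType 0 z = (tail k M').nType 0 z := by
  have hmark : ∀ (A : ℕ → Prop) i, ¬ ∃ e, A e ∧ z i = (k : ℤ) ^ e := by
    rintro A i ⟨e, -, he⟩
    have : (0 : ℤ) < (k : ℤ) ^ e := by positivity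
    rcases hz i with h | h <;> omega
  refine nType_zero_eq_iff.2 fun a => ?_
  cases a with
  | mark b i => exact iff_of_false (hmark _ i) (hmark _ i)
  | _ => exact Iff.rfl

end Tail

section Pumping

variable {k : ℕ} (hk : 1 < k) {start : ℕ → ℕ} (hstart : StrictMono start)
include hk hstart

lemma ediv_pow_ediv_pow (a i I : ℕ) (c : ℤ) :
    c / (k : ℤ) ^ (start (a + i) - start a) / (k : ℤ) ^ (start (a + i + I) - start (a + i)) =
      c / (k : ℤ) ^ (start (a + (i + I)) - start a) := by
  have hle := hstart.monotone (Nat.le_add_right a i)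
  have hle' := hstart.monotone (Nat.le_add_right (a + i) I)
  rw [Int.ediv_ediv_of_nonneg (by positivity), ← pow_add, ← add_assoc]
  congr 2
  omega

lemma constAfter_add_iff {a i I : ℕ} {c : ℤ} : ConstAfter k start a (i + I) c ↔
    ConstAfter k start (a + i) I (c / (k : ℤ) ^ (start (a + i) - start a)) := by
  rw [ConstAfter, ConstAfter, ediv_pow_ediv_pow hk hstart]

lemma ConstAfter.mono {a I J : ℕ} {c : ℤ} (hIJ : I ≤ J) (hc : ConstAfter k start a I c) :
    ConstAfter k start a J c := by
  obtain ⟨i, rfl⟩ := Nat.exists_eq_add_of_le hIJ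
  rw [ConstAfter, ← ediv_pow_ediv_pow hk hstart, IsConst.ediv_eq hc (by positivity)]
  exact hc

lemma constAfter_glue_iff {a i I : ℕ} {x y : ℤ}
    (hx : x ∈ Set.Ico 0 ((k : ℤ) ^ (start (a + i) - start a))) :
    ConstAfter k start a (i + I) (glue k (start (a + i) - start a) x y) ↔
      ConstAfter k start (a + i) I y := by
  rw [constAfter_add_iff hk hstart, glue_ediv hx]

lemma exists_constAfter (a : ℕ) (c : ℤ) : ∃ I, ConstAfter k start a I c := by
  refine ⟨c.natAbs, (IsConst.iff_ediv (by positivity)).2 ?_⟩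
  have hlen : c.natAbs ≤ start (a + c.natAbs) - start a := by
    have := hstart.add_le_nat c.natAbs a
    rw [add_comm a]
    omega
  have hlt : c.natAbs < k ^ (start (a + c.natAbs) - start a) :=
    hlen.trans_lt (Nat.lt_pow_self hk)
  zify at hlt
  exact ⟨by linarith [neg_abs_le c], (le_abs_self c).trans_lt hlt⟩

variable {M : Bool → ℕ → Prop} {N T Q : ℕ} (hM : HasPeriodicBlocks k start M N T Q)
  {n : ℕ} {ι : Type} [Finite ι] (hN : Nat.card (NType (n + 1) ι) ≤ N)
  {z : ι → ℤ} (hz : ∀ i, IsConst (z i))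
include hM hN hz

lemma exists_nType_tail_extend_eq
    (hconst : ∀ z : Option ι → ℤ, (∀ i, IsConst (z i)) → ∀ a b, T ≤ a → T ≤ b → a ≡ b [MOD Q] →
      (tail k (shift M (start a))).nType n z = (tail k (shift M (start b))).nType n z)
    (I : ℕ) {a b : ℕ} {c : ℤ} (ha : T ≤ a) (hb : T ≤ b) (hab : a ≡ b [MOD Q])
    (hc : ConstAfter k start a I c) :
    ∃ d, ConstAfter k start b I d ∧ (tail k (shift M (start a))).nType n (extend z c) =
      (tail k (shift M (start b))).nType n (extend z d) := by
  induction I generalizing a b c with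
  | zero =>
    simp only [ConstAfter, add_zero, Nat.sub_self, pow_zero, Int.ediv_one] at hc ⊢
    exact ⟨c, hc, hconst _ (IsConst.extend hz hc) a b ha hb hab⟩
  | succ I ih =>
    rw [add_comm, constAfter_add_iff hk hstart] at hc
    obtain ⟨y, hy, hhigh⟩ := ih (ha.trans a.le_succ) (hb.trans b.le_succ) (hab.add_right 1) hc
    obtain ⟨x, hx, hlow⟩ := (nType_succ_eq_iff.1 (hM hN hz ha hb hab)).2.1 _
      (emod_mem_segment hk _ _ c)
    have htype := nType_tail_extend_glue hk hz (hstart.monotone a.le_succ)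
      (hstart.monotone b.le_succ) (emod_mem_segment hk _ _ c) hx hlow hhigh
    rw [glue_emod_ediv] at htype
    refine ⟨_, ?_, htype⟩
    rwa [add_comm, constAfter_glue_iff hk hstart hx]

omit hN in
theorem nType_tail_eq (hN : Nat.card (NType n ι) ≤ N) {a b : ℕ} (ha : T ≤ a) (hb : T ≤ b)
    (hab : a ≡ b [MOD Q]) :
    (tail k (shift M (start a))).nType n z = (tail k (shift M (start b))).nType n z := by
  induction n generalizing ι a b with
  | zero => exact nType_zero_tail_eq hk hz _ _
  | succ n ih =>
    have hconst : ∀ z : Option ι → ℤ, (∀ i, IsConst (z i)) → ∀ a b, T ≤ a → T ≤ b →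
        a ≡ b [MOD Q] →
        (tail k (shift M (start a))).nType n z = (tail k (shift M (start b))).nType n z :=
      fun z hz a b ha hb hab => ih hz ((card_nType_option_le n ι).trans hN) ha hb hab
    have hSat := nType_zero_eq_iff.1 <|
      nType_zero_tail_eq hk hz (shift M (start a)) (shift M (start b))
    refine nType_succ_eq_iff.2 ⟨hSat, fun c _ => ?_, fun c _ => ?_⟩
    · obtain ⟨I, hI⟩ := exists_constAfter hk hstart a c
      obtain ⟨d, -, hd⟩ := exists_nType_tail_extend_eq hk hstart hM hN hz hconst I ha hb hab hI
      exact ⟨d, trivial, hd⟩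
    · obtain ⟨I, hI⟩ := exists_constAfter hk hstart b c
      obtain ⟨d, -, hd⟩ := exists_nType_tail_extend_eq hk hstart hM hN hz hconst I hb ha hab.symm hI
      exact ⟨d, trivial, hd.symm⟩

omit hstart hM [Finite ι] hN in
lemma exists_glue_nType_eq (hstart : Monotone start) (a i : ℕ) (c : ℤ) {e : ℤ}
    (he : (tail k (shift M (start (a + i)))).nType n
        (extend z (c / (k : ℤ) ^ (start (a + i) - start a))) =
      (tail k (shift M (start (a + i)))).nType n (extend z e)) :
    ∃ x ∈ Set.Ico 0 ((k : ℤ) ^ (start (a + i) - start a)),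
      (tail k (shift M (start a))).nType n (extend z c) =
        (tail k (shift M (start a))).nType n
          (extend z (glue k (start (a + i) - start a) x e)) := by
  have hle := hstart (Nat.le_add_right a i)
  have hmem := emod_mem_segment hk (start (a + i) - start a) (shift M (start a)) c
  have h := nType_tail_extend_glue hk hz hle hle hmem hmem rfl he
  rw [glue_emod_ediv] at h
  exact ⟨_, hmem, h⟩

/-- If `c` is constant only after many blocks, then its remainders from two blocks `a + i` and
`a + j` on, congruent modulo `Q`, have the same type; the blocks in between can be removed. -/
lemma exists_constAfter_lt (hQ : 0 < Q) {a I : ℕ} {c : ℤ} (hI : T + Q * N < I)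
    (hc : ConstAfter k start a I c) : ∃ I' < I, ∃ d, ConstAfter k start a I' d ∧
      (tail k (shift M (start a))).nType n (extend z c) =
        (tail k (shift M (start a))).nType n (extend z d) := by
  have hN' := (card_nType_option_le n ι).trans hN
  obtain ⟨u, v, huv, hv, heq⟩ := exists_lt_map_eq_of_card_le hN' fun u =>
    (tail k (shift M (start (a + (T + Q * u))))).nType n
      (extend z (c / (k : ℤ) ^ (start (a + (T + Q * u)) - start a)))
  have huv' : Q * u < Q * v := Nat.mul_lt_mul_of_pos_left huv hQ
  have hv' : Q * v ≤ Q * N := Nat.mul_le_mul_left _ hv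
  have hmod : a + (T + Q * v) ≡ a + (T + Q * u) [MOD Q] :=
    ((Nat.modEq_zero_iff_dvd.2 (dvd_mul_right _ _)).trans
      (Nat.modEq_zero_iff_dvd.2 (dvd_mul_right _ _)).symm).add_left _ |>.add_left _
  rw [← Nat.add_sub_cancel' (show T + Q * v ≤ I by omega), constAfter_add_iff hk hstart] at hc
  obtain ⟨e, he, hce⟩ := exists_nType_tail_extend_eq hk hstart hM hN hz
    (fun z hz a b ha hb hab => nType_tail_eq hk hstart hM hz hN' ha hb hab) _ (by omega)
    (by omega) hmod hc
  obtain ⟨x, hx, hd⟩ := exists_glue_nType_eq hk hz hstart.monotone a (T + Q * u) c (heq.trans hce)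
  refine ⟨T + Q * u + (I - (T + Q * v)), by omega, _, ?_, hd⟩
  rwa [constAfter_glue_iff hk hstart hx]

lemma exists_constAfter_le (hQ : 0 < Q) (a : ℕ) (c : ℤ) :
    ∃ d, ConstAfter k start a (T + Q * N) d ∧
      (tail k (shift M (start a))).nType n (extend z c) =
        (tail k (shift M (start a))).nType n (extend z d) := by
  obtain ⟨I, hc⟩ := exists_constAfter hk hstart a c
  induction I using Nat.strong_induction_on generalizing c with
  | _ I ih =>
    rcases lt_or_ge (T + Q * N) I with hI | hI
    · obtain ⟨I', hI', d, hd, hcd⟩ := exists_constAfter_lt hk hstart hM hN hz hQ hI hc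
      obtain ⟨d', hd', hdd'⟩ := ih I' hI' d hd
      exact ⟨d', hd', hcd.trans hdd'⟩
    · exact ⟨c, hc.mono hk hstart hI, rfl⟩

omit hz in
theorem exists_bounded_nType_eq (hQ : 0 < Q) {a : ℕ} {p : ι → ℤ}
    (hp : ∀ i, p i ∈ Set.Ico (-(k : ℤ) ^ start a) ((k : ℤ) ^ start a)) (c : ℤ) :
    ∃ d ∈ Set.Ico (-(k : ℤ) ^ start (a + (T + Q * N))) ((k : ℤ) ^ start (a + (T + Q * N))),
      (tail k M).nType n (extend p c) = (tail k M).nType n (extend p d) := by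
  have hz : ∀ i, IsConst (p i / (k : ℤ) ^ start a) := fun i =>
    (IsConst.iff_ediv (by positivity)).2 (hp i)
  obtain ⟨y, hy, hcy⟩ := exists_constAfter_le hk hstart hM hN hz hQ a (c / (k : ℤ) ^ start a)
  have hConcat := isConcat_segment_tail hk (start a) M
  have hmem := fun x => emod_mem_segment hk (start a) M x
  have h := hConcat.nType_congr hConcat (extend_mem (fun i => hmem (p i)) (hmem c))
    (extend_mem (fun i => hmem (p i)) (hmem c)) n rfl hcy
  simp only [extend_concat, glue_emod_ediv] at h
  refine ⟨_, ?_, h⟩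
  have hle := hstart.monotone (Nat.le_add_right a (T + Q * N))
  rwa [ConstAfter, ← glue_ediv (hmem c) y, Int.ediv_ediv_of_nonneg (by positivity), ← pow_add,
    Nat.add_sub_cancel' hle, IsConst.iff_ediv (by positivity)] at hy

end Pumping

end Piece

/-! ### Definability -/

open Piece

/-- The truth of `P` at a tuple depends only on the rank-`n` type of the tuple. -/
def TypeInvariant (k : ℕ) (M : Bool → ℕ → Prop) (n : ℕ) {ι : Type} (P : (ι → ℤ) → Prop) : Prop :=
  ∀ p q : ι → ℤ, (tail k M).nType n p = (tail k M).nType n q → (P p ↔ P q)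

namespace TypeInvariant

variable {k : ℕ} {M : Bool → ℕ → Prop} {n m : ℕ} {ι : Type} {P Q : (ι → ℤ) → Prop}

lemma mono (hnm : n ≤ m) (h : TypeInvariant k M n P) : TypeInvariant k M m P := by
  induction hnm with
  | refl => exact h
  | step _ ih => exact fun p q hpq => ih p q (nType_eq_of_succ hpq)

lemma not (h : TypeInvariant k M n P) : TypeInvariant k M n fun p => ¬ P p :=
  fun p q hpq => not_congr (h p q hpq)

lemma and (hP : TypeInvariant k M n P) (hQ : TypeInvariant k M m Q) :
    TypeInvariant k M (max n m) fun p => P p ∧ Q p := fun p q hpq =>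
  and_congr (hP.mono (le_max_left n m) p q hpq) (hQ.mono (le_max_right n m) p q hpq)

lemma imp (hP : TypeInvariant k M n P) (hQ : TypeInvariant k M m Q) :
    TypeInvariant k M (max n m) fun p => P p → Q p := fun p q hpq =>
  imp_congr (hP.mono (le_max_left n m) p q hpq) (hQ.mono (le_max_right n m) p q hpq)

lemma congr (h : TypeInvariant k M n P) (hPQ : ∀ p, Q p ↔ P p) : TypeInvariant k M n Q :=
  fun p q hpq => (hPQ p).trans ((h p q hpq).trans (hPQ q).symm)

lemma exists_extend {P : (Option ι → ℤ) → Prop} (h : TypeInvariant k M n P) :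
    TypeInvariant k M (n + 1) fun p => ∃ x, P (extend p x) := by
  intro p q hpq
  obtain ⟨-, hForth, hBack⟩ := nType_succ_eq_iff.1 hpq
  constructor
  · rintro ⟨x, hx⟩
    obtain ⟨y, -, hxy⟩ := hForth x trivial
    exact ⟨y, (h _ _ hxy).1 hx⟩
  · rintro ⟨y, hy⟩
    obtain ⟨x, -, hxy⟩ := hBack y trivial
    exact ⟨x, (h _ _ hxy).2 hy⟩

lemma forall_extend {P : (Option ι → ℤ) → Prop} (h : TypeInvariant k M n P) :
    TypeInvariant k M (n + 1) fun p => ∀ x, P (extend p x) :=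
  h.not.exists_extend.not.congr fun p => by simp only [not_exists, not_not]

lemma sat (a : Atom ι) : TypeInvariant k M 0 fun p => (tail k M).Sat p a :=
  fun _ _ hpq => nType_zero_eq_iff.1 hpq a

lemma add (i j l : ι) : TypeInvariant k M 0 fun p => p i + p j = p l :=
  (sat (.add i j l false false)).congr fun p => by simp [Sat, tail]

lemma zero (i : ι) : TypeInvariant k M 0 fun p => p i = 0 := sat (.zero i)

lemma mark (b : Bool) (i : ι) : TypeInvariant k M 0 fun p => ∃ e, M b e ∧ p i = (k : ℤ) ^ e :=
  sat (.mark b i)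

lemma lt (i j : ι) : TypeInvariant k M 1 fun p => p i < p j := by
  have h := (add (k := k) (M := M) (some j) none (some i)).and (sat (.neg none))
  refine h.exists_extend.congr fun p => ?_
  change _ ↔ ∃ x, p j + x = p i ∧ x < 0
  exact ⟨fun h => ⟨p i - p j, by omega⟩, fun ⟨x, h⟩ => by omega⟩

lemma eq (i j : ι) : TypeInvariant k M 1 fun p => p i = p j := by
  have h := (add (k := k) (M := M) (some j) none (some i)).and (zero none)
  refine h.exists_extend.congr fun p => ?_
  change _ ↔ ∃ x, p j + x = p i ∧ x = 0
  exact ⟨fun h => ⟨0, by omega⟩, fun ⟨_, h, h0⟩ => by rw [← h, h0, add_zero]⟩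

end TypeInvariant

/-- `g` squares the numbers `k ^ k ^ m` and vanishes at all other integers. -/
structure SquaresTowers (k : ℕ) (g : ℤ → ℤ) : Prop where
  apply_tower (m : ℕ) : g ((k : ℤ) ^ k ^ m) = ((k : ℤ) ^ k ^ m) ^ 2
  apply_of_forall_ne {n : ℤ} : (∀ m : ℕ, n ≠ (k : ℤ) ^ k ^ m) → g n = 0

section Square

variable {k : ℕ} (hk : 1 < k) {g : ℤ → ℤ} (hg : SquaresTowers k g)
include hk

/-- Squares of the numbers `k ^ k ^ m` are definable, because `(k ^ k ^ m) ^ 2` is the next number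
of the form `k ^ (2 * k ^ m')`. -/
lemma isLeast_sq (m : ℕ) :
    IsLeast {y : ℤ | (∃ e, digitMark k true e ∧ y = (k : ℤ) ^ e) ∧ (k : ℤ) ^ k ^ m < y}
      (((k : ℤ) ^ k ^ m) ^ 2) := by
  have hlt : ∀ {a b : ℕ}, (k : ℤ) ^ a < (k : ℤ) ^ b ↔ a < b :=
    pow_lt_pow_iff_right₀ (by exact_mod_cast hk)
  rw [← pow_mul, mul_comm]
  refine ⟨⟨⟨_, ⟨m, rfl⟩, rfl⟩, hlt.2 ?_⟩, ?_⟩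
  · have : 0 < k ^ m := by positivity
    omega
  · rintro _ ⟨⟨_, ⟨m', rfl⟩, rfl⟩, hm'⟩
    have hm : m < m' + 1 := by
      refine (Nat.pow_lt_pow_iff_right hk).1 ((hlt.1 hm').trans_le ?_)
      rw [pow_succ']
      gcongr
      exact hk
    have : (1 : ℤ) ≤ k := by exact_mod_cast hk.le
    gcongr <;> omega

include hg

lemma apply_eq_iff (x y : ℤ) : g x = y ↔
    ((∃ e, digitMark k false e ∧ x = (k : ℤ) ^ e) →
      ((∃ e, digitMark k true e ∧ y = (k : ℤ) ^ e) ∧ x < y) ∧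
        ∀ z, (∃ e, digitMark k true e ∧ z = (k : ℤ) ^ e) ∧ x < z → ¬ z < y) ∧
    ((¬ ∃ e, digitMark k false e ∧ x = (k : ℤ) ^ e) → y = 0) := by
  have hx : (∃ e, digitMark k false e ∧ x = (k : ℤ) ^ e) ↔ ∃ m : ℕ, x = (k : ℤ) ^ k ^ m :=
    ⟨fun ⟨_, ⟨m, rfl⟩, h⟩ => ⟨m, h⟩, fun ⟨m, h⟩ => ⟨_, ⟨m, rfl⟩, h⟩⟩
  rw [hx]
  by_cases h : ∃ m : ℕ, x = (k : ℤ) ^ k ^ m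
  · simp only [h, forall_const, not_true, false_implies, and_true, not_lt]
    obtain ⟨m, rfl⟩ := h
    rw [hg.apply_tower]
    exact ⟨fun h => h ▸ isLeast_sq hk m, (isLeast_sq hk m).unique⟩
  · simp only [h, false_implies, true_and, not_false_eq_true, forall_const,
      hg.apply_of_forall_ne (not_exists.1 h), eq_comm]

lemma TypeInvariant.apply {ι : Type} (i j : ι) :
    TypeInvariant k (digitMark k) 2 fun p => g (p i) = p j := by
  have hleast := ((mark (k := k) (M := digitMark k) true none).and (lt (some i) none)).imp
    (lt none (some j)).not
  have hsq := (mark (M := digitMark k) false i).imp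
    (((mark true j).and (lt i j)).and hleast.forall_extend)
  have hzero := (mark (k := k) (M := digitMark k) false i).not.imp (zero j)
  exact ((hsq.and hzero).congr fun p => apply_eq_iff hk hg _ _).mono (by decide)

end Square

/-! ### Bounded quantifiers -/

lemma termInduction {d : ℕ} {C : L.Term (Empty ⊕ Fin d) → Prop} (var : ∀ i, C (.var (.inr i)))
    (apply : ∀ (f : L.Functions 1) ts, C (ts 0) → C (.func f ts))
    (add : ∀ (f : L.Functions 2) ts, C (ts 0) → C (ts 1) → C (.func f ts)) (t) : C t := by
  induction t with
  | var i =>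
    rcases i with i | i
    · exact i.elim
    · exact var i
  | @func l f ts ih =>
    match l, f with
    | 1, f => exact apply f ts (ih 0)
    | 2, f => exact add f ts (ih 0) (ih 1)

lemma formulaInduction {C : ∀ d, L.BoundedFormula Empty d → Prop} (falsum : ∀ d, C d .falsum)
    (equal : ∀ d t₁ t₂, C d (.equal t₁ t₂)) (lt : ∀ d (r : L.Relations 2) ts, C d (.rel r ts))
    (imp : ∀ d φ ψ, C d φ → C d ψ → C d (.imp φ ψ))
    (all : ∀ d φ, C (d + 1) φ → C d (.all φ)) (d) (φ) : C d φ := by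
  induction φ with
  | falsum => exact falsum _
  | equal t₁ t₂ => exact equal _ _ _
  | @rel d l r ts => match l, r with | 2, r => exact lt _ r ts
  | imp φ ψ hφ hψ => exact imp _ _ _ hφ hψ
  | all φ hφ => exact all _ _ hφ

/-- The value of a term under the assignment `v`. -/
def termValue (g : ℤ → ℤ) {d : ℕ} (t : L.Term (Empty ⊕ Fin d)) (v : Fin d → ℤ) : ℤ :=
  @Term.realize L ℤ (S g) _ (Sum.elim default v) t

/-- The truth of a formula under the assignment `v`. -/
def Holds (g : ℤ → ℤ) {d : ℕ} (φ : L.BoundedFormula Empty d) (v : Fin d → ℤ) : Prop :=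
  @BoundedFormula.Realize L ℤ (S g) _ _ φ default v

/-- The truth of a formula when the quantifier binding variable `d` only ranges over the interval
`[-b d, b d)`. -/
def BoundedHolds (g : ℤ → ℤ) (b : ℕ → ℕ) :
    {d : ℕ} → L.BoundedFormula Empty d → (Fin d → ℤ) → Prop
  | _, .falsum, _ => False
  | _, .equal t₁ t₂, v => termValue g t₁ v = termValue g t₂ v
  | _, .rel r ts, v => @Structure.RelMap L ℤ (S g) _ r fun i => termValue g (ts i) v
  | _, .imp φ ψ, v => BoundedHolds g b φ v → BoundedHolds g b ψ v
  | d, .all φ, v => ∀ x ∈ Set.Ico (-(b d : ℤ)) (b d), BoundedHolds g b φ (Fin.snoc v x)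

/-- The rank of types that determines the graph of a term. -/
def termRank {d : ℕ} : L.Term (Empty ⊕ Fin d) → ℕ
  | .var _ => 1
  | .func _ ts => (Finset.univ.sup fun i => termRank (ts i)) + 2

/-- The rank of types that determines the truth of a formula. -/
def rank : {d : ℕ} → L.BoundedFormula Empty d → ℕ
  | _, .falsum => 0
  | _, .equal t₁ t₂ => max (termRank t₁) (termRank t₂) + 1
  | _, .rel _ ts => (Finset.univ.sup fun i => termRank (ts i)) + 2
  | _, .imp φ ψ => max (rank φ) (rank ψ)
  | _, .all φ => rank φ + 1

lemma one_le_termRank {d : ℕ} (t : L.Term (Empty ⊕ Fin d)) : 1 ≤ termRank t := by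
  cases t <;> simp [termRank]

lemma termRank_apply {d : ℕ} (f : L.Functions 1) (ts : Fin 1 → L.Term (Empty ⊕ Fin d)) :
    termRank (.func f ts) = termRank (ts 0) + 2 := by
  simp [termRank]

lemma termRank_add {d : ℕ} (f : L.Functions 2) (ts : Fin 2 → L.Term (Empty ⊕ Fin d)) :
    termRank (.func f ts) = max (termRank (ts 0)) (termRank (ts 1)) + 2 := by
  simp [termRank, Fin.univ_succ]

lemma rank_lt {d : ℕ} (r : L.Relations 2) (ts : Fin 2 → L.Term (Empty ⊕ Fin d)) :
    rank (.rel r ts) = max (termRank (ts 0)) (termRank (ts 1)) + 2 := by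
  simp [rank, Fin.univ_succ]

lemma extend_comp_snoc {d : ℕ} {ι : Type} (σ : Fin d → ι) (p : ι → ℤ) (x : ℤ) :
    extend p x ∘ (Fin.snoc (some ∘ σ) none : Fin (d + 1) → Option ι) =
      (Fin.snoc (p ∘ σ) x : Fin (d + 1) → ℤ) :=
  Fin.comp_snoc ..

section

variable {k : ℕ} (hk : 1 < k) {g : ℤ → ℤ} (hg : SquaresTowers k g)
include hk hg

namespace TypeInvariant

lemma termValue {d : ℕ} (t : L.Term (Empty ⊕ Fin d)) {ι : Type} (σ : Fin d → ι) (j : ι) :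
    TypeInvariant k (digitMark k) (termRank t) fun p => termValue g t (p ∘ σ) = p j := by
  induction t using termInduction generalizing ι with
  | var i => exact eq (σ i) j
  | apply f ts ih =>
    have h := ((ih (some ∘ σ) none).and (apply hk hg none (some j))).exists_extend
    refine (h.congr fun p => ?_).mono ?_
    · change _ ↔ ∃ x, Stmt4.termValue g (ts 0) (p ∘ σ) = x ∧ g x = p j
      rw [exists_eq_left']
      rfl
    have := one_le_termRank (ts 0)
    rw [termRank_apply]
    omega
  | add f ts ih₀ ih₁ =>
    have h := ((ih₀ (some ∘ some ∘ σ) (some none)).and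
      ((ih₁ (some ∘ some ∘ σ) none).and (add (some none) none (some (some j)))))
    refine (h.exists_extend.exists_extend.congr fun p => ?_).mono ?_
    · change _ ↔ ∃ x y, Stmt4.termValue g (ts 0) (p ∘ σ) = x ∧
        Stmt4.termValue g (ts 1) (p ∘ σ) = y ∧ x + y = p j
      simp only [exists_and_left, exists_eq_left']
      rfl
    · rw [termRank_add]
      omega

lemma holds {d : ℕ} (φ : L.BoundedFormula Empty d) {ι : Type} (σ : Fin d → ι) :
    TypeInvariant k (digitMark k) (rank φ) fun p => Holds g φ (p ∘ σ) := by
  induction d, φ using formulaInduction generalizing ι with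
  | falsum d => exact fun p q _ => Iff.rfl
  | equal d t₁ t₂ =>
    have h := (termValue hk hg t₁ (some ∘ σ) none).and (termValue hk hg t₂ (some ∘ σ) none)
    refine h.exists_extend.congr fun p => ?_
    change _ ↔ ∃ x, Stmt4.termValue g t₁ (p ∘ σ) = x ∧ Stmt4.termValue g t₂ (p ∘ σ) = x
    rw [exists_eq_left']
    exact eq_comm
  | lt d r ts =>
    have h := (termValue hk hg (ts 0) (some ∘ some ∘ σ) (some none)).and
      ((termValue hk hg (ts 1) (some ∘ some ∘ σ) none).and (lt (some none) none))
    refine (h.exists_extend.exists_extend.congr fun p => ?_).mono ?_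
    · change _ ↔ ∃ x y, Stmt4.termValue g (ts 0) (p ∘ σ) = x ∧
        Stmt4.termValue g (ts 1) (p ∘ σ) = y ∧ x < y
      simp only [exists_and_left, exists_eq_left']
      rfl
    · have := one_le_termRank (ts 0)
      rw [rank_lt]
      omega
  | imp d φ ψ hφ hψ => exact (hφ σ).imp (hψ σ)
  | all d φ hφ =>
    refine (hφ (Fin.snoc (some ∘ σ) none)).forall_extend.congr fun p => ?_
    simp only [extend_comp_snoc]
    rfl

end TypeInvariant

end

section Bound

open Nat in
/-- The number of new blocks that a witness for an existential quantifier may occupy, in a formula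
whose rank and number of variables add up to at most `s`. -/
def witnessBlocks (s : ℕ) : ℕ :=
  typeBound s s + (typeBound s s)! + ((typeBound s s)!)! * typeBound s s

/-- The bound on the variable with index `d` in a formula whose rank and number of variables add up
to at most `s`. -/
def witnessBound (k s d : ℕ) : ℕ := k ^ k ^ ((d + 1) * witnessBlocks s)

variable {k : ℕ} (hk : 1 < k)
include hk

open Nat in
lemma hasPeriodicBlocks_digitMark (N : ℕ) :
    HasPeriodicBlocks k (k ^ ·) (digitMark k) N (N + N !) (N !)! :=
  fun _ _ _ hN _ hz _ _ ha hb hab => constType_block_eq hk hN hz ha hb hab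

lemma exists_witness_mem_Ico {g : ℤ → ℤ} (hg : SquaresTowers k g) {s d : ℕ}
    (φ : L.BoundedFormula Empty (d + 1)) (hs : d + (rank φ + 1) ≤ s) {v : Fin d → ℤ}
    (hv : ∀ i, v i ∈ Set.Ico (-(k : ℤ) ^ k ^ (d * witnessBlocks s)) (k ^ k ^ (d * witnessBlocks s)))
    (x : ℤ) : ∃ y ∈ Set.Ico (-(witnessBound k s d : ℤ)) (witnessBound k s d),
      Holds g φ (Fin.snoc v x) ↔ Holds g φ (Fin.snoc v y) := by
  have hN : Nat.card (NType (rank φ + 1) (Fin d)) ≤ typeBound s s :=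
    (card_nType_le _ _ (by simpa using hs)).trans (typeBound_mono s (by omega))
  obtain ⟨y, hy, hxy⟩ := exists_bounded_nType_eq hk (pow_right_strictMono₀ hk)
    (hasPeriodicBlocks_digitMark hk _) hN (Nat.factorial_pos _) hv x
  refine ⟨y, ?_, ?_⟩
  · simpa [witnessBound, witnessBlocks, add_mul, add_comm] using hy
  · have h : Holds g φ (extend v x ∘ Fin.snoc (some ∘ id) none) ↔
        Holds g φ (extend v y ∘ Fin.snoc (some ∘ id) none) := TypeInvariant.holds hk hg φ _ _ _ hxy
    rwa [extend_comp_snoc, extend_comp_snoc] at h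

lemma boundedHolds_iff {g : ℤ → ℤ} (hg : SquaresTowers k g) {s d : ℕ}
    (φ : L.BoundedFormula Empty d) (hs : d + rank φ ≤ s) {v : Fin d → ℤ}
    (hv : ∀ i, v i ∈ Set.Ico (-(k : ℤ) ^ k ^ (d * witnessBlocks s))
      (k ^ k ^ (d * witnessBlocks s))) :
    BoundedHolds g (witnessBound k s) φ v ↔ Holds g φ v := by
  induction d, φ using formulaInduction with
  | falsum | equal | lt => exact Iff.rfl
  | imp d φ ψ hφ hψ =>
    have : d + max (rank φ) (rank ψ) ≤ s := hs
    exact imp_congr (hφ (by omega) hv) (hψ (by omega) hv)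
  | all d φ hφ =>
    have hs' : d + (rank φ + 1) ≤ s := hs
    have hsnoc : ∀ x ∈ Set.Ico (-(witnessBound k s d : ℤ)) (witnessBound k s d),
        BoundedHolds g (witnessBound k s) φ (Fin.snoc v x) ↔ Holds g φ (Fin.snoc v x) := by
      refine fun x hx => hφ (by omega) (Fin.lastCases ?_ fun i => ?_)
      · simpa [witnessBound] using hx
      · have : (k : ℤ) ^ k ^ (d * witnessBlocks s) ≤ k ^ k ^ ((d + 1) * witnessBlocks s) := by
          gcongr <;> omega
        rw [Fin.snoc_castSucc]
        exact ⟨(neg_le_neg this).trans (hv i).1, (hv i).2.trans_le this⟩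
    refine ⟨fun h x => ?_, fun h x hx => (hsnoc x hx).2 (h x)⟩
    obtain ⟨y, hy, hxy⟩ := exists_witness_mem_Ico hk hg φ hs' hv x
    exact hxy.2 ((hsnoc y hy).1 (h y hy))

end Bound

/-! ### Codes of formulas -/

open Encodable in
lemma encode_map_encode {α : Type} [Encodable α] (l : List α) :
    encode (l.map encode) = encode l := by
  induction l with
  | nil => rfl
  | cons a l ih => simp [encode_list_cons, ih]

lemma add_encode_lt_encode_cons (a : ℕ) (l : List ℕ) :
    a + Encodable.encode l < Encodable.encode (a :: l) :=
  Nat.lt_succ_of_le (Nat.add_le_pair a _)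

lemma encode_le_append_left (l l' : List ℕ) :
    Encodable.encode l ≤ Encodable.encode (l ++ l') := by
  induction l with
  | nil => exact Nat.zero_le _
  | cons a l ih =>
    exact Nat.succ_le_succ ((StrictMono.monotone fun _ _ => Nat.pair_lt_pair_right a) ih)

lemma encode_le_append_right (l l' : List ℕ) :
    Encodable.encode l' ≤ Encodable.encode (l ++ l') := by
  induction l with
  | nil => exact le_rfl
  | cons a l ih =>
    have := add_encode_lt_encode_cons a (l ++ l')
    rw [List.cons_append]
    omega

/-- The code of a term in Polish notation, as a list of tokens. -/
def termCode {d : ℕ} (t : L.Term (Empty ⊕ Fin d)) : List ℕ := t.listEncode.map Encodable.encode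

/-- The code of a formula in Polish notation, as a list of tokens. A term is a single token of an
atomic formula. -/
def formulaCode {d : ℕ} (φ : L.BoundedFormula Empty d) : List ℕ :=
  φ.listEncode.map Encodable.encode

lemma encode_sentence (φ : L.Sentence) : Encodable.encode φ = Encodable.encode (formulaCode φ) :=
  (encode_map_encode _).symm

/-- The token of the function symbol `g`. -/
def applyToken : ℕ := 2 * Nat.pair 1 0 + 1

/-- The token of the function symbol `+`. -/
def addToken : ℕ := 2 * Nat.pair 2 0 + 1

/-- The token of the relation symbol `<`. -/
def ltToken : ℕ := 2 * (2 * Nat.pair 2 0) + 1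

/-- The token of a term in an atomic formula with `d` variables. -/
def termToken {d : ℕ} (t : L.Term (Empty ⊕ Fin d)) : ℕ :=
  2 * Nat.pair d (Encodable.encode (termCode t))

section

variable {d : ℕ}

lemma termCode_var (i : Fin d) : termCode (.var (.inr i)) = [4 * (i : ℕ) + 2] := by
  change [2 * (2 * (i : ℕ) + 1)] = _
  ring_nf

lemma termCode_apply (f : L.Functions 1) (ts : Fin 1 → L.Term (Empty ⊕ Fin d)) :
    termCode (.func f ts) = applyToken :: termCode (ts 0) := by
  simp only [termCode, Term.listEncode, List.map_cons]
  congr 1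
  simp [List.finRange]

lemma termCode_add (f : L.Functions 2) (ts : Fin 2 → L.Term (Empty ⊕ Fin d)) :
    termCode (.func f ts) = addToken :: (termCode (ts 0) ++ termCode (ts 1)) := by
  simp only [termCode, Term.listEncode, List.map_cons]
  congr 1
  simp [List.finRange]

lemma formulaCode_falsum :
    formulaCode (.falsum : L.BoundedFormula Empty d) = [4 * (d + 2) + 3] := by
  change [2 * (2 * (d + 2) + 1) + 1] = _
  ring_nf

lemma formulaCode_equal (t₁ t₂ : L.Term (Empty ⊕ Fin d)) :
    formulaCode (.equal t₁ t₂) = [termToken t₁, termToken t₂] := by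
  simp only [termToken, termCode, encode_map_encode]
  rfl

lemma formulaCode_lt (r : L.Relations 2) (ts : Fin 2 → L.Term (Empty ⊕ Fin d)) :
    formulaCode (.rel r ts) = [ltToken, 4 * d + 3, termToken (ts 0), termToken (ts 1)] := by
  simp only [termToken, termCode, encode_map_encode]
  rw [show 4 * d + 3 = 2 * (2 * d + 1) + 1 by ring]
  rfl

lemma formulaCode_imp (φ ψ : L.BoundedFormula Empty d) :
    formulaCode (.imp φ ψ) = 3 :: (formulaCode φ ++ formulaCode ψ) :=
  congrArg (3 :: ·) List.map_append

lemma formulaCode_all (φ : L.BoundedFormula Empty (d + 1)) :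
    formulaCode (.all φ) = 7 :: formulaCode φ := rfl

lemma termRank_le_encode (t : L.Term (Empty ⊕ Fin d)) :
    termRank t ≤ Encodable.encode (termCode t) := by
  induction t using termInduction with
  | var i =>
    have := add_encode_lt_encode_cons (4 * i + 2) []
    rw [termCode_var, termRank]
    omega
  | apply f ts ih =>
    have := add_encode_lt_encode_cons applyToken (termCode (ts 0))
    rw [termCode_apply, termRank_apply]
    have : applyToken = 5 := rfl
    omega
  | add f ts ih₀ ih₁ =>
    have := add_encode_lt_encode_cons addToken (termCode (ts 0) ++ termCode (ts 1))
    have := encode_le_append_left (termCode (ts 0)) (termCode (ts 1))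
    have := encode_le_append_right (termCode (ts 0)) (termCode (ts 1))
    rw [termCode_add, termRank_add]
    have : addToken = 13 := rfl
    omega

lemma termRank_le_termToken (t : L.Term (Empty ⊕ Fin d)) : termRank t ≤ termToken t := by
  have := Nat.right_le_pair d (Encodable.encode (termCode t))
  have := termRank_le_encode t
  rw [termToken]
  omega

lemma rank_le_encode (φ : L.BoundedFormula Empty d) :
    rank φ ≤ Encodable.encode (formulaCode φ) := by
  induction d, φ using formulaInduction with
  | falsum => exact Nat.zero_le _
  | equal d t₁ t₂ =>
    have := termRank_le_termToken t₁
    have := termRank_le_termToken t₂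
    have := add_encode_lt_encode_cons (termToken t₁) [termToken t₂]
    have := add_encode_lt_encode_cons (termToken t₂) []
    rw [formulaCode_equal, rank]
    omega
  | lt d r ts =>
    have := termRank_le_termToken (ts 0)
    have := termRank_le_termToken (ts 1)
    have := add_encode_lt_encode_cons ltToken [4 * d + 3, termToken (ts 0), termToken (ts 1)]
    have := add_encode_lt_encode_cons (4 * d + 3) [termToken (ts 0), termToken (ts 1)]
    have := add_encode_lt_encode_cons (termToken (ts 0)) [termToken (ts 1)]
    have := add_encode_lt_encode_cons (termToken (ts 1)) []
    rw [formulaCode_lt, rank_lt]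
    omega
  | imp d φ ψ hφ hψ =>
    have := add_encode_lt_encode_cons 3 (formulaCode φ ++ formulaCode ψ)
    have := encode_le_append_left (formulaCode φ) (formulaCode ψ)
    have := encode_le_append_right (formulaCode φ) (formulaCode ψ)
    rw [formulaCode_imp, rank]
    omega
  | all d φ hφ =>
    have := add_encode_lt_encode_cons 7 (formulaCode φ)
    rw [formulaCode_all, rank]
    omega

end

/-! ### Evaluation by a stack machine -/

/-- The assignment given by a list of values. -/
def assignment {d : ℕ} (e : List ℤ) : Fin d → ℤ := fun i => e.getD i 0

lemma assignment_concat {d : ℕ} {e : List ℤ} (he : e.length = d) (x : ℤ) :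
    (assignment (e ++ [x]) : Fin (d + 1) → ℤ) = Fin.snoc (assignment e) x := by
  ext i
  refine Fin.lastCases ?_ (fun i => ?_) i
  · simp [assignment, ← he]
  · simp [assignment, he]

/-- Executes one token of a term with `d` variables on a stack of values. -/
def pushTermToken (g : ℤ → ℤ) (d : ℕ) (e : List ℤ) (tok : ℕ) (st : List ℤ) : Option (List ℤ) :=
  if tok = applyToken then
    match st with
    | x :: st => some (g x :: st)
    | _ => none
  else if tok = addToken then
    match st with
    | x :: y :: st => some ((x + y) :: st)
    | _ => none
  else if tok % 4 = 2 ∧ tok / 4 < d then some (e.getD (tok / 4) 0 :: st)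
  else none

/-- The values of a sequence of terms in Polish notation, if `l` codes such a sequence. -/
def evalTerms (g : ℤ → ℤ) (d : ℕ) (e : List ℤ) (l : List ℕ) : Option (List ℤ) :=
  l.foldr (fun tok st => st.bind (pushTermToken g d e tok)) (some [])

section

variable {g : ℤ → ℤ} {d : ℕ} {e : List ℤ}

lemma evalTerms_termCode_append (t : L.Term (Empty ⊕ Fin d)) (l : List ℕ) :
    evalTerms g d e (termCode t ++ l) =
      (evalTerms g d e l).map (termValue g t (assignment e) :: ·) := by
  induction t using termInduction generalizing l with
  | var i =>
    have hpush : pushTermToken g d e (4 * i + 2) = fun st => some (assignment e i :: st) := by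
      have : ¬ 4 * (i : ℕ) + 2 = applyToken ∧ ¬ 4 * (i : ℕ) + 2 = addToken := by
        simp only [applyToken, addToken, Nat.pair]
        split_ifs <;> omega
      have : (4 * (i : ℕ) + 2) % 4 = 2 ∧ (4 * (i : ℕ) + 2) / 4 = i := by omega
      ext st : 1
      simp [pushTermToken, assignment, *]
    rw [termCode_var]
    change (evalTerms g d e l).bind _ = _
    rw [hpush]
    cases evalTerms g d e l <;> rfl
  | apply f ts ih =>
    rw [termCode_apply]
    change (evalTerms g d e (termCode (ts 0) ++ l)).bind _ = _
    rw [ih]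
    cases evalTerms g d e l <;> rfl
  | add f ts ih₀ ih₁ =>
    rw [termCode_add, List.cons_append, List.append_assoc]
    change (evalTerms g d e (termCode (ts 0) ++ (termCode (ts 1) ++ l))).bind _ = _
    rw [ih₀, ih₁]
    cases evalTerms g d e l <;> rfl

lemma evalTerms_flatMap (ts : List (L.Term (Empty ⊕ Fin d))) :
    evalTerms g d e (ts.flatMap termCode) = some (ts.map (termValue g · (assignment e))) := by
  induction ts with
  | nil => rfl
  | cons t ts ih => simp [evalTerms_termCode_append, ih]

lemma exists_terms_of_evalTerms {l : List ℕ} {st : List ℤ} (h : evalTerms g d e l = some st) :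
    ∃ ts : List (L.Term (Empty ⊕ Fin d)), l = ts.flatMap termCode := by
  induction l generalizing st with
  | nil => exact ⟨[], rfl⟩
  | cons tok l ih =>
    obtain ⟨st', hst', htok⟩ := Option.bind_eq_some_iff.1 h
    obtain ⟨ts, rfl⟩ := ih hst'
    rw [← evalTerms, evalTerms_flatMap, Option.some_inj] at hst'
    subst hst'
    unfold pushTermToken at htok
    split_ifs at htok with happly hadd hvar
    · rcases ts with _ | ⟨t, ts⟩
      · simp at htok
      · have f : L.Functions 1 := ()
        exact ⟨.func f ![t] :: ts, by simp [termCode_apply, happly]⟩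
    · rcases ts with _ | ⟨t₁, _ | ⟨t₂, ts⟩⟩
      · simp at htok
      · simp at htok
      · have f : L.Functions 2 := ()
        exact ⟨.func f ![t₁, t₂] :: ts, by simp [termCode_add, hadd]⟩
    · refine ⟨.var (.inr ⟨tok / 4, hvar.2⟩) :: ts, ?_⟩
      have : tok = 4 * (tok / 4) + 2 := by omega
      simp [termCode_var, ← this]

/-- The value of the term that `tok` stands for in an atomic formula with `d` variables. -/
def tokenValue (g : ℤ → ℤ) (d : ℕ) (e : List ℤ) (tok : ℕ) : Option ℤ :=
  if tok % 2 = 0 ∧ (tok / 2).unpair.1 = d then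
    match evalTerms g d e (Denumerable.ofNat (List ℕ) (tok / 2).unpair.2) with
    | some [x] => some x
    | _ => none
  else none

lemma tokenValue_termToken (t : L.Term (Empty ⊕ Fin d)) :
    tokenValue g d e (termToken t) = some (termValue g t (assignment e)) := by
  have h := evalTerms_flatMap (g := g) (e := e) [t]
  rw [List.flatMap_singleton] at h
  simp [tokenValue, termToken, h]

lemma exists_term_of_tokenValue {tok : ℕ} {x : ℤ} (h : tokenValue g d e tok = some x) :
    ∃ t : L.Term (Empty ⊕ Fin d), tok = termToken t := by
  unfold tokenValue at h
  split_ifs at h with htok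
  split at h
  · next y hy =>
    obtain ⟨ts, hts⟩ := exists_terms_of_evalTerms hy
    rw [hts, evalTerms_flatMap] at hy
    obtain ⟨t, rfl, -⟩ : ∃ t, ts = [t] ∧ _ := by simpa [List.map_eq_singleton_iff] using hy
    refine ⟨t, ?_⟩
    rw [List.flatMap_singleton] at hts
    rw [termToken, ← hts, Denumerable.encode_ofNat, ← htok.2, Nat.pair_unpair]
    omega
  · simp at h

end

/-- The integers of the interval `[-n, n)`. -/
def interval (n : ℕ) : List ℤ := (List.range (2 * n)).map fun i : ℕ => (i : ℤ) - n

lemma mem_interval {n : ℕ} {x : ℤ} : x ∈ interval n ↔ x ∈ Set.Ico (-(n : ℤ)) n := by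
  simp only [interval, List.mem_map, List.mem_range, Set.mem_Ico]
  exact ⟨fun ⟨i, hi, h⟩ => by omega, fun h => ⟨(x + n).toNat, by omega, by omega⟩⟩

/-- The lists of values of the first variables over which bounded quantifiers range. -/
def boundedLists (b : ℕ → ℕ) : ℕ → List (List ℤ)
  | 0 => [.nil]
  | d + 1 => (boundedLists b d).flatMap fun e => (interval (b d)).map (e ++ [·])

lemma concat_mem_boundedLists {b : ℕ → ℕ} {d : ℕ} {e : List ℤ} (he : e ∈ boundedLists b d) {x : ℤ}
    (hx : x ∈ interval (b d)) : e ++ [x] ∈ boundedLists b (d + 1) :=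
  List.mem_flatMap.2 ⟨e, he, List.mem_map.2 ⟨x, hx, rfl⟩⟩

lemma length_of_mem_boundedLists {b : ℕ → ℕ} {d : ℕ} {e : List ℤ} (he : e ∈ boundedLists b d) :
    e.length = d := by
  induction d generalizing e with
  | zero => simpa [boundedLists] using he
  | succ d ih =>
    obtain ⟨e, he', x, -, rfl⟩ : ∃ e' ∈ boundedLists b d, ∃ x ∈ interval (b d), e' ++ [x] = e := by
      simpa [boundedLists] using he
    grind

/-- A number of variables, with a set of lists of values for them. -/
abbrev Entry : Type := ℕ × List (List ℤ)

open Classical in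
/-- The number of variables of a formula, with the bounded lists satisfying it. -/
noncomputable def satEntry (g : ℤ → ℤ) (b : ℕ → ℕ) {d : ℕ} (φ : L.BoundedFormula Empty d) : Entry :=
  (d, (boundedLists b d).filter fun e => BoundedHolds g b φ (assignment e))

/-- Combines the two top entries of a stack into the entry of an implication. -/
def pushImp (b : ℕ → ℕ) : List Entry → Option (List Entry)
  | A :: B :: st =>
    if A.1 = B.1 then
      some ((A.1, (boundedLists b A.1).filter fun e => e ∈ A.2 → e ∈ B.2) :: st)
    else none
  | _ => none

/-- Quantifies the last variable of the top entry of a stack universally. -/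
def pushAll (b : ℕ → ℕ) : List Entry → Option (List Entry)
  | (d + 1, E) :: st =>
    some ((d, (boundedLists b d).filter fun e => ∀ x ∈ interval (b d), e ++ [x] ∈ E) :: st)
  | _ => none

/-- The entry of an atomic formula that compares the terms with tokens `s` and `t`. -/
def atomEntry (g : ℤ → ℤ) (b : ℕ → ℕ) (R : ℤ → ℤ → Prop) [DecidableRel R] (s t : ℕ) :
    Option Entry :=
  let d := (s / 2).unpair.1
  if tokenValue g d [] s = none ∨ tokenValue g d [] t = none then none
  else some (d, (boundedLists b d).filter fun e =>
    R ((tokenValue g d e s).getD 0) ((tokenValue g d e t).getD 0))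

section

variable {g : ℤ → ℤ} {b : ℕ → ℕ} {d : ℕ}

lemma mem_satEntry {φ : L.BoundedFormula Empty d} {e : List ℤ} :
    e ∈ (satEntry g b φ).2 ↔ e ∈ boundedLists b d ∧ BoundedHolds g b φ (assignment e) := by
  simp [satEntry]

lemma satEntry_eq (φ : L.BoundedFormula Empty d) {P : List ℤ → Prop} [DecidablePred P]
    (h : ∀ e ∈ boundedLists b d, P e ↔ BoundedHolds g b φ (assignment e)) :
    satEntry g b φ = (d, (boundedLists b d).filter (P ·)) :=
  congrArg (Prod.mk d) (List.filter_congr fun e he => by simp [h e he])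

lemma satEntry_falsum : satEntry g b (.falsum : L.BoundedFormula Empty d) = (d, []) := by
  rw [satEntry_eq .falsum (P := fun _ => False) fun _ _ => Iff.rfl]
  simp

lemma pushImp_satEntry (φ ψ : L.BoundedFormula Empty d) (st : List Entry) :
    pushImp b (satEntry g b φ :: satEntry g b ψ :: st) =
      some (satEntry g b (.imp φ ψ) :: st) := by
  rw [satEntry_eq (.imp φ ψ) (P := fun e => e ∈ (satEntry g b φ).2 → e ∈ (satEntry g b ψ).2)]
  · exact if_pos rfl
  · intro e he
    simp only [mem_satEntry, he, true_and]
    rfl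

lemma pushAll_satEntry (φ : L.BoundedFormula Empty (d + 1)) (st : List Entry) :
    pushAll b (satEntry g b φ :: st) = some (satEntry g b (.all φ) :: st) := by
  rw [satEntry_eq (.all φ) (P := fun e => ∀ x ∈ interval (b d), e ++ [x] ∈ (satEntry g b φ).2)]
  · rfl
  · intro e he
    simp only [BoundedHolds, ← mem_interval]
    refine forall₂_congr fun x hx => ?_
    rw [mem_satEntry, assignment_concat (length_of_mem_boundedLists he)]
    exact and_iff_right (concat_mem_boundedLists he hx)

lemma atomEntry_termToken {R : ℤ → ℤ → Prop} [DecidableRel R] {φ : L.BoundedFormula Empty d}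
    {t₁ t₂ : L.Term (Empty ⊕ Fin d)}
    (hφ : ∀ v, BoundedHolds g b φ v ↔ R (termValue g t₁ v) (termValue g t₂ v)) :
    atomEntry g b R (termToken t₁) (termToken t₂) = some (satEntry g b φ) := by
  rw [satEntry_eq φ fun e _ => (hφ (assignment e)).symm]
  have hd : (termToken t₁ / 2).unpair.1 = d := by simp [termToken]
  simp [atomEntry, hd, tokenValue_termToken]

lemma exists_terms_of_atomEntry {R : ℤ → ℤ → Prop} [DecidableRel R] {s t : ℕ} {A : Entry}
    (h : atomEntry g b R s t = some A) :
    ∃ (d : ℕ) (t₁ t₂ : L.Term (Empty ⊕ Fin d)), s = termToken t₁ ∧ t = termToken t₂ := by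
  simp only [atomEntry, ite_eq_iff, reduceCtorEq, and_false, false_or, not_or,
    Option.ne_none_iff_exists'] at h
  obtain ⟨⟨⟨_, hs⟩, _, ht⟩, -⟩ := h
  obtain ⟨t₁, h₁⟩ := exists_term_of_tokenValue hs
  obtain ⟨t₂, h₂⟩ := exists_term_of_tokenValue ht
  exact ⟨_, t₁, t₂, h₁, h₂⟩

end

/-- Executes a token of a formula that is followed by `l`, where `st`, `st₁` and `st₃` are the
entries of the sequences of formulas that `l`, `l.drop 1` and `l.drop 3` code. Atomic formulas
consist of several tokens, executed at once. -/
def pushFormulaToken (g : ℤ → ℤ) (b : ℕ → ℕ) (tok : ℕ) (l : List ℕ)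
    (st st₁ st₃ : Option (List Entry)) : Option (List Entry) :=
  if tok = 3 then st.bind (pushImp b)
  else if tok = 7 then st.bind (pushAll b)
  else if tok % 4 = 3 then st.map ((tok / 4 - 2, []) :: ·)
  else if tok = ltToken then
    match l with
    | m :: s :: t :: _ =>
      if m = 4 * (s / 2).unpair.1 + 3 then
        (atomEntry g b (· < ·) s t).bind fun A => st₃.map (A :: ·)
      else none
    | _ => none
  else
    match l with
    | t :: _ => (atomEntry g b (· = ·) tok t).bind fun A => st₁.map (A :: ·)
    | _ => none

/-- The entries of a sequence of formulas in Polish notation, if `l` codes such a sequence. -/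
def evalFormulas (g : ℤ → ℤ) (b : ℕ → ℕ) : List ℕ → Option (List Entry)
  | [] => some []
  | tok :: l => pushFormulaToken g b tok l (evalFormulas g b l) (evalFormulas g b (l.drop 1))
      (evalFormulas g b (l.drop 3))
termination_by l => l.length

section

variable {g : ℤ → ℤ} {b : ℕ → ℕ}

lemma even_termToken {d : ℕ} (t : L.Term (Empty ⊕ Fin d)) : Even (termToken t) := ⟨_, two_mul _⟩

lemma evalFormulas_termToken_cons {s t : ℕ} (hs : Even s) (l : List ℕ) :
    evalFormulas g b (s :: t :: l) =
      (atomEntry g b (· = ·) s t).bind fun A => (evalFormulas g b l).map (A :: ·) := by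
  have : s ≠ 3 ∧ s ≠ 7 ∧ s % 4 ≠ 3 ∧ s ≠ ltToken := by
    simp only [ltToken]
    grind
  rw [evalFormulas]
  simp [pushFormulaToken, this]

lemma evalFormulas_ltToken_cons {d : ℕ} {s t : ℕ} (hs : (s / 2).unpair.1 = d) (l : List ℕ) :
    evalFormulas g b (ltToken :: (4 * d + 3) :: s :: t :: l) =
      (atomEntry g b (· < ·) s t).bind fun A => (evalFormulas g b l).map (A :: ·) := by
  have : ltToken = 25 := rfl
  rw [evalFormulas]
  simp [pushFormulaToken, this, hs]

lemma evalFormulas_formulaCode_append {d : ℕ} (φ : L.BoundedFormula Empty d) (l : List ℕ) :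
    evalFormulas g b (formulaCode φ ++ l) = (evalFormulas g b l).map (satEntry g b φ :: ·) := by
  induction d, φ using formulaInduction generalizing l with
  | falsum d =>
    have : (4 * (d + 2) + 3) % 4 = 3 ∧ (4 * (d + 2) + 3) / 4 = d + 2 := by omega
    rw [formulaCode_falsum, List.cons_append, evalFormulas]
    simp [pushFormulaToken, this, satEntry_falsum]
  | equal d t₁ t₂ =>
    rw [formulaCode_equal]
    refine (evalFormulas_termToken_cons (even_termToken t₁) l).trans ?_
    rw [atomEntry_termToken (φ := .equal t₁ t₂) fun v => Iff.rfl, Option.bind_some]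
  | lt d r ts =>
    rw [formulaCode_lt]
    refine (evalFormulas_ltToken_cons (by simp [termToken]) l).trans ?_
    rw [atomEntry_termToken (φ := .rel r ts) fun v => Iff.rfl, Option.bind_some]
  | imp d φ ψ hφ hψ =>
    rw [formulaCode_imp, List.cons_append, List.append_assoc, evalFormulas, hφ, hψ]
    cases evalFormulas g b l <;> simp [pushFormulaToken, pushImp_satEntry]
  | all d φ hφ =>
    rw [formulaCode_all, List.cons_append, evalFormulas, hφ]
    cases evalFormulas g b l <;> simp [pushFormulaToken, pushAll_satEntry]

/-- The code of a sequence of formulas. -/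
def formulasCode (φs : List (Σ d, L.BoundedFormula Empty d)) : List ℕ :=
  φs.flatMap fun φ => formulaCode φ.2

lemma formulasCode_cons {d : ℕ} (φ : L.BoundedFormula Empty d)
    (φs : List (Σ d, L.BoundedFormula Empty d)) :
    formulasCode (⟨d, φ⟩ :: φs) = formulaCode φ ++ formulasCode φs := List.flatMap_cons

lemma evalFormulas_formulasCode (φs : List (Σ d, L.BoundedFormula Empty d)) :
    evalFormulas g b (formulasCode φs) = some (φs.map fun φ => satEntry g b φ.2) := by
  induction φs with
  | nil => rw [formulasCode, List.flatMap_nil, evalFormulas, List.map_nil]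
  | cons φ φs ih =>
    rw [formulasCode_cons, evalFormulas_formulaCode_append, ih, Option.map_some, List.map_cons]

lemma exists_formulas_of_pushImp {φs : List (Σ d, L.BoundedFormula Empty d)} {st : List Entry}
    (h : pushImp b (φs.map fun φ => satEntry g b φ.2) = some st) :
    ∃ φs', 3 :: formulasCode φs = formulasCode φs' := by
  rcases φs with _ | ⟨⟨d, φ⟩, _ | ⟨⟨d', ψ⟩, φs⟩⟩
  · simp [pushImp] at h
  · simp [pushImp] at h
  · obtain rfl : d = d' := by
      by_contra hd
      simp [pushImp, satEntry, hd] at h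
    exact ⟨⟨d, .imp φ ψ⟩ :: φs, by simp [formulasCode_cons, formulaCode_imp]⟩

lemma exists_formulas_of_pushAll {φs : List (Σ d, L.BoundedFormula Empty d)} {st : List Entry}
    (h : pushAll b (φs.map fun φ => satEntry g b φ.2) = some st) :
    ∃ φs', 7 :: formulasCode φs = formulasCode φs' := by
  rcases φs with _ | ⟨⟨_ | d, φ⟩, φs⟩
  · simp [pushAll] at h
  · simp [pushAll, satEntry] at h
  · exact ⟨⟨d, .all φ⟩ :: φs, by simp [formulasCode_cons, formulaCode_all]⟩

lemma exists_formulas_of_atomEntry {R : ℤ → ℤ → Prop} [DecidableRel R] {s t : ℕ} {l : List ℕ}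
    {st : List Entry} (hl : ∀ {st}, evalFormulas g b l = some st → ∃ φs, l = formulasCode φs)
    (h : ((atomEntry g b R s t).bind fun A => (evalFormulas g b l).map (A :: ·)) = some st) :
    ∃ (d : ℕ) (t₁ t₂ : L.Term (Empty ⊕ Fin d)) (φs : List (Σ d, L.BoundedFormula Empty d)),
      s = termToken t₁ ∧ t = termToken t₂ ∧ l = formulasCode φs := by
  obtain ⟨A, hA, hst⟩ := Option.bind_eq_some_iff.1 h
  obtain ⟨st', hst', -⟩ := Option.map_eq_some_iff.1 hst
  obtain ⟨d, t₁, t₂, hs, ht⟩ := exists_terms_of_atomEntry hA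
  obtain ⟨φs, hφs⟩ := hl hst'
  exact ⟨d, t₁, t₂, φs, hs, ht, hφs⟩

lemma exists_formulas_of_evalFormulas {l : List ℕ} {st : List Entry}
    (h : evalFormulas g b l = some st) : ∃ φs, l = formulasCode φs := by
  induction hn : l.length using Nat.strong_induction_on generalizing l st with | _ n ih
  subst hn
  rcases l with _ | ⟨tok, l⟩
  · exact ⟨[], rfl⟩
  have hdrop {i : ℕ} {st : List Entry} (h : evalFormulas g b (l.drop i) = some st) :
      ∃ φs, l.drop i = formulasCode φs := ih _ (by grind) h rfl
  have hl {st : List Entry} (h : evalFormulas g b l = some st) :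
      ∃ φs, l = formulasCode φs ∧ st = φs.map fun φ => satEntry g b φ.2 := by
    obtain ⟨φs, rfl⟩ := hdrop (i := 0) h
    exact ⟨φs, rfl, Option.some_inj.1 (h.symm.trans (evalFormulas_formulasCode φs))⟩
  rw [evalFormulas] at h
  unfold pushFormulaToken at h
  split_ifs at h with himp hall hfalsum hlt
  · obtain ⟨_, hst, hpush⟩ := Option.bind_eq_some_iff.1 h
    obtain ⟨φs, rfl, rfl⟩ := hl hst
    exact himp ▸ exists_formulas_of_pushImp hpush
  · obtain ⟨_, hst, hpush⟩ := Option.bind_eq_some_iff.1 h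
    obtain ⟨φs, rfl, rfl⟩ := hl hst
    exact hall ▸ exists_formulas_of_pushAll hpush
  · obtain ⟨_, hst, -⟩ := Option.map_eq_some_iff.1 h
    obtain ⟨φs, rfl, -⟩ := hl hst
    have : tok = 4 * (tok / 4 - 2 + 2) + 3 := by omega
    exact ⟨⟨tok / 4 - 2, .falsum⟩ :: φs, by simp [formulasCode_cons, formulaCode_falsum, ← this]⟩
  · rcases l with _ | ⟨m, _ | ⟨s, _ | ⟨t, l⟩⟩⟩ <;> try contradiction
    obtain ⟨hm, h⟩ := (Option.ite_none_right_eq_some ..).1 h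
    obtain ⟨d, t₁, t₂, φs, rfl, rfl, hφs⟩ := exists_formulas_of_atomEntry (hdrop (i := 3)) h
    have r : L.Relations 2 := ()
    obtain rfl : m = 4 * d + 3 := by simpa [termToken] using hm
    refine ⟨⟨d, .rel r ![t₁, t₂]⟩ :: φs, ?_⟩
    simp [formulasCode_cons, formulaCode_lt, hlt, ← hφs]
  · rcases l with _ | ⟨t, l⟩
    · contradiction
    obtain ⟨d, t₁, t₂, φs, rfl, rfl, hφs⟩ := exists_formulas_of_atomEntry (hdrop (i := 1)) h
    exact ⟨⟨d, .equal t₁ t₂⟩ :: φs, by simp [formulasCode_cons, formulaCode_equal, ← hφs]⟩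

lemma satEntry_sentence_eq_iff (φ : L.Sentence) :
    satEntry g b φ = (0, [.nil]) ↔ BoundedHolds g b φ default := by
  have : (assignment [] : Fin 0 → ℤ) = default := Subsingleton.elim _ _
  simp [satEntry, boundedLists, List.filter_cons, this]

lemma exists_sentence_iff_evalFormulas {c : ℕ} :
    (∃ φ : L.Sentence, Encodable.encode φ = c ∧ BoundedHolds g b φ default) ↔
      evalFormulas g b (Denumerable.ofNat (List ℕ) c) = some [(0, [.nil])] := by
  constructor
  · rintro ⟨φ, rfl, hφ⟩
    rw [encode_sentence, Denumerable.ofNat_encode, ← List.append_nil (formulaCode φ),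
      evalFormulas_formulaCode_append, evalFormulas, Option.map_some,
      (satEntry_sentence_eq_iff φ).2 hφ]
  · intro h
    obtain ⟨φs, hφs⟩ := exists_formulas_of_evalFormulas h
    rw [hφs, evalFormulas_formulasCode, Option.some_inj] at h
    obtain ⟨⟨d, φ⟩, rfl, hφ⟩ := List.map_eq_singleton_iff.1 h
    obtain rfl : d = 0 := congrArg Prod.fst hφ
    refine ⟨φ, ?_, (satEntry_sentence_eq_iff φ).1 hφ⟩
    rw [encode_sentence, ← Denumerable.encode_ofNat (α := List ℕ) c, hφs, formulasCode,
      List.flatMap_singleton]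

end

/-! ### Primitive recursiveness of the evaluation -/

open Primrec

section Integers

lemma primrec_int_toNat : Primrec Int.toNat := by
  refine (ite (Primrec.eq.comp (nat_mod.comp .encode (const 2)) (const 0))
    (nat_div.comp .encode (const 2)) (const 0)).of_eq fun z => ?_
  rcases z with n | n
  · change (if 2 * n % 2 = 0 then 2 * n / 2 else 0) = n
    split_ifs <;> omega
  · change (if (2 * n + 1) % 2 = 0 then (2 * n + 1) / 2 else 0) = 0
    split_ifs <;> omega

lemma primrec_int_toNat_neg : Primrec fun z : ℤ => (-z).toNat := by
  refine (ite (Primrec.eq.comp (nat_mod.comp .encode (const 2)) (const 0))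
    (const 0) (succ.comp (nat_div.comp .encode (const 2)))).of_eq fun z => ?_
  rcases z with n | n
  · change (if 2 * n % 2 = 0 then 0 else (2 * n / 2).succ) = (-(n : ℤ)).toNat
    split_ifs <;> omega
  · change (if (2 * n + 1) % 2 = 0 then 0 else ((2 * n + 1) / 2).succ) = n + 1
    split_ifs <;> omega

lemma primrec_int_sub_nat : Primrec₂ fun m n : ℕ => (m : ℤ) - n := by
  refine encode_iff.1 ((ite (nat_le.comp snd fst) (nat_double.comp (nat_sub.comp fst snd))
    (nat_double_succ.comp (nat_sub.comp (nat_sub.comp snd fst) (const 1)))).of_eq ?_)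
  rintro ⟨m, n⟩
  dsimp only
  split_ifs with h
  · have : (m : ℤ) - n = Int.ofNat (m - n) := (Int.ofNat_sub h).symm
    rw [this]
    rfl
  · have : (m : ℤ) - n = Int.negSucc (n - m - 1) := by omega
    rw [this]
    rfl

lemma primrec_int_natCast : Primrec fun n : ℕ => (n : ℤ) :=
  (primrec_int_sub_nat.comp .id (const 0)).of_eq fun n => by simp

lemma primrec_int_add : Primrec₂ fun x y : ℤ => x + y := by
  have h₁ := nat_add.comp (primrec_int_toNat.comp fst) (primrec_int_toNat.comp (snd (α := ℤ)))
  have h₂ := nat_add.comp (primrec_int_toNat_neg.comp fst)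
    (primrec_int_toNat_neg.comp (snd (α := ℤ)))
  refine (primrec_int_sub_nat.comp h₁ h₂).of_eq fun ⟨x, y⟩ => ?_
  dsimp only
  omega

lemma primrecRel_int_lt : PrimrecRel fun x y : ℤ => x < y := by
  have h₁ := nat_add.comp (primrec_int_toNat.comp fst) (primrec_int_toNat_neg.comp (snd (α := ℤ)))
  have h₂ := nat_add.comp (primrec_int_toNat.comp snd) (primrec_int_toNat_neg.comp (fst (β := ℤ)))
  refine (nat_lt.comp h₁ h₂).of_eq fun ⟨x, y⟩ => ?_
  dsimp only
  omega

end Integers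

section

variable {g : ℤ → ℤ} (hg : Primrec g)
include hg

lemma primrec_pushTermToken : Primrec fun x : ((ℕ × List ℤ) × ℕ) × List ℤ =>
    pushTermToken g x.1.1.1 x.1.1.2 x.1.2 x.2 := by
  have htok : Primrec fun x : ((ℕ × List ℤ) × ℕ) × List ℤ => x.1.2 := snd.comp fst
  have hi := nat_div.comp htok (const 4)
  refine (ite (Primrec.eq.comp htok (const applyToken))
    (list_casesOn snd (const none)
      (option_some.comp (list_cons.comp (hg.comp (fst.comp snd)) (snd.comp snd))).to₂)
    (ite (Primrec.eq.comp htok (const addToken))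
      (list_casesOn snd (const none) (list_casesOn (snd.comp snd) (const none)
        (option_some.comp (list_cons.comp
          (primrec_int_add.comp (fst.comp (snd.comp fst)) (fst.comp snd))
          (snd.comp snd))).to₂).to₂)
      (ite ((Primrec.eq.comp (nat_mod.comp htok (const 4)) (const 2)).and
          (nat_lt.comp hi (fst.comp (fst.comp fst))))
        (option_some.comp (list_cons.comp
          ((list_getD 0).comp (snd.comp (fst.comp fst)) hi) snd))
        (const none)))).of_eq ?_
  rintro ⟨⟨⟨d, e⟩, tok⟩, _ | ⟨x, _ | ⟨y, st⟩⟩⟩ <;> rfl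

lemma primrec_evalTerms : Primrec fun x : (ℕ × List ℤ) × List ℕ =>
    evalTerms g x.1.1 x.1.2 x.2 :=
  list_foldr snd (const (some [])) (option_bind (snd.comp snd)
    ((primrec_pushTermToken hg).comp
      (((fst.comp (fst.comp fst)).pair (fst.comp (snd.comp fst))).pair snd)).to₂).to₂

lemma primrec_tokenValue : Primrec fun x : (ℕ × List ℤ) × ℕ =>
    tokenValue g x.1.1 x.1.2 x.2 := by
  have htok := unpair.comp (nat_div.comp (snd (α := ℕ × List ℤ)) (const 2))
  have heval := (primrec_evalTerms hg).comp
    (fst.pair ((Primrec.ofNat (List ℕ)).comp (snd.comp htok)))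
  refine (ite ((Primrec.eq.comp (nat_mod.comp snd (const 2)) (const 0)).and
      (Primrec.eq.comp (fst.comp htok) (fst.comp fst)))
    (option_bind heval (list_casesOn snd (const none) (list_casesOn (snd.comp snd)
      (option_some.comp (fst.comp snd)) (const none).to₂).to₂).to₂)
    (const none)).of_eq ?_
  rintro ⟨⟨d, e⟩, tok⟩
  dsimp only [tokenValue]
  congr 1
  rcases evalTerms g d e _ with _ | _ | ⟨x, _ | ⟨y, l⟩⟩ <;> rfl

end

lemma primrecRel_mem {α : Type*} [Primcodable α] : PrimrecRel fun (a : α) (l : List α) => a ∈ l :=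
  ((PrimrecRel.exists_mem_list Primrec.eq).comp snd fst).of_eq fun x => by simp

lemma primrec_interval : Primrec interval :=
  list_map (list_range.comp nat_double) (primrec_int_sub_nat.comp snd fst).to₂

section

variable {b : ℕ → ℕ → ℕ} (hb : Primrec₂ b)
include hb

lemma primrec_boundedLists : Primrec₂ fun s d => boundedLists (b s) d := by
  refine (nat_rec (const [.nil]) (list_flatMap (snd.comp snd) (list_map
    (primrec_interval.comp (hb.comp (fst.comp fst) (fst.comp (snd.comp fst))))
    (list_concat.comp (snd.comp fst) snd).to₂).to₂).to₂).of_eq fun s d => ?_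
  induction d with
  | zero => rfl
  | succ d ih => exact congrArg (List.flatMap _) ih

lemma primrec_pushImp : Primrec₂ fun s st => pushImp (b s) st := by
  have himp : PrimrecRel fun (e : List ℤ) (E : List (List ℤ) × List (List ℤ)) =>
      e ∈ E.1 → e ∈ E.2 :=
    ((primrecRel_mem.comp fst (fst.comp snd)).not.or
      (primrecRel_mem.comp fst (snd.comp snd))).of_eq fun x => imp_iff_not_or.symm
  have hs : Primrec fun x : ((ℕ × List Entry) × Entry × List Entry) × Entry × List Entry =>
    x.1.1.1 := fst.comp (fst.comp fst)
  have hA : Primrec fun x : ((ℕ × List Entry) × Entry × List Entry) × Entry × List Entry =>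
    x.1.2.1 := fst.comp (snd.comp fst)
  have hB : Primrec fun x : ((ℕ × List Entry) × Entry × List Entry) × Entry × List Entry =>
    x.2.1 := fst.comp snd
  refine (list_casesOn snd (const none) (list_casesOn (snd.comp snd) (const none)
    (ite (Primrec.eq.comp (fst.comp hA) (fst.comp hB))
      (option_some.comp (list_cons.comp ((fst.comp hA).pair (himp.listFilter.comp
        ((primrec_boundedLists hb).comp hs (fst.comp hA)) ((snd.comp hA).pair (snd.comp hB))))
        (snd.comp snd))) (const none)).to₂).to₂).of_eq ?_
  rintro ⟨s, _ | ⟨A, _ | ⟨B, st⟩⟩⟩ <;> rfl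

lemma primrec_pushAll : Primrec₂ fun s st => pushAll (b s) st := by
  have hall : PrimrecRel fun (e : List ℤ) (E : List ℤ × List (List ℤ)) =>
      ∀ x ∈ E.1, e ++ [x] ∈ E.2 :=
    (PrimrecRel.forall_mem_list (R := fun x (y : List ℤ × List (List ℤ)) => y.1 ++ [x] ∈ y.2)
      (primrecRel_mem.comp (list_concat.comp (fst.comp snd) fst) (snd.comp snd))).comp
      (fst.comp snd) (fst.pair (snd.comp snd))
  have hs : Primrec fun x : ((ℕ × List Entry) × (Entry × List Entry)) × ℕ => x.1.1.1 :=
    fst.comp (fst.comp fst)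
  have hE : Primrec fun x : ((ℕ × List Entry) × (Entry × List Entry)) × ℕ => x.1.2.1.2 :=
    snd.comp (fst.comp (snd.comp fst))
  refine (list_casesOn snd (const none) (nat_casesOn (fst.comp (fst.comp snd)) (const none)
    (option_some.comp (list_cons.comp (snd.pair (hall.listFilter.comp
      ((primrec_boundedLists hb).comp hs snd)
      ((primrec_interval.comp (hb.comp hs snd)).pair hE)))
      (snd.comp (snd.comp fst)))).to₂).to₂).of_eq ?_
  rintro ⟨s, _ | ⟨⟨_ | d, E⟩, st⟩⟩ <;> rfl

variable {g : ℤ → ℤ} (hg : Primrec g)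
include hg

lemma primrec_atomEntry {R : ℤ → ℤ → Prop} [DecidableRel R] (hR : PrimrecRel R) :
    Primrec fun x : ℕ × (ℕ × ℕ) => atomEntry g (b x.1) R x.2.1 x.2.2 := by
  have hd : Primrec fun x : ℕ × ℕ => (x.1 / 2).unpair.1 :=
    fst.comp (unpair.comp (nat_div.comp fst (const 2)))
  have hs : Primrec₂ fun (e : List ℤ) (x : ℕ × ℕ) => tokenValue g (x.1 / 2).unpair.1 e x.1 :=
    (primrec_tokenValue hg).comp (((hd.comp snd).pair fst).pair (fst.comp snd))
  have ht : Primrec₂ fun (e : List ℤ) (x : ℕ × ℕ) => tokenValue g (x.1 / 2).unpair.1 e x.2 :=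
    (primrec_tokenValue hg).comp (((hd.comp snd).pair fst).pair (snd.comp snd))
  have hfilter : PrimrecRel fun (e : List ℤ) (x : ℕ × ℕ) =>
      R ((tokenValue g (x.1 / 2).unpair.1 e x.1).getD 0)
        ((tokenValue g (x.1 / 2).unpair.1 e x.2).getD 0) :=
    hR.comp (option_getD.comp hs (const 0)) (option_getD.comp ht (const 0))
  exact ite ((Primrec.eq.comp (hs.comp (const []) snd) (const none)).or
      (Primrec.eq.comp (ht.comp (const []) snd) (const none)))
    (const none)
    (option_some.comp ((hd.comp snd).pair (hfilter.listFilter.comp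
      ((primrec_boundedLists hb).comp fst (hd.comp snd)) snd)))

lemma primrec_atomEntry_cons {R : ℤ → ℤ → Prop} [DecidableRel R] (hR : PrimrecRel R) :
    Primrec₂ fun (x : ℕ × (ℕ × ℕ)) (st : Option (List Entry)) =>
      (atomEntry g (b x.1) R x.2.1 x.2.2).bind fun A => st.map (A :: ·) :=
  option_bind ((primrec_atomEntry hb hg hR).comp fst)
    (option_map (snd.comp fst) (list_cons.comp (snd.comp fst) snd).to₂).to₂

lemma primrec_pushFormulaToken :
    Primrec fun x : (ℕ × ℕ × List ℕ) ×
        (Option (List Entry) × Option (List Entry) × Option (List Entry)) =>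
      pushFormulaToken g (b x.1.1) x.1.2.1 x.1.2.2 x.2.1 x.2.2.1 x.2.2.2 := by
  let Input := (ℕ × ℕ × List ℕ) ×
    (Option (List Entry) × Option (List Entry) × Option (List Entry))
  have hs : Primrec fun x : Input => x.1.1 := fst.comp fst
  have htok : Primrec fun x : Input => x.1.2.1 := fst.comp (snd.comp fst)
  have hl : Primrec fun x : Input => x.1.2.2 := snd.comp (snd.comp fst)
  have hst₁ : Primrec fun x : Input => x.2.2.1 := fst.comp (snd.comp snd)
  have hst₃ : Primrec fun x : Input => x.2.2.2 := snd.comp (snd.comp snd)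
  have hlt := list_casesOn hl (const none) (list_casesOn (snd.comp snd) (const none)
    (list_casesOn (snd.comp snd) (const none)
      (ite (Primrec.eq.comp (fst.comp (snd.comp (fst.comp fst)))
        (succ.comp (succ.comp (succ.comp (nat_mul.comp (const 4) (fst.comp (unpair.comp
          (nat_div.comp (fst.comp (snd.comp fst)) (const 2)))))))))
        ((primrec_atomEntry_cons hb hg primrecRel_int_lt).comp
          ((hs.comp (fst.comp (fst.comp fst))).pair
            ((fst.comp (snd.comp fst)).pair (fst.comp snd)))
          (hst₃.comp (fst.comp (fst.comp fst))))
        (const none)).to₂).to₂).to₂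
  have heq := list_casesOn hl (const none) ((primrec_atomEntry_cons hb hg Primrec.eq).comp
    ((hs.comp fst).pair ((htok.comp fst).pair (fst.comp snd))) (hst₁.comp fst)).to₂
  refine (ite (Primrec.eq.comp htok (const 3))
    (option_bind (fst.comp snd) ((primrec_pushImp hb).comp (hs.comp fst) snd).to₂)
    (ite (Primrec.eq.comp htok (const 7))
      (option_bind (fst.comp snd) ((primrec_pushAll hb).comp (hs.comp fst) snd).to₂)
      (ite (Primrec.eq.comp (nat_mod.comp htok (const 4)) (const 3))
        (option_map (fst.comp snd) (list_cons.comp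
          ((nat_sub.comp (nat_div.comp (htok.comp fst) (const 4)) (const 2)).pair (const []))
          snd).to₂)
        (ite (Primrec.eq.comp htok (const ltToken)) hlt heq)))).of_eq ?_
  rintro ⟨⟨s, tok, _ | ⟨m, _ | ⟨s, _ | ⟨t, l⟩⟩⟩⟩, st⟩ <;> rfl

lemma primrec_evalFormulas : Primrec₂ fun s l => evalFormulas g (b s) l := by
  have hsuffixes : Primrec₂ fun (_ : ℕ) (l : List ℕ) =>
      (l.casesOn [] fun _ l => [l, l.drop 1, l.drop 3] : List (List ℕ)) :=
    list_casesOn snd (const []) (list_cons.comp (snd.comp snd)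
      (list_cons.comp (list_drop.comp (const 1) (snd.comp snd)) (list_cons.comp
        (list_drop.comp (const 3) (snd.comp snd)) (const [])))).to₂
  have hval (i : ℕ) : Primrec fun x : (ℕ × List ℕ × List (Option (List Entry))) × ℕ × List ℕ =>
      x.1.2.2.getD i none := (list_getD none).comp (snd.comp (snd.comp fst)) (const i)
  refine nat_omega_rec _ (m := fun _ l => l.length)
    (g := fun s x => some (x.1.casesOn (some []) fun tok l => pushFormulaToken g (b s) tok l
      (x.2.getD 0 none) (x.2.getD 1 none) (x.2.getD 2 none)))
    (list_length.comp snd) hsuffixes ?_ ?_ ?_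
  · exact option_some.comp (list_casesOn (fst.comp snd) (const (some []))
      ((primrec_pushFormulaToken hb hg).comp (((fst.comp fst).pair snd).pair
        ((hval 0).pair ((hval 1).pair (hval 2))))).to₂)
  · rintro - (_ | ⟨tok, l⟩)
    · simp
    · simp only [List.mem_cons]
      grind
  · rintro - (_ | ⟨tok, l⟩) <;> simp [evalFormulas]

lemma computablePred_exists_boundedHolds : ComputablePred fun c : ℕ =>
    ∃ φ : L.Sentence, Encodable.encode φ = c ∧ BoundedHolds g (b c) φ default := by
  have heval := (primrec_evalFormulas hb hg).comp .id (Primrec.ofNat (List ℕ))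
  obtain ⟨h, h'⟩ := Primrec.eq.comp heval (const (some [(0, [.nil])]))
  refine ComputablePred.of_eq ⟨h, h'.to_comp⟩ fun c => exists_sentence_iff_evalFormulas.symm

end

/-! ### Decidability -/

section

open Primrec

lemma primrec_nat_pow : Primrec₂ fun m n : ℕ => m ^ n := Primrec₂.unpaired'.1 Nat.Primrec.pow

open Nat in
lemma primrec_factorial : Primrec fun n : ℕ => n ! := by
  have hmul : Primrec₂ fun n N : ℕ => (n + 1) * N := nat_mul.comp (Primrec.succ.comp fst) snd
  refine (nat_rec₁ 1 hmul).of_eq fun n => ?_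
  induction n with
  | zero => rfl
  | succ n ih => exact congrArg ((n + 1) * ·) ih

lemma primrec_typeBound : Primrec₂ typeBound := by
  have hatoms : Primrec fun s : ℕ => 4 * s ^ 3 + 4 * s :=
    nat_add.comp (nat_mul.comp (const 4) (primrec_nat_pow.comp .id (const 3)))
      (nat_mul.comp (const 4) .id)
  refine (nat_rec (primrec_nat_pow.comp (const 2) hatoms) (primrec_nat_pow.comp (const 2)
    (nat_add.comp (hatoms.comp fst) (snd.comp snd))).to₂).of_eq fun s n => ?_
  induction n with
  | zero => rfl
  | succ n ih => exact congrArg (fun N => 2 ^ (4 * s ^ 3 + 4 * s + N)) ih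

lemma primrec_witnessBlocks : Primrec witnessBlocks := by
  have hN : Primrec fun s => typeBound s s := primrec_typeBound.comp .id .id
  exact nat_add.comp (nat_add.comp hN (primrec_factorial.comp hN))
    (nat_mul.comp (primrec_factorial.comp (primrec_factorial.comp hN)) hN)

lemma primrec_witnessBound (k : ℕ) : Primrec₂ (witnessBound k) :=
  primrec_nat_pow.comp (const k) (primrec_nat_pow.comp (const k)
    (nat_mul.comp (Primrec.succ.comp snd) (primrec_witnessBlocks.comp fst)))

namespace SquaresTowers

variable {k : ℕ} (hk : 1 < k) {g : ℤ → ℤ} (hg : SquaresTowers k g)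
include hk hg

lemma apply_eq_ite (n : ℤ) :
    g n = if ∃ m < n.toNat, n.toNat = k ^ k ^ m then ((n.toNat ^ 2 : ℕ) : ℤ) else 0 := by
  split_ifs with h
  · obtain ⟨m, hm, h⟩ := h
    have hn : n = (k : ℤ) ^ k ^ m := by
      rw [← Int.toNat_of_nonneg (a := n) (by omega), h]
      push_cast
      rfl
    rw [h, hn, hg.apply_tower]
    push_cast
    rfl
  · refine hg.apply_of_forall_ne ?_
    rintro m rfl
    have htoNat : ((k : ℤ) ^ k ^ m).toNat = k ^ k ^ m := mod_cast Int.toNat_natCast (k ^ k ^ m)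
    rw [htoNat] at h
    exact h ⟨m, (Nat.lt_pow_self hk).trans (Nat.lt_pow_self hk), rfl⟩

lemma primrec : Primrec g := by
  have htower : PrimrecRel fun m n : ℕ => n = k ^ k ^ m := Primrec.eq.comp snd
    (primrec_nat_pow.comp (const k) (primrec_nat_pow.comp (const k) fst))
  exact (ite (htower.exists_lt.comp primrec_int_toNat primrec_int_toNat)
    (primrec_int_natCast.comp (primrec_nat_pow.comp primrec_int_toNat (const 2)))
    (const 0)).of_eq fun n => (hg.apply_eq_ite hk n).symm

end SquaresTowers

end

lemma holds_default_iff {g : ℤ → ℤ} (φ : L.Sentence) :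
    Holds g φ default ↔ @Sentence.Realize L ℤ (S g) φ := by
  unfold Holds Sentence.Realize Formula.Realize
  congr!

open scoped Classical in
theorem decidable (k : ℕ) (hk : 2 ≤ k) (g : ℤ → ℤ)
    (hg : ∀ n : ℤ, g n = if ∃ m : ℕ, n = (k : ℤ) ^ (k ^ m) then n ^ 2 else 0) :
    ComputablePred (fun c => c ∈ theoryCodes g) := by
  have hsq : SquaresTowers k g :=
    ⟨fun m => by rw [hg, if_pos ⟨m, rfl⟩], fun h => by rw [hg, if_neg (not_exists.2 h)]⟩
  refine (computablePred_exists_boundedHolds (primrec_witnessBound k) (hsq.primrec hk)).of_eq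
    fun c => exists_congr fun φ => and_congr_right ?_
  rintro rfl
  have hrank : 0 + rank φ ≤ Encodable.encode φ := by
    rw [zero_add, encode_sentence]
    exact rank_le_encode φ
  exact (boundedHolds_iff hk hsq φ hrank fun i => i.elim0).trans (holds_default_iff φ)

end Stmt4
end

section
/- There exists a real constant C ≥ 1, depending only on α and β, such that for all positive integers n₀, n₁ with n₀ ≥ C and n₁ ≥ C·n₀, the following are equivalent: (1) there exists a positive integer n₂ with n₂ ≥ C·n₁ such that Δ²g(n₀, n₁, n₂) = 0; (2) |⟨α·n₀⟩ + ⟨α·n₁⟩| < 1/2. -/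
/-!
STATEMENT 6: existence of n₂ with Δ²g(n₀,n₁,n₂) = 0 is equivalent to
|⟨α·n₀⟩ + ⟨α·n₁⟩| < 1/2.
-/

namespace Stmt6

/-- The signed fractional part `⟨x⟩ = x - ⌊x⌉ ∈ [-1/2, 1/2)`. -/
noncomputable def sfrac (x : ℝ) : ℝ := x - round x

/-- The second symmetric discrete derivative. -/
def Δ2 (g : ℤ → ℤ) (n₀ n₁ n₂ : ℤ) : ℤ :=
  g (n₀ + n₁ + n₂) - g (n₀ + n₁) - g (n₁ + n₂) - g (n₂ + n₀)
    + g n₀ + g n₁ + g n₂ - g 0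

/-!
For `f n = n * ⌊α n⌉` the difference `Δ2 f n₀ n₁ n₂` is `c₀ n₀ + c₁ n₁ + c₂ n₂` with `cᵢ` second
differences of `n ↦ ⌊α n⌉`, hence `|cᵢ| ≤ 1`. If `Δ2 g n₀ n₁ n₂ = 0`, then `β * Δ2 f n₀ n₁ n₂` is
at most `4` in absolute value, so lacunarity of `n₀, n₁, n₂` forces all `cᵢ` to vanish, and
this means that no carry occurs in `⌊α (n₀ + n₁)⌉ = ⌊α n₀⌉ + ⌊α n₁⌉`.

Conversely, choose `n` so that `α n`, `β n`, `β ⌊α n⌉` and `β n ⌊α n⌉` are all very close to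
integers. Then `g (m + n) - g m` is given by an explicit polynomial formula for each of the finitely
many relevant `m`, and `Δ2 g n₀ n₁ n` cancels once no carry occurs. Such `n` exist by van der
Waerden's theorem: colour `x` by the approximate fractional parts of `α x`, `β x`, `β ⌊α x⌋` and
`β x ⌊α x⌋ / 2`; along a monochromatic progression `b, b + n, b + 2n` the map `x ↦ ⌊α x⌋` is affine,
and the second difference of the last function is exactly `β n ⌊α n⌉`.
-/

open Filter Topology Set

section Sfrac

variable {x y : ℝ}

lemma abs_sfrac_le (x : ℝ) (z : ℤ) : |sfrac x| ≤ |x - z| :=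
  round_le x z

lemma neg_half_le_sfrac (x : ℝ) : -(1 / 2) ≤ sfrac x := by
  unfold sfrac
  linarith [round_le_add_half x]

lemma sfrac_lt_half (x : ℝ) : sfrac x < 1 / 2 := by
  unfold sfrac
  linarith [sub_half_lt_round x]

lemma abs_sfrac_sub_le (x y : ℝ) : |sfrac (x - y)| ≤ |sfrac x| + |sfrac y| := by
  refine (abs_sfrac_le _ (round x - round y)).trans ?_
  have : x - y - ((round x - round y : ℤ) : ℝ) = sfrac x - sfrac y := by
    simp only [sfrac]; push_cast; ring
  exact this ▸ abs_sub _ _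

lemma abs_sfrac_sub_le_abs_fract_sub (x y : ℝ) :
    |sfrac (x - y)| ≤ |Int.fract x - Int.fract y| := by
  refine (abs_sfrac_le _ (⌊x⌋ - ⌊y⌋)).trans_eq ?_
  simp only [Int.fract]
  congr 1; push_cast; ring

lemma round_eq_of_abs_sub_lt {z : ℤ} (h : |x - z| < 1 / 2) : round x = z := by
  rw [abs_lt] at h
  exact round_eq_iff.2 ⟨by linarith, by linarith⟩

lemma round_sub_of_abs_fract_sub_lt (h : |Int.fract x - Int.fract y| < 1 / 2) :
    round (x - y) = ⌊x⌋ - ⌊y⌋ := by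
  refine round_eq_of_abs_sub_lt (lt_of_eq_of_lt ?_ h)
  simp only [Int.fract]
  congr 1; push_cast; ring

lemma add_sub_round_add_round (x y : ℝ) :
    x + y - (round x + round y : ℤ) = sfrac x + sfrac y := by
  simp only [sfrac]; push_cast; ring

lemma round_add_of_abs_sfrac_add_lt (h : |sfrac x + sfrac y| < 1 / 2) :
    round (x + y) = round x + round y :=
  round_eq_of_abs_sub_lt (add_sub_round_add_round x y ▸ h)

lemma round_add_eq_iff (h : |sfrac (x + y)| < 1 / 2) :
    round (x + y) = round x + round y ↔ |sfrac x + sfrac y| < 1 / 2 := by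
  refine ⟨fun hxy => ?_, round_add_of_abs_sfrac_add_lt⟩
  rwa [sfrac, hxy, add_sub_round_add_round] at h

end Sfrac

lemma irrational_of_linearIndependent {ι : Type*} {v : ι → ℝ} (hv : LinearIndependent ℚ v)
    {i j : ι} (hij : i ≠ j) (hi : v i = 1) : Irrational (v j) := by
  rintro ⟨q, hq⟩
  have hpair : LinearIndependent ℚ ![v i, v j] := by
    have hinj : Function.Injective ![i, j] := by simpa [injective_pair_iff_ne] using hij
    convert hv.comp _ hinj using 1
    ext k; fin_cases k <;> rfl
  rw [hi, LinearIndependent.pair_iff' one_ne_zero] at hpair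
  exact hpair q (by rw [Rat.smul_def, mul_one, hq])

section AvoidsHalf

/-- No integer multiple of `x` lies in `ℤ + 1/2`; equivalently, `x` is not a rational number with
even reduced denominator. This is the condition under which `n ↦ round (x * n)` is never evaluated
at a discontinuity of `round`. -/
def AvoidsHalf (x : ℝ) : Prop :=
  ∀ m k : ℤ, x * m ≠ k + 1 / 2

lemma avoidsHalf_intCast (b : ℤ) : AvoidsHalf b := by
  intro m k h
  have : 2 * (b * m) = 2 * k + 1 := by
    have : (2 * (b * m) : ℝ) = 2 * k + 1 := by linarith
    exact_mod_cast this
  omega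

lemma avoidsHalf_of_irrational {x : ℝ} (hx : Irrational x) : AvoidsHalf x := by
  intro m k h
  rcases eq_or_ne m 0 with rfl | hm
  · exact avoidsHalf_intCast 0 0 k (by simpa using h)
  · exact hx.mul_intCast hm ⟨k + 1 / 2, by push_cast; exact h.symm⟩

lemma AvoidsHalf.abs_sfrac_lt {x : ℝ} (hx : AvoidsHalf x) (n : ℤ) : |sfrac (x * n)| < 1 / 2 := by
  refine abs_lt.2 ⟨(neg_half_le_sfrac _).lt_of_ne fun h => ?_, sfrac_lt_half _⟩
  refine hx n (round (x * n) - 1) ?_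
  rw [sfrac] at h
  push_cast
  linarith

end AvoidsHalf

section Differences

/-- The second difference of `ρ` at `m` with steps `h` and `k`. -/
def secondDiff (ρ : ℤ → ℤ) (m h k : ℤ) : ℤ :=
  ρ (m + h + k) - ρ (m + h) - ρ (m + k) + ρ m

lemma Δ2_id_mul (ρ : ℤ → ℤ) (n₀ n₁ n₂ : ℤ) :
    Δ2 (fun n => n * ρ n) n₀ n₁ n₂ =
      n₀ * secondDiff ρ n₀ n₁ n₂ + n₁ * secondDiff ρ n₁ n₂ n₀ + n₂ * secondDiff ρ n₂ n₀ n₁ := by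
  have h₁ : n₁ + n₂ + n₀ = n₀ + n₁ + n₂ := by ring
  have h₂ : n₂ + n₀ + n₁ = n₀ + n₁ + n₂ := by ring
  simp only [Δ2, secondDiff, h₁, h₂, add_comm n₀ n₂, add_comm n₁ n₀, add_comm n₂ n₁]
  ring

lemma abs_mul_Δ2_sub_Δ2_le {β ε : ℝ} {f g : ℤ → ℤ} (h : ∀ n, |β * f n - g n| ≤ ε)
    (n₀ n₁ n₂ : ℤ) : |β * Δ2 f n₀ n₁ n₂ - Δ2 g n₀ n₁ n₂| ≤ 8 * ε := by
  simp only [abs_le, Δ2] at h ⊢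
  push_cast
  constructor <;>
    linarith [h (n₀ + n₁ + n₂), h (n₀ + n₁), h (n₁ + n₂), h (n₂ + n₀), h n₀, h n₁, h n₂, h 0]

lemma abs_secondDiff_round_le (α : ℝ) (m h k : ℤ) :
    |secondDiff (fun n => round (α * n)) m h k| ≤ 1 := by
  have hlo (n : ℤ) := neg_half_le_sfrac (α * n)
  have hhi (n : ℤ) := sfrac_lt_half (α * n)
  have key : (secondDiff (fun n => round (α * n)) m h k : ℝ) =
      sfrac (α * (m + h : ℤ)) + sfrac (α * (m + k : ℤ)) - sfrac (α * (m + h + k : ℤ))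
        - sfrac (α * m) := by
    simp only [secondDiff, sfrac]; push_cast; ring
  rw [← Int.lt_add_one_iff, one_add_one_eq_two, ← Int.cast_lt (R := ℝ), Int.cast_abs, key,
    Int.cast_ofNat, abs_lt]
  constructor <;>
    linarith [hlo (m + h), hlo (m + k), hlo (m + h + k), hlo m,
      hhi (m + h), hhi (m + k), hhi (m + h + k), hhi m]

lemma round_mul_add_of_secondDiff_eq_zero {α : ℝ} {n₀ n₁ n₂ : ℤ}
    (h₀ : secondDiff (fun n => round (α * n)) n₀ n₁ n₂ = 0)
    (h₁ : secondDiff (fun n => round (α * n)) n₁ n₂ n₀ = 0)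
    (h₂ : secondDiff (fun n => round (α * n)) n₂ n₀ n₁ = 0) :
    round (α * (n₀ + n₁ : ℤ)) = round (α * n₀) + round (α * n₁) := by
  have hn₁₂ : n₁ + n₂ + n₀ = n₀ + n₁ + n₂ := by ring
  have hn₂₀ : n₂ + n₀ + n₁ = n₀ + n₁ + n₂ := by ring
  simp only [secondDiff, hn₁₂, hn₂₀, add_comm n₀ n₂, add_comm n₁ n₀, add_comm n₂ n₁] at h₀ h₁ h₂
  have htwice : round (α * (n₀ + n₁ + n₂ : ℤ)) - round (α * n₀) - round (α * n₁) - round (α * n₂) =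
      2 * (round (α * (n₀ + n₁ : ℤ)) - round (α * n₀) - round (α * n₁)) := by
    linarith
  have hsmall : |round (α * (n₀ + n₁ + n₂ : ℤ)) - round (α * n₀) - round (α * n₁)
      - round (α * n₂)| < 2 := by
    have key : ((round (α * (n₀ + n₁ + n₂ : ℤ)) - round (α * n₀) - round (α * n₁)
        - round (α * n₂) : ℤ) : ℝ) = sfrac (α * n₀) + sfrac (α * n₁) + sfrac (α * n₂)
          - sfrac (α * (n₀ + n₁ + n₂ : ℤ)) := by
      simp only [sfrac]; push_cast; ring
    rw [← Int.cast_lt (R := ℝ), Int.cast_abs, key, abs_lt]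
    push_cast
    have hlo := neg_half_le_sfrac
    have hhi := sfrac_lt_half
    constructor <;> linarith [hlo (α * n₀), hlo (α * n₁), hlo (α * n₂), hlo (α * (n₀ + n₁ + n₂)),
      hhi (α * n₀), hhi (α * n₁), hhi (α * n₂), hhi (α * (n₀ + n₁ + n₂))]
  rw [htwice, abs_lt] at hsmall
  omega

end Differences

section Lacunary

lemma eq_zero_of_abs_mul_add_add_abs_lt {c : ℤ} {x r : ℝ} (h : |x * c + r| + |r| < x) :
    c = 0 := by
  by_contra hc
  have hx : 0 ≤ x := (add_nonneg (abs_nonneg _) (abs_nonneg _)).trans h.le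
  have hc' : (1 : ℝ) ≤ |(c : ℝ)| := by exact_mod_cast Int.one_le_abs hc
  refine h.not_ge ?_
  calc x ≤ x * |(c : ℝ)| := le_mul_of_one_le_right hx hc'
    _ = |x * c + r - r| := by rw [add_sub_cancel_right, abs_mul, abs_of_nonneg hx]
    _ ≤ |x * c + r| + |r| := abs_sub _ _

lemma eq_zero_of_lacunary {B K C x₀ x₁ x₂ : ℝ} {c₀ c₁ c₂ : ℤ} (hC₁ : 1 ≤ C)
    (hC : B + 2 * K < C) (h₀ : C ≤ x₀) (h₁ : C * x₀ ≤ x₁) (h₂ : C * x₁ ≤ x₂)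
    (hc₀ : |(c₀ : ℝ)| ≤ K) (hc₁ : |(c₁ : ℝ)| ≤ K) (h : |x₀ * c₀ + x₁ * c₁ + x₂ * c₂| ≤ B) :
    c₀ = 0 ∧ c₁ = 0 ∧ c₂ = 0 := by
  have hB : 0 ≤ B := (abs_nonneg _).trans h
  have hK : 0 ≤ K := (abs_nonneg _).trans hc₀
  have hx₀ : 1 ≤ x₀ := hC₁.trans h₀
  have hx₀₁ : x₀ ≤ x₁ := (le_mul_of_one_le_left (by linarith) hC₁).trans h₁
  have hterm {x c : ℝ} (hx : 1 ≤ x) (hc : |c| ≤ K) : |x * c| ≤ x * K := by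
    rw [abs_mul, abs_of_nonneg (by linarith)]
    gcongr
  have hdom {x : ℝ} (hx : 1 ≤ x) : B + x * (2 * K) < C * x := by nlinarith
  have hr₀ := hterm hx₀ hc₀
  have hr₁ := hterm (hx₀.trans hx₀₁) hc₁
  obtain rfl : c₂ = 0 := by
    refine eq_zero_of_abs_mul_add_add_abs_lt (x := x₂) (r := x₀ * c₀ + x₁ * c₁) ?_
    rw [add_comm (x₂ * _)]
    nlinarith [abs_add_le (x₀ * c₀) (x₁ * c₁), hdom (hx₀.trans hx₀₁)]
  obtain rfl : c₁ = 0 := by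
    refine eq_zero_of_abs_mul_add_add_abs_lt (x := x₁) (r := x₀ * c₀) ?_
    rw [Int.cast_zero, mul_zero, add_zero] at h
    rw [add_comm (x₁ * _)]
    nlinarith [hdom hx₀]
  obtain rfl : c₀ = 0 := by
    refine eq_zero_of_abs_mul_add_add_abs_lt (x := x₀) (r := 0) ?_
    simp only [Int.cast_zero, mul_zero, add_zero] at h
    rw [add_zero, abs_zero]
    linarith
  exact ⟨rfl, rfl, rfl⟩

end Lacunary

section Recurrence

lemma exists_homothetic_copy_dist_lt {M X : Type*} [AddCommMonoid M] [PseudoMetricSpace X]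
    {u : M → X} (hu : TotallyBounded (range u)) (S : Finset M) {ε : ℝ} (hε : 0 < ε) :
    ∃ a > 0, ∃ b : M, ∀ s ∈ S, ∀ t ∈ S, dist (u (a • s + b)) (u (a • t + b)) < ε := by
  obtain ⟨T, hT, hcover⟩ := Metric.totallyBounded_iff.1 hu (ε / 2) (half_pos hε)
  have hnear (m : M) : ∃ y : T, dist (u m) y < ε / 2 := by
    simpa using hcover (mem_range_self m)
  choose colour hcolour using hnear
  have := hT.to_subtype
  obtain ⟨a, ha, b, y, hy⟩ := Combinatorics.exists_mono_homothetic_copy S colour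
  refine ⟨a, ha, b, fun s hs t ht => ?_⟩
  calc dist (u (a • s + b)) (u (a • t + b))
      ≤ dist (u (a • s + b)) y + dist (u (a • t + b)) y := dist_triangle_right _ _ _
    _ < ε / 2 + ε / 2 := add_lt_add (hy s hs ▸ hcolour _) (hy t ht ▸ hcolour _)
    _ = ε := add_halves ε

lemma exists_arithProg_abs_fract_sub_lt {ι : Type*} [Finite ι] (q : ι → ℤ → ℝ) (l : ℕ) (N : ℤ)
    {ε : ℝ} (hε : 0 < ε) :
    ∃ b n : ℤ, N ≤ n ∧ ∀ i, ∀ j < l, ∀ k < l,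
      |Int.fract (q i (b + j * n)) - Int.fract (q i (b + k * n))| < ε := by
  have := Fintype.ofFinite ι
  let u (x : ℤ) (i : ι) : ℝ := Int.fract (q i x)
  have hu : TotallyBounded (range u) := by
    refine (isCompact_Icc (a := (0 : ι → ℝ)) (b := 1)).totallyBounded.subset ?_
    rintro _ ⟨x, rfl⟩
    exact ⟨fun i => Int.fract_nonneg _, fun i => (Int.fract_lt_one _).le⟩
  obtain ⟨a, ha, b, hb⟩ := exists_homothetic_copy_dist_lt hu
    ((Finset.range l).image fun j : ℕ => j * max N 0) hε
  refine ⟨b, a * max N 0, ?_, fun i j hj k hk => ?_⟩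
  · have : (1 : ℤ) ≤ a := by exact_mod_cast ha
    exact (le_max_left N 0).trans (le_mul_of_one_le_left (le_max_right N 0) this)
  · have hmem {j : ℕ} (hj : j < l) := Finset.mem_image_of_mem (fun j : ℕ => j * max N 0)
      (Finset.mem_range.2 hj)
    have hpoint (j : ℕ) : a • (j * max N 0) + b = b + j * (a * max N 0) := by
      rw [nsmul_eq_mul]; ring
    have := (dist_le_pi_dist _ _ i).trans_lt (hb _ (hmem hj) _ (hmem hk))
    simpa only [hpoint, Real.dist_eq] using this

/-- `n` is an `ε`-return time for `α, β`: the quantities `α n`, `β n`, `β ⌊α n⌉` and `β n ⌊α n⌉`,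
which govern how `⌊β m ⌊α m⌉⌉` changes under the translation `m ↦ m + n`, all lie within `ε` of an
integer (`|sfrac x|` being the distance from `x` to `ℤ`). -/
structure IsReturnTime (α β ε : ℝ) (n : ℤ) : Prop where
  alpha_mul : |sfrac (α * n)| < ε
  beta_mul : |sfrac (β * n)| < ε
  beta_mul_round : |sfrac (β * round (α * n))| < ε
  beta_mul_mul_round : |sfrac (β * n * round (α * n))| < ε

theorem exists_isReturnTime (α β : ℝ) {ε : ℝ} (hε : 0 < ε) (N : ℤ) :
    ∃ n, N ≤ n ∧ IsReturnTime α β ε n := by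
  let q : Fin 4 → ℤ → ℝ :=
    ![fun x => α * x, fun x => β * x, fun x => β * ⌊α * x⌋, fun x => β * x * ⌊α * x⌋ / 2]
  obtain ⟨b, n, hNn, hclose⟩ := exists_arithProg_abs_fract_sub_lt q 3 N
    (lt_min (half_pos hε) one_half_pos)
  have h₁ (i) : |Int.fract (q i (b + n)) - Int.fract (q i b)| < min (ε / 2) (1 / 2) := by
    simpa using hclose i 1 (by norm_num) 0 (by norm_num)
  have h₂ (i) : |Int.fract (q i (b + 2 * n)) - Int.fract (q i (b + n))| < min (ε / 2) (1 / 2) := by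
    simpa using hclose i 2 (by norm_num) 1 (by norm_num)
  have hsfrac (i) : |sfrac (q i (b + n) - q i b)| < ε / 2 :=
    (abs_sfrac_sub_le_abs_fract_sub _ _).trans_lt ((h₁ i).trans_le (min_le_left _ _))
  have hsfrac' (i) : |sfrac (q i (b + 2 * n) - q i (b + n))| < ε / 2 :=
    (abs_sfrac_sub_le_abs_fract_sub _ _).trans_lt ((h₂ i).trans_le (min_le_left _ _))
  have hα : q 0 (b + n) - q 0 b = α * n := by
    simp only [q, Matrix.cons_val]; push_cast; ring
  have hα' : q 0 (b + 2 * n) - q 0 (b + n) = α * n := by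
    simp only [q, Matrix.cons_val]; push_cast; ring
  have hβ : q 1 (b + n) - q 1 b = β * n := by
    simp only [q, Matrix.cons_val]; push_cast; ring
  have hfloor : (round (α * n) : ℝ) = ⌊α * (b + n : ℤ)⌋ - ⌊α * b⌋ := by
    rw [← hα, round_sub_of_abs_fract_sub_lt ((h₁ 0).trans_le (min_le_right _ _))]
    exact Int.cast_sub _ _
  have hfloor' : (round (α * n) : ℝ) = ⌊α * (b + 2 * n : ℤ)⌋ - ⌊α * (b + n : ℤ)⌋ := by
    rw [← hα', round_sub_of_abs_fract_sub_lt ((h₂ 0).trans_le (min_le_right _ _))]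
    exact Int.cast_sub _ _
  have hβround : q 2 (b + n) - q 2 b = β * round (α * n) := by
    simp only [q, Matrix.cons_val, hfloor]; ring
  have hquad : (q 3 (b + 2 * n) - q 3 (b + n)) - (q 3 (b + n) - q 3 b) =
      β * n * round (α * n) := by
    simp only [q, Matrix.cons_val]
    push_cast at hfloor hfloor' ⊢
    linear_combination β * b / 2 * hfloor - β * (b + 2 * n) / 2 * hfloor'
  refine ⟨n, hNn, hα ▸ (hsfrac 0).trans (half_lt_self hε), hβ ▸ (hsfrac 1).trans (half_lt_self hε),
    hβround ▸ (hsfrac 2).trans (half_lt_self hε), hquad ▸ ?_⟩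
  exact (abs_sfrac_sub_le _ _).trans_lt (by linarith [hsfrac 3, hsfrac' 3])

end Recurrence

section BracketQuad

/-- The bracket quadratic `n ↦ ⌊β n ⌊α n⌉⌉`. -/
noncomputable def bracketQuad (α β : ℝ) (n : ℤ) : ℤ :=
  round (β * n * round (α * n))

variable {α β : ℝ}

lemma round_mul_add_iff (hα : AvoidsHalf α) (m n : ℤ) :
    round (α * (m + n : ℤ)) = round (α * m) + round (α * n) ↔
      |sfrac (α * m) + sfrac (α * n)| < 1 / 2 := by
  have hadd : α * (m + n : ℤ) = α * m + α * n := by push_cast; ring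
  rw [hadd]
  exact round_add_eq_iff (hadd ▸ hα.abs_sfrac_lt (m + n))

theorem abs_sfrac_add_sfrac_lt_of_Δ2_eq_zero {C : ℝ} (hα : AvoidsHalf α) (hβ : β ≠ 0)
    (hC : 3 + 4 / |β| ≤ C) {n₀ n₁ n₂ : ℤ} (h₀ : C ≤ n₀) (h₁ : C * n₀ ≤ n₁) (h₂ : C * n₁ ≤ n₂)
    (h : Δ2 (bracketQuad α β) n₀ n₁ n₂ = 0) :
    |sfrac (α * n₀) + sfrac (α * n₁)| < 1 / 2 := by
  let ρ (n : ℤ) : ℤ := round (α * n)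
  have hβ' : 0 < |β| := abs_pos.2 hβ
  have hround (n : ℤ) : |β * (n * ρ n : ℤ) - bracketQuad α β n| ≤ 1 / 2 := by
    simpa only [bracketQuad, Int.cast_mul, mul_assoc] using abs_sub_round (β * (n * ρ n))
  have hΔ : |(Δ2 (fun n => n * ρ n) n₀ n₁ n₂ : ℝ)| ≤ 4 / |β| := by
    have := abs_mul_Δ2_sub_Δ2_le hround n₀ n₁ n₂
    rw [h, Int.cast_zero, sub_zero, abs_mul] at this
    rw [le_div_iff₀' hβ']
    linarith
  rw [Δ2_id_mul] at hΔ
  push_cast at hΔ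
  have hcoeff (m h k : ℤ) : |(secondDiff ρ m h k : ℝ)| ≤ 1 := by
    exact_mod_cast abs_secondDiff_round_le α m h k
  have : 0 < 4 / |β| := by positivity
  obtain ⟨hc₀, hc₁, hc₂⟩ := eq_zero_of_lacunary (by linarith) (by linarith) h₀ h₁ h₂
    (hcoeff ..) (hcoeff ..) hΔ
  exact (round_mul_add_iff hα n₀ n₁).1 (round_mul_add_of_secondDiff_eq_zero hc₀ hc₁ hc₂)

lemma IsReturnTime.bracketQuad_add {ε : ℝ} {m n : ℤ} (h : IsReturnTime α β ε n)
    (hα : |sfrac (α * m)| + ε ≤ 1 / 2)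
    (hβ : |sfrac (β * m * round (α * m))| + ε * (1 + |(m : ℝ)| + |(round (α * m) : ℝ)|) ≤ 1 / 2) :
    bracketQuad α β (m + n) = bracketQuad α β m + bracketQuad α β n
      + m * round (β * round (α * n)) + round (α * m) * round (β * n) := by
  have hround : round (α * (m + n : ℤ)) = round (α * m) + round (α * n) := by
    rw [Int.cast_add, mul_add]
    exact round_add_of_abs_sfrac_add_lt ((abs_add_le _ _).trans_lt (by linarith [h.alpha_mul]))
  rw [bracketQuad, hround]
  refine round_eq_of_abs_sub_lt ?_
  have herr : β * (m + n : ℤ) * (round (α * m) + round (α * n) : ℤ)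
      - (bracketQuad α β m + bracketQuad α β n + m * round (β * round (α * n))
        + round (α * m) * round (β * n) : ℤ) =
      sfrac (β * m * round (α * m)) + (sfrac (β * n * round (α * n))
        + m * sfrac (β * round (α * n)) + round (α * m) * sfrac (β * n)) := by
    simp only [sfrac, bracketQuad]; push_cast; ring
  have hshift : |sfrac (β * n * round (α * n)) + m * sfrac (β * round (α * n))
      + round (α * m) * sfrac (β * n)| < ε * (1 + |(m : ℝ)| + |(round (α * m) : ℝ)|) := by
    refine (abs_add_three _ _ _).trans_lt ?_
    rw [abs_mul, abs_mul]
    nlinarith [mul_le_mul_of_nonneg_left h.beta_mul_round.le (abs_nonneg (m : ℝ)),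
      mul_le_mul_of_nonneg_left h.beta_mul.le (abs_nonneg (round (α * m) : ℝ)),
      h.beta_mul_mul_round]
  rw [herr]
  exact (abs_add_le _ _).trans_lt (by linarith)

lemma eventually_add_mul_le {x y : ℝ} (h : x < y) (c : ℝ) :
    ∀ᶠ ε in 𝓝[>] (0 : ℝ), x + ε * c ≤ y := by
  have : Tendsto (fun ε : ℝ => x + ε * c) (𝓝[>] 0) (𝓝 x) :=
    tendsto_nhdsWithin_of_tendsto_nhds <| by
      simpa using (show Continuous fun ε : ℝ => x + ε * c by fun_prop).tendsto 0
  exact this.eventually_le_const h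

lemma eventually_bracketQuad_add (hα : AvoidsHalf α) (hβ : AvoidsHalf β) (m : ℤ) :
    ∀ᶠ ε in 𝓝[>] 0, ∀ n, IsReturnTime α β ε n →
      bracketQuad α β (m + n) = bracketQuad α β m + bracketQuad α β n
        + m * round (β * round (α * n)) + round (α * m) * round (β * n) := by
  have hm : |sfrac (β * m * round (α * m))| < 1 / 2 := by
    simpa only [Int.cast_mul, mul_assoc] using hβ.abs_sfrac_lt (m * round (α * m))
  filter_upwards [eventually_add_mul_le (hα.abs_sfrac_lt m) 1, eventually_add_mul_le hm _]
    with ε h₁ h₂ n hn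
  exact hn.bracketQuad_add (by simpa using h₁) h₂

theorem exists_Δ2_eq_zero (hα : AvoidsHalf α) (hβ : AvoidsHalf β) {n₀ n₁ : ℤ}
    (h : |sfrac (α * n₀) + sfrac (α * n₁)| < 1 / 2) (N : ℤ) :
    ∃ n₂, N ≤ n₂ ∧ Δ2 (bracketQuad α β) n₀ n₁ n₂ = 0 := by
  obtain ⟨ε, ⟨⟨h₀, h₁⟩, h₀₁⟩, hε⟩ := (((eventually_bracketQuad_add hα hβ n₀).and
    (eventually_bracketQuad_add hα hβ n₁)).and
    (eventually_bracketQuad_add hα hβ (n₀ + n₁))).and self_mem_nhdsWithin |>.exists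
  obtain ⟨n₂, hn₂, hret⟩ := exists_isReturnTime α β hε N
  have hρ := (round_mul_add_iff hα n₀ n₁).2 h
  have hzero : bracketQuad α β 0 = 0 := by simp [bracketQuad]
  refine ⟨n₂, hn₂, ?_⟩
  rw [Δ2, add_comm n₂ n₀, h₀ n₂ hret, h₁ n₂ hret, h₀₁ n₂ hret, hρ, hzero]
  ring

end BracketQuad

theorem characterization_general {α β C : ℝ} (hα : AvoidsHalf α) (hβ : AvoidsHalf β)
    (hβ₀ : β ≠ 0) (hC : 3 + 4 / |β| ≤ C) {n₀ n₁ : ℤ} (h₀ : C ≤ n₀) (h₁ : C * n₀ ≤ n₁) :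
    (∃ n₂ : ℤ, 0 < n₂ ∧ C * n₁ ≤ n₂ ∧ Δ2 (bracketQuad α β) n₀ n₁ n₂ = 0) ↔
      |sfrac (α * n₀) + sfrac (α * n₁)| < 1 / 2 := by
  constructor
  · rintro ⟨n₂, -, h₂, hΔ⟩
    exact abs_sfrac_add_sfrac_lt_of_Δ2_eq_zero hα hβ₀ hC h₀ h₁ h₂ hΔ
  · intro h
    obtain ⟨n₂, hn₂, hΔ⟩ := exists_Δ2_eq_zero hα hβ h (max 1 ⌈C * n₁⌉)
    exact ⟨n₂, (le_max_left _ _).trans hn₂, Int.ceil_le.1 ((le_max_right _ _).trans hn₂), hΔ⟩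

theorem characterization (α β : ℝ) (hα : 0 < α) (hβ : 0 < β)
    (hind : LinearIndependent ℚ ![(1 : ℝ), α, α ^ 2])
    (hβ' : (∃ b : ℤ, β = (b : ℝ)) ∨ Irrational β)
    (g : ℤ → ℤ) (hg : ∀ n : ℤ, g n = round (β * n * round (α * n))) :
    ∃ C : ℝ, 1 ≤ C ∧ ∀ n₀ n₁ : ℤ, 0 < n₀ → 0 < n₁ →
      C ≤ (n₀ : ℝ) → C * n₀ ≤ (n₁ : ℝ) →
      ((∃ n₂ : ℤ, 0 < n₂ ∧ C * n₁ ≤ (n₂ : ℝ) ∧ Δ2 g n₀ n₁ n₂ = 0) ↔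
        |sfrac (α * n₀) + sfrac (α * n₁)| < 1 / 2) := by
  obtain rfl : g = bracketQuad α β := funext hg
  have hα' : AvoidsHalf α := avoidsHalf_of_irrational <|
    irrational_of_linearIndependent hind (i := 0) (j := 1) (by decide) rfl
  have hβ'' : AvoidsHalf β := by
    rcases hβ' with ⟨b, rfl⟩ | hirr
    exacts [avoidsHalf_intCast b, avoidsHalf_of_irrational hirr]
  have hpos : 0 < 4 / |β| := div_pos four_pos (abs_pos.2 hβ.ne')
  exact ⟨3 + 4 / |β|, by linarith, fun n₀ n₁ _ _ h₀ h₁ =>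
    characterization_general hα' hβ'' hβ.ne' le_rfl h₀ h₁⟩

end Stmt6
end

section
/- There exists a real constant C ≥ 1 such that the following two assertions hold: (a) for every ε > 0 there exists a positive integer N such that every positive integer m satisfying ψ_C(m, N) has ‖α·m‖ < ε; (b) for every positive integer N there exists ε > 0 such that every positive integer m with ‖α·m‖ < ε satisfies ψ_C(m, N). -/
/-!
STATEMENT 7: the property ψ_C(m, N) characterises smallness of ‖α·m‖.
-/

namespace Stmt7

/-- The second symmetric discrete derivative. -/
def Δ2 (g : ℤ → ℤ) (n₀ n₁ n₂ : ℤ) : ℤ :=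
  g (n₀ + n₁ + n₂) - g (n₀ + n₁) - g (n₁ + n₂) - g (n₂ + n₀)
    + g n₀ + g n₁ + g n₂ - g 0

/-- `μ_C(n₀, n₁)`: there is a positive integer `n₂ ≥ C·n₁` with `Δ²g(n₀,n₁,n₂) = 0`. -/
def mu (C : ℝ) (g : ℤ → ℤ) (n₀ n₁ : ℤ) : Prop :=
  ∃ n₂ : ℤ, 0 < n₂ ∧ C * n₁ ≤ (n₂ : ℝ) ∧ Δ2 g n₀ n₁ n₂ = 0

/-- `ψ_C(m, N)`: `μ_C(n, m)` holds for every positive integer `n ≤ N`. -/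
def psi (C : ℝ) (g : ℤ → ℤ) (m N : ℤ) : Prop :=
  ∀ n : ℤ, 0 < n → n ≤ N → mu C g n m

/-!
If `‖α * m‖` is small, then `⌊α * (n + m)⌉ = ⌊α * n⌉ + ⌊α * m⌉` for all `n ≤ N`. Along suitable
return times `w → ∞` one has `g (v + w) = g v + g w + v * ⌊β * ⌊α * w⌉⌉ + ⌊α * v⌉ * ⌊β * w⌉`,
and for such `w` the additivity of `⌊α * ·⌉` at `(n, m)` makes `Δ2 g n m w` vanish. The return
times are those of the rotation by `(α, β, α * β)`, thinned out so that `β * n * ⌊α * n⌉` tends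
to `0` modulo `1`; this is possible because `n ↦ β * n * ⌊α * n⌉` is asymptotically additive
along them.

Conversely, `Δ2 g` is within a bounded distance of `β * Δ2 h` for `h n = n * ⌊α * n⌉`. If
`‖α * m‖ ≥ ε`, then for a suitable bounded `n` the sum `⟨α * n⟩ + ⟨α * m⟩` carries (up to
replacing `α` by `-α`), and the carries force `|Δ2 h n m l|` to be large for every `l ≥ C * m`.
-/

open Filter Set Topology

/-! ### Signed fractional parts and almost periods -/

/-- The signed fractional part `⟨x⟩ = x - ⌊x⌉`, so that `‖x‖ = |⟨x⟩|`. -/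
noncomputable def signedFract (x : ℝ) : ℝ := x - round x

theorem neg_half_le_signedFract (x : ℝ) : -(1 / 2) ≤ signedFract x := by
  linarith [round_le_add_half x, signedFract.eq_1 x]

theorem signedFract_lt_half (x : ℝ) : signedFract x < 1 / 2 := by
  linarith [sub_half_lt_round x, signedFract.eq_1 x]

theorem round_add_signedFract (x : ℝ) : round x + signedFract x = x :=
  add_sub_cancel _ _

theorem round_eq_of_abs_sub_lt_half {x : ℝ} {k : ℤ} (h : |x - k| < 1 / 2) : round x = k := by
  rw [abs_lt] at h
  exact round_eq_iff.2 ⟨by linarith, by linarith⟩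

theorem abs_signedFract_lt_half_of_irrational {x : ℝ} (hx : Irrational x) :
    |signedFract x| < 1 / 2 := by
  refine abs_lt.2 ⟨(neg_half_le_signedFract x).lt_of_ne fun h ↦ hx ?_, signedFract_lt_half x⟩
  refine ⟨round x - 1 / 2, ?_⟩
  push_cast
  linarith [round_add_signedFract x]

theorem round_neg_of_irrational {x : ℝ} (hx : Irrational x) : round (-x) = -round x := by
  refine round_eq_of_abs_sub_lt_half ?_
  rw [Int.cast_neg, ← neg_sub', abs_neg]
  exact abs_signedFract_lt_half_of_irrational hx

theorem tendsto_coe_unitAddCircle_zero_iff {ι : Type*} {l : Filter ι} {u : ι → ℝ} :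
    Tendsto (fun i ↦ (u i : UnitAddCircle)) l (𝓝 0) ↔
      Tendsto (fun i ↦ signedFract (u i)) l (𝓝 0) := by
  rw [tendsto_zero_iff_norm_tendsto_zero,
    tendsto_zero_iff_abs_tendsto_zero (fun i ↦ signedFract (u i))]
  simp only [UnitAddCircle.norm_eq, Function.comp_def, signedFract]

/-- The filter on `ℤ` along which `‖θ * n‖` tends to `0`. -/
def almostPeriods (θ : ℝ) : Filter ℤ :=
  comap (fun n : ℤ ↦ ((θ * n : ℝ) : UnitAddCircle)) (𝓝 0)

theorem tendsto_almostPeriods_iff {ι : Type*} {l : Filter ι} {θ : ℝ} {u : ι → ℤ} :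
    Tendsto u l (almostPeriods θ) ↔
      Tendsto (fun i ↦ ((θ * u i : ℝ) : UnitAddCircle)) l (𝓝 0) :=
  tendsto_comap_iff

theorem tendsto_almostPeriods_iff_signedFract {ι : Type*} {l : Filter ι} {θ : ℝ} {u : ι → ℤ} :
    Tendsto u l (almostPeriods θ) ↔ Tendsto (fun i ↦ signedFract (θ * u i)) l (𝓝 0) :=
  tendsto_almostPeriods_iff.trans tendsto_coe_unitAddCircle_zero_iff

theorem eventually_almostPeriods_iff {θ : ℝ} {p : ℤ → Prop} :
    (∀ᶠ n in almostPeriods θ, p n) ↔ ∃ ε > 0, ∀ n : ℤ, |signedFract (θ * n)| < ε → p n := by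
  have hbasis := (Metric.nhds_basis_ball (x := (0 : UnitAddCircle))).comap
    (fun n : ℤ ↦ ((θ * n : ℝ) : UnitAddCircle))
  simp only [almostPeriods, hbasis.eventually_iff, mem_preimage, mem_ball_zero_iff,
    UnitAddCircle.norm_eq, signedFract]

theorem tendsto_almostPeriods_linear_combination {ι : Type*} {l : Filter ι} {θ : ℝ} {u v : ι → ℤ}
    (hu : Tendsto u l (almostPeriods θ)) (hv : Tendsto v l (almostPeriods θ)) (s t : ℤ) :
    Tendsto (fun i ↦ s * u i + t * v i) l (almostPeriods θ) := by
  rw [tendsto_almostPeriods_iff] at hu hv ⊢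
  have h := (hu.const_smul s).add (hv.const_smul t)
  simp only [smul_zero, add_zero, ← AddCircle.coe_zsmul, ← AddCircle.coe_add, zsmul_eq_mul] at h
  refine h.congr fun i ↦ congrArg _ ?_
  push_cast
  ring

theorem eventually_round_linear_combination {ι : Type*} {l : Filter ι} {θ : ℝ} {u v : ι → ℤ}
    (hu : Tendsto u l (almostPeriods θ)) (hv : Tendsto v l (almostPeriods θ)) (s t : ℤ) :
    ∀ᶠ i in l, round (θ * (s * u i + t * v i : ℤ)) =
      s * round (θ * u i) + t * round (θ * v i) := by
  rw [tendsto_almostPeriods_iff_signedFract] at hu hv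
  have herror : Tendsto (fun i ↦ s * signedFract (θ * u i) + t * signedFract (θ * v i)) l
      (𝓝 0) := by
    simpa using (hu.const_mul (s : ℝ)).add (hv.const_mul (t : ℝ))
  filter_upwards [herror.eventually (Metric.ball_mem_nhds 0 one_half_pos)] with i hi
  rw [dist_zero_right, Real.norm_eq_abs] at hi
  refine round_eq_of_abs_sub_lt_half (lt_of_eq_of_lt (congrArg _ ?_) hi)
  push_cast [signedFract]
  ring

theorem exists_abs_signedFract_lt_imp_eq_zero {θ : ℝ} {d j : ℤ} (hd : d ≠ 0) (hθ : d * θ = j) :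
    ∃ δ > 0, ∀ n : ℤ, |signedFract (θ * n)| < δ → signedFract (θ * n) = 0 := by
  have hd' : 0 < |(d : ℝ)| := by positivity
  refine ⟨|(d : ℝ)|⁻¹, by positivity, fun n hn ↦ ?_⟩
  have hint : d * signedFract (θ * n) = (j * n - d * round (θ * n) : ℤ) := by
    push_cast [signedFract]
    linear_combination n * hθ
  have hlt : |(d : ℝ) * signedFract (θ * n)| < 1 := by
    rw [abs_mul]
    exact (lt_inv_mul_iff₀ hd').1 (by simpa using hn)
  rw [hint, ← Int.cast_abs] at hlt
  have hzero : j * n - d * round (θ * n) = 0 := Int.abs_lt_one_iff.1 (by exact_mod_cast hlt)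
  rw [hzero, Int.cast_zero] at hint
  exact (mul_eq_zero.1 hint).resolve_left (by exact_mod_cast hd)

theorem exists_round_add_eq_of_abs_signedFract_lt_half {x : ℝ} (hx : |signedFract x| < 1 / 2) :
    ∃ δ > 0, ∀ y : ℝ, |y| < δ → round (x + y) = round x := by
  refine ⟨1 / 2 - |signedFract x|, by linarith, fun y hy ↦ round_eq_of_abs_sub_lt_half ?_⟩
  calc |x + y - round x| = |signedFract x + y| := by rw [signedFract]; ring_nf
    _ ≤ |signedFract x| + |y| := abs_add_le _ _
    _ < 1 / 2 := by linarith

-- At a half-integer `θ * k` rounding is discontinuous, but then `θ` is rational, so an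
-- almost period `l` that is good enough satisfies `θ * l ∈ ℤ` exactly.
theorem eventually_round_mul_add (θ : ℝ) (k : ℤ) :
    ∀ᶠ l in almostPeriods θ, round (θ * (k + l : ℤ)) = round (θ * k) + round (θ * l) := by
  suffices ∃ δ > 0, ∀ l : ℤ, |signedFract (θ * l)| < δ →
      round (θ * k + signedFract (θ * l)) = round (θ * k) by
    obtain ⟨δ, hδ, h⟩ := this
    refine eventually_almostPeriods_iff.2 ⟨δ, hδ, fun l hl ↦ ?_⟩
    rw [← h l hl, ← round_add_intCast]
    congr 1
    push_cast [signedFract]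
    ring
  rcases (abs_sub_round (θ * k)).lt_or_eq with hlt | hhalf
  · obtain ⟨δ, hδ, h⟩ := exists_round_add_eq_of_abs_signedFract_lt_half hlt
    exact ⟨δ, hδ, fun l hl ↦ h _ hl⟩
  · obtain ⟨j, hj⟩ : ∃ j : ℤ, (2 * k : ℤ) * θ = j := by
      rcases (abs_eq one_half_pos.le).1 hhalf with h | h
      · exact ⟨2 * round (θ * k) + 1, by push_cast; linarith⟩
      · exact ⟨2 * round (θ * k) - 1, by push_cast; linarith⟩
    have hk : 2 * k ≠ 0 := by
      rintro h
      obtain rfl : k = 0 := by omega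
      norm_num at hhalf
    obtain ⟨δ, hδ, h⟩ := exists_abs_signedFract_lt_imp_eq_zero hk hj
    exact ⟨δ, hδ, fun l hl ↦ by rw [h l hl, add_zero]⟩

/-! ### Recurrence in compact groups -/

theorem mapClusterPt_add_of_tendsto {ι G : Type*} [TopologicalSpace G] [Add G] [ContinuousAdd G]
    {l : Filter ι} {u e : ι → G} {x y : G} (hu : MapClusterPt x l u) (he : Tendsto e l (𝓝 y)) :
    MapClusterPt (x + y) l (fun i ↦ u i + e i) := by
  obtain ⟨U, hUl, hU⟩ := mapClusterPt_iff_ultrafilter.1 hu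
  exact mapClusterPt_iff_ultrafilter.2 ⟨U, hUl, hU.add (he.mono_left hUl)⟩

section Recurrence

variable {G : Type*} [AddCommGroup G] [TopologicalSpace G]

-- The cluster points form a nonempty closed subsemigroup, and every such subset of a compact
-- group contains `0`.
theorem mapClusterPt_zero_of_tendsto_defect [IsTopologicalAddGroup G] [CompactSpace G]
    {M : Type*} [Add M] {F : Filter M} [NeBot F] {f : M → G}
    (hF : Tendsto (fun p : M × M ↦ p.1 + p.2) (F.curry F) F)
    (hf : Tendsto (fun p : M × M ↦ f (p.1 + p.2) - (f p.1 + f p.2)) (F.curry F) (𝓝 0)) :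
    MapClusterPt 0 F f := by
  have hadd {y z : G} (hy : MapClusterPt y F f) (hz : MapClusterPt z F f) :
      MapClusterPt (y + z) F f := by
    have hsum : MapClusterPt (y + z) (F.curry F) (fun p ↦ f p.1 + f p.2) :=
      (hy.curry_prodMap hz).continuousAt_comp continuous_add.continuousAt
    refine .of_comp hF ?_
    simpa [Function.comp_def] using mapClusterPt_add_of_tendsto hsum hf
  obtain ⟨y, hy⟩ : ∃ y, MapClusterPt y F f := exists_clusterPt_of_compactSpace _
  have hmultiples (k : ℕ) (hk : 1 ≤ k) : MapClusterPt (k • y) F f := by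
    induction k, hk using Nat.le_induction with
    | base => simpa using hy
    | succ k _ ih => simpa [succ_nsmul] using hadd ih hy
  exact isClosed_setOfPred_clusterPt.mem_of_mapClusterPt (mapClusterPt_zero_atTop_nsmul y)
    ((eventually_ge_atTop 1).mono hmultiples)

/-- The filter on `ℤ` along which `n → ∞` and `n • x → 0`. -/
noncomputable def returnTimes (x : G) : Filter ℤ :=
  atTop ⊓ comap (fun n : ℤ ↦ n • x) (𝓝 0)

theorem neBot_inf_comap_nhds_iff {ι X : Type*} [TopologicalSpace X] {F : Filter ι} {u : ι → X}
    {x : X} : NeBot (F ⊓ comap u (𝓝 x)) ↔ MapClusterPt x F u := by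
  rw [neBot_inf_comap_iff_map, inf_comm]
  rfl

instance [IsTopologicalAddGroup G] [CompactSpace G] (x : G) : NeBot (returnTimes x) :=
  neBot_inf_comap_nhds_iff.2
    (mapClusterPt_atTop_zsmul_iff_nsmul.2 (mapClusterPt_zero_atTop_nsmul x))

theorem tendsto_zsmul_returnTimes (x : G) :
    Tendsto (fun n : ℤ ↦ n • x) (returnTimes x) (𝓝 0) :=
  tendsto_comap.mono_left inf_le_right

theorem tendsto_add_returnTimes [ContinuousAdd G] (x : G) :
    Tendsto (fun p : ℤ × ℤ ↦ p.1 + p.2) (returnTimes x ×ˢ returnTimes x) (returnTimes x) := by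
  have hx := tendsto_zsmul_returnTimes x
  have hatTop : Tendsto id (returnTimes x) atTop := tendsto_id'.2 inf_le_left
  refine tendsto_inf.2 ⟨?_, tendsto_comap_iff.2 ?_⟩
  · exact (hatTop.comp tendsto_fst).atTop_add_atTop (hatTop.comp tendsto_snd)
  · simpa [Function.comp_def, add_smul] using (hx.comp tendsto_fst).add (hx.comp tendsto_snd)

end Recurrence

/-! ### Recurrence for the bracket quadratic -/

/-- The bracket product `n * ⌊α * n⌉`. -/
noncomputable def bracketProduct (α : ℝ) (n : ℤ) : ℤ := n * round (α * n)

/-- The bracket quadratic `⌊β * n * ⌊α * n⌉⌉` of the theorem. -/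
noncomputable def bracketQuadratic (α β : ℝ) (n : ℤ) : ℤ := round (β * bracketProduct α n)

theorem bracketQuadratic_zero (α β : ℝ) : bracketQuadratic α β 0 = 0 := by
  simp [bracketQuadratic, bracketProduct]

/-- The return times of the rotation by `(α, β, α * β)`. The third coordinate makes `⌊α * n⌉`, and
not only `n`, an almost period of `β`. -/
noncomputable def linearReturnTimes (α β : ℝ) : Filter ℤ :=
  returnTimes ((α, β, (α * β : ℝ)) : UnitAddCircle × UnitAddCircle × UnitAddCircle)

/-- The filter of those linear return times along which also `‖β * n * ⌊α * n⌉‖` tends to `0`. -/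
noncomputable def quadraticReturnTimes (α β : ℝ) : Filter ℤ :=
  linearReturnTimes α β ⊓ comap (bracketProduct α) (almostPeriods β)

section ReturnTimes

variable (α β : ℝ)

instance : NeBot (linearReturnTimes α β) :=
  inferInstanceAs (NeBot (returnTimes _))

theorem linearReturnTimes_le_atTop : linearReturnTimes α β ≤ atTop :=
  inf_le_left

theorem linearReturnTimes_le_almostPeriods_left : linearReturnTimes α β ≤ almostPeriods α := by
  rw [← tendsto_id', tendsto_almostPeriods_iff]
  refine ((continuous_fst.tendsto _).comp (tendsto_zsmul_returnTimes _)).congr fun n ↦ ?_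
  simp [mul_comm α]

theorem linearReturnTimes_le_almostPeriods_right : linearReturnTimes α β ≤ almostPeriods β := by
  rw [← tendsto_id', tendsto_almostPeriods_iff]
  refine ((continuous_snd.fst.tendsto _).comp (tendsto_zsmul_returnTimes _)).congr fun n ↦ ?_
  simp [mul_comm β]

theorem tendsto_round_linearReturnTimes :
    Tendsto (fun n : ℤ ↦ round (α * n)) (linearReturnTimes α β) (almostPeriods β) := by
  have hαβ : Tendsto (fun n : ℤ ↦ ((n * (α * β) : ℝ) : UnitAddCircle))
      (linearReturnTimes α β) (𝓝 0) := by
    refine ((continuous_snd.snd.tendsto _).comp (tendsto_zsmul_returnTimes _)).congr fun n ↦ ?_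
    simp
  have hα : Tendsto (fun n : ℤ ↦ β * signedFract (α * n)) (linearReturnTimes α β) (𝓝 (β * 0)) :=
    (tendsto_almostPeriods_iff_signedFract.1
      (tendsto_id'.2 (linearReturnTimes_le_almostPeriods_left α β))).const_mul β
  have hcoe := (AddCircle.continuous_mk' (1 : ℝ)).tendsto (β * 0) |>.comp hα
  rw [tendsto_almostPeriods_iff]
  have h := hαβ.sub hcoe
  simp only [mul_zero, QuotientAddGroup.mk'_apply, QuotientAddGroup.mk_zero, sub_zero] at h
  refine h.congr fun n ↦ ?_
  rw [Function.comp_apply, QuotientAddGroup.mk'_apply, ← AddCircle.coe_sub, signedFract]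
  ring_nf

theorem eventually_bracketProduct_add (v : ℤ) :
    ∀ᶠ w in almostPeriods α, bracketProduct α (v + w) =
      bracketProduct α v + (bracketProduct α w + (v * round (α * w) + round (α * v) * w)) := by
  filter_upwards [eventually_round_mul_add α v] with w hw
  rw [bracketProduct, hw, bracketProduct, bracketProduct]
  ring

theorem tendsto_cross_terms (v : ℤ) :
    Tendsto (fun w : ℤ ↦ v * round (α * w) + round (α * v) * w) (linearReturnTimes α β)
      (almostPeriods β) :=
  tendsto_almostPeriods_linear_combination (tendsto_round_linearReturnTimes α β)
    (tendsto_id'.2 (linearReturnTimes_le_almostPeriods_right α β)) _ _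

theorem tendsto_bracketProduct_defect :
    Tendsto (fun p : ℤ × ℤ ↦ ((β * bracketProduct α (p.1 + p.2) : ℝ) : UnitAddCircle) -
      (((β * bracketProduct α p.1 : ℝ) : UnitAddCircle) + (β * bracketProduct α p.2 : ℝ)))
      ((linearReturnTimes α β).curry (linearReturnTimes α β)) (𝓝 0) := by
  refine Tendsto.curry (f := fun v w ↦ ((β * bracketProduct α (v + w) : ℝ) : UnitAddCircle) -
    (((β * bracketProduct α v : ℝ) : UnitAddCircle) + (β * bracketProduct α w : ℝ)))
    (.of_forall fun v ↦ ?_)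
  refine (tendsto_almostPeriods_iff.1 (tendsto_cross_terms α β v)).congr' ?_
  filter_upwards [linearReturnTimes_le_almostPeriods_left α β (eventually_bracketProduct_add α v)]
    with w hw
  rw [hw, ← AddCircle.coe_add, ← AddCircle.coe_sub]
  congr 1
  push_cast
  ring

instance : NeBot (quadraticReturnTimes α β) := by
  rw [quadraticReturnTimes, almostPeriods, comap_comap, neBot_inf_comap_nhds_iff]
  have hadd : Tendsto (fun p : ℤ × ℤ ↦ p.1 + p.2)
      ((linearReturnTimes α β).curry (linearReturnTimes α β)) (linearReturnTimes α β) :=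
    (tendsto_add_returnTimes _).mono_left curry_le_prod
  exact mapClusterPt_zero_of_tendsto_defect hadd (tendsto_bracketProduct_defect α β)

theorem eventually_bracketQuadratic_add (v : ℤ) :
    ∀ᶠ w in quadraticReturnTimes α β, bracketQuadratic α β (v + w) =
      bracketQuadratic α β v + bracketQuadratic α β w +
        (v * round (β * round (α * w)) + round (α * v) * round (β * w)) := by
  have hlinear : quadraticReturnTimes α β ≤ linearReturnTimes α β := inf_le_left
  have hproduct : Tendsto (bracketProduct α) (quadraticReturnTimes α β) (almostPeriods β) :=
    tendsto_comap.mono_left inf_le_right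
  have hcross := (tendsto_cross_terms α β v).mono_left hlinear
  have hincrement := tendsto_almostPeriods_linear_combination hproduct hcross 1 1
  filter_upwards [hlinear.trans (linearReturnTimes_le_almostPeriods_left α β)
      (eventually_bracketProduct_add α v),
    hincrement.eventually (eventually_round_mul_add β (bracketProduct α v)),
    eventually_round_linear_combination hproduct hcross 1 1,
    hlinear (eventually_round_linear_combination (tendsto_round_linearReturnTimes α β)
      (tendsto_id'.2 (linearReturnTimes_le_almostPeriods_right α β)) v (round (α * v)))]
    with w hadd hround hsplit hcross
  simp only [one_mul, id_eq] at hround hsplit hcross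
  simp only [bracketQuadratic]
  rw [hadd, hround, hsplit, hcross]
  ring

variable {α} in
theorem eventually_Δ2_bracketQuadratic_eq_zero {n m : ℤ}
    (h : round (α * (n + m : ℤ)) = round (α * n) + round (α * m)) :
    ∀ᶠ w in quadraticReturnTimes α β, Δ2 (bracketQuadratic α β) n m w = 0 := by
  filter_upwards [eventually_bracketQuadratic_add α β n, eventually_bracketQuadratic_add α β m,
    eventually_bracketQuadratic_add α β (n + m)] with w hn hm hnm
  rw [Δ2, hnm, hm, add_comm w n, hn, h, bracketQuadratic_zero]
  ring

variable {α} in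
theorem mu_bracketQuadratic (C : ℝ) {n m : ℤ}
    (h : round (α * (n + m : ℤ)) = round (α * n) + round (α * m)) :
    mu C (bracketQuadratic α β) n m := by
  have hatTop : quadraticReturnTimes α β ≤ atTop :=
    inf_le_left.trans (linearReturnTimes_le_atTop α β)
  have hpos : ∀ᶠ w in quadraticReturnTimes α β, 0 < w := hatTop (eventually_gt_atTop 0)
  have hlarge : ∀ᶠ w : ℤ in quadraticReturnTimes α β, C * m ≤ w :=
    hatTop (tendsto_intCast_atTop_atTop.eventually_ge_atTop _)
  exact (hpos.and (hlarge.and (eventually_Δ2_bracketQuadratic_eq_zero β h))).exists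

theorem eventually_psi_bracketQuadratic (C : ℝ) (N : ℤ) :
    ∀ᶠ m in almostPeriods α, psi C (bracketQuadratic α β) m N := by
  have h := (Set.finite_Ioc 0 N).eventually_all.2 fun n _ ↦ eventually_round_mul_add α n
  filter_upwards [h] with m hm n hn hnN
  exact mu_bracketQuadratic β C (hm n ⟨hn, hnN⟩)

end ReturnTimes

/-! ### Second derivatives that stay large -/

theorem abs_mul_Δ2_sub_Δ2_round_le (β : ℝ) (h : ℤ → ℤ) (n₀ n₁ n₂ : ℤ) :
    |β * Δ2 h n₀ n₁ n₂ - Δ2 (fun n ↦ round (β * h n)) n₀ n₁ n₂| ≤ 4 := by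
  have hround (n : ℤ) := abs_le.1 (abs_sub_round (β * h n))
  have h012 := hround (n₀ + n₁ + n₂)
  have h01 := hround (n₀ + n₁)
  have h12 := hround (n₁ + n₂)
  have h20 := hround (n₂ + n₀)
  rw [abs_le]
  push_cast [Δ2]
  constructor <;> linarith [hround n₀, hround n₁, hround n₂, hround 0]

theorem round_add (x y : ℝ) :
    round (x + y) = round x + round y + round (signedFract x + signedFract y) := by
  rw [← round_intCast_add]
  congr 1
  push_cast [signedFract]
  ring

theorem round_add_add (x y z : ℝ) : round (x + y + z) =
    round x + round y + round z + round (signedFract x + signedFract y + signedFract z) := by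
  rw [← round_intCast_add]
  congr 1
  push_cast [signedFract]
  ring

/-- The value of `Δ2 (bracketProduct α)` at `(n₀, n₁, n₂)`, where `x`, `y` and `z` are the signed
fractional parts of `α * n₀`, `α * n₁` and `α * n₂`. -/
noncomputable def carrySum (x y z : ℝ) (n₀ n₁ n₂ : ℤ) : ℤ :=
  n₀ * (round (x + y + z) - round (x + y) - round (z + x)) +
    n₁ * (round (x + y + z) - round (x + y) - round (y + z)) +
    n₂ * (round (x + y + z) - round (y + z) - round (z + x))

theorem Δ2_bracketProduct (α : ℝ) (n₀ n₁ n₂ : ℤ) :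
    Δ2 (bracketProduct α) n₀ n₁ n₂ =
      carrySum (signedFract (α * n₀)) (signedFract (α * n₁)) (signedFract (α * n₂)) n₀ n₁ n₂ := by
  simp only [Δ2, bracketProduct, Int.cast_add, mul_add]
  rw [round_add_add, round_add (α * n₀) (α * n₁), round_add (α * n₁) (α * n₂),
    round_add (α * n₂) (α * n₀), carrySum, Int.cast_zero, mul_zero, zero_mul]
  ring

theorem Δ2_neg (f : ℤ → ℤ) (n₀ n₁ n₂ : ℤ) :
    Δ2 (fun n ↦ -f n) n₀ n₁ n₂ = -Δ2 f n₀ n₁ n₂ := by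
  simp only [Δ2]
  ring

theorem bracketProduct_neg {α : ℝ} (hα : Irrational α) :
    bracketProduct (-α) = fun n ↦ -bracketProduct α n := by
  funext n
  rcases eq_or_ne n 0 with rfl | hn
  · simp [bracketProduct]
  · rw [bracketProduct, bracketProduct, neg_mul, round_neg_of_irrational (hα.mul_intCast hn),
      mul_neg]

theorem round_eq_zero_or_one {x : ℝ} (h₀ : -(1 / 2) ≤ x) (h₁ : x < 3 / 2) :
    (x < 1 / 2 ∧ round x = 0) ∨ (1 / 2 ≤ x ∧ round x = 1) := by
  simp only [round_eq_iff, mem_Ico]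
  push_cast
  rcases lt_or_ge x (1 / 2) with h | h
  · exact .inl ⟨h, by linarith, by linarith⟩
  · exact .inr ⟨h, by linarith, by linarith⟩

-- As `x + y` carries and the other three roundings are `0` or `1`, only the coefficient of `n₂` can
-- be positive, and then the other two coefficients vanish.
theorem carrySum_trichotomy {x y z : ℝ} {n₀ n₁ n₂ : ℤ} (hn₀ : 0 ≤ n₀) (hn₁ : 0 ≤ n₁)
    (hn₂ : 0 ≤ n₂) (hx : x < 1 / 2) (hy : y < 1 / 2) (hz₀ : -(1 / 2) ≤ z)
    (hz : z < 1 / 2) (hxy : 1 / 2 ≤ x + y) :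
    carrySum x y z n₀ n₁ n₂ ≤ -n₀ ∨ carrySum x y z n₀ n₁ n₂ = n₂ ∨
      (x < y ∧ carrySum x y z n₀ n₁ n₂ = -n₁) := by
  have hround_xy : round (x + y) = 1 :=
    round_eq_iff.2 ⟨by push_cast; linarith, by push_cast; linarith⟩
  rw [carrySum, hround_xy]
  rcases round_eq_zero_or_one (x := x + y + z) (by linarith) (by linarith)
    with ⟨-, hxyz⟩ | ⟨-, hxyz⟩ <;>
  rcases round_eq_zero_or_one (x := y + z) (by linarith) (by linarith)
    with ⟨-, hyz⟩ | ⟨hyz_ge, hyz⟩ <;>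
  rcases round_eq_zero_or_one (x := z + x) (by linarith) (by linarith)
    with ⟨hzx_lt, hzx⟩ | ⟨-, hzx⟩ <;>
  rw [hxyz, hyz, hzx]
  case inr.inl.inl => exact .inr (.inl (by ring))
  case inr.inr.inl => exact .inr (.inr ⟨by linarith, by ring⟩)
  all_goals exact .inl (by linarith)

theorem frequently_lt_signedFract {α t : ℝ} (hα : Irrational α) (ht : t < 1 / 2) :
    ∃ᶠ n : ℤ in atTop, t < signedFract (α * n) := by
  obtain ⟨c, htc, hc⟩ := exists_between (max_lt ht one_half_pos)
  have hdense : DenseRange (fun n : ℤ ↦ n • (α : UnitAddCircle)) :=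
    AddCircle.denseRange_zsmul_coe_iff.2 (by simpa using hα)
  have hcluster : MapClusterPt (c : UnitAddCircle) atTop (fun n : ℤ ↦ n • (α : UnitAddCircle)) :=
    ((mapClusterPt_atTop_nsmul_tfae _ _).out 1 3).2 (hdense _)
  have hδ : 0 < min (c - max t 0) (1 / 2 - c) := lt_min (by linarith) (by linarith)
  refine (hcluster.frequently (Metric.ball_mem_nhds _ hδ)).mono fun n hn ↦ ?_
  have hnorm : |α * n - c - round (α * n - c)| < min (c - max t 0) (1 / 2 - c) := by
    rw [← UnitAddCircle.norm_eq, AddCircle.coe_sub, mul_comm, ← zsmul_eq_mul, AddCircle.coe_zsmul,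
      ← dist_eq_norm]
    exact hn
  obtain ⟨hlower, hupper⟩ := abs_lt.1 hnorm
  have hround : round (α * n) = round (α * n - c) :=
    round_eq_iff.2 ⟨by linarith [min_le_left (c - max t 0) (1 / 2 - c), le_max_right t 0],
      by linarith [min_le_right (c - max t 0) (1 / 2 - c)]⟩
  rw [signedFract, hround]
  linarith [min_le_left (c - max t 0) (1 / 2 - c), le_max_left t 0]

theorem exists_lt_half_of_signedFract_le (α : ℝ) {ε : ℝ} (hε : 0 < ε) (M : ℤ) :
    ∃ t < 1 / 2, 1 / 2 - ε ≤ t ∧ ∀ j ∈ Ioc 0 M, signedFract (α * j) ≤ t := by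
  have hbound {a : ℝ} (ha : a < 1 / 2) : ∀ᶠ t in 𝓝[<] (1 / 2 : ℝ), a ≤ t :=
    mem_of_superset (Ioo_mem_nhdsLT ha) fun t ht ↦ ht.1.le
  have hfinite : ∀ᶠ t in 𝓝[<] (1 / 2 : ℝ), ∀ j ∈ Ioc 0 M, signedFract (α * j) ≤ t :=
    (Set.finite_Ioc 0 M).eventually_all.2 fun j _ ↦ hbound (signedFract_lt_half _)
  have hlt : ∀ᶠ t in 𝓝[<] (1 / 2 : ℝ), t < 1 / 2 := self_mem_nhdsWithin
  exact (hlt.and ((hbound (by linarith)).and hfinite)).exists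

-- As `⟨α * n⟩` is taken to be at least `⟨α * j⟩` for all `0 < j ≤ K`, the case `Δ2 = -m` occurs for
-- `m > K` only.
theorem exists_lt_abs_Δ2_bracketProduct_of_le_signedFract {α K ε : ℝ} (hα : Irrational α)
    (hK : 0 ≤ K) (hε : 0 < ε) :
    ∃ n : ℤ, 0 < n ∧ ∀ m : ℤ, 0 < m → ε ≤ signedFract (α * m) →
      ∀ l : ℤ, K < l → K < |(Δ2 (bracketProduct α) n m l : ℝ)| := by
  obtain ⟨t, ht, htε, hsmall⟩ := exists_lt_half_of_signedFract_le α hε ⌊K⌋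
  obtain ⟨n, htn, hKn⟩ := ((frequently_lt_signedFract hα ht).and_eventually
    (eventually_gt_atTop ⌊K⌋)).exists
  have hKn : K < n := Int.floor_lt.1 hKn
  have hn : 0 < n := by exact_mod_cast hK.trans_lt hKn
  refine ⟨n, hn, fun m hm hεm l hKl ↦ ?_⟩
  have hl : 0 < l := by exact_mod_cast hK.trans_lt hKl
  rw [Δ2_bracketProduct]
  rcases carrySum_trichotomy hn.le hm.le hl.le (signedFract_lt_half (α * n))
    (signedFract_lt_half (α * m)) (neg_half_le_signedFract (α * l)) (signedFract_lt_half (α * l))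
    (by linarith) with hle | heq | ⟨hlt, heq⟩
  · have hle := Int.cast_le (R := ℝ).2 hle
    rw [Int.cast_neg] at hle
    exact lt_abs.2 (.inr (by linarith))
  · rwa [heq, abs_of_pos (hK.trans_lt hKl)]
  · have hKm : K < m := by
      by_contra! hmK
      linarith [hsmall m ⟨hm, Int.le_floor.2 hmK⟩]
    rwa [heq, Int.cast_neg, abs_neg, abs_of_pos (hK.trans_lt hKm)]

theorem exists_lt_abs_Δ2_bracketProduct {α K ε : ℝ} (hα : Irrational α) (hK : 0 ≤ K)
    (hε : 0 < ε) :
    ∃ N : ℤ, 0 < N ∧ ∀ m : ℤ, 0 < m → ε ≤ |signedFract (α * m)| → ∃ n : ℤ, 0 < n ∧ n ≤ N ∧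
      ∀ l : ℤ, K < l → K < |(Δ2 (bracketProduct α) n m l : ℝ)| := by
  obtain ⟨n, hn, hpos⟩ := exists_lt_abs_Δ2_bracketProduct_of_le_signedFract hα hK hε
  obtain ⟨n', hn', hneg⟩ := exists_lt_abs_Δ2_bracketProduct_of_le_signedFract hα.neg hK hε
  refine ⟨max n n', lt_max_of_lt_left hn, fun m hm hεm ↦ ?_⟩
  rcases le_abs.1 hεm with hεm | hεm
  · exact ⟨n, hn, le_max_left _ _, hpos m hm hεm⟩
  · have hsign : signedFract (-α * m) = -signedFract (α * m) := by
      rw [neg_mul, signedFract, signedFract,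
        round_neg_of_irrational (hα.mul_intCast hm.ne'), Int.cast_neg]
      ring
    refine ⟨n', hn', le_max_right _ _, fun l hKl ↦ ?_⟩
    simpa [bracketProduct_neg hα, Δ2_neg] using hneg m hm (hεm.trans_eq hsign.symm) l hKl

theorem abs_Δ2_bracketProduct_le {α β : ℝ} (hβ : β ≠ 0) {n₀ n₁ n₂ : ℤ}
    (h : Δ2 (bracketQuadratic α β) n₀ n₁ n₂ = 0) :
    |(Δ2 (bracketProduct α) n₀ n₁ n₂ : ℝ)| ≤ 4 / |β| := by
  have hbound := abs_mul_Δ2_sub_Δ2_round_le β (bracketProduct α) n₀ n₁ n₂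
  rw [show Δ2 (fun n ↦ round (β * bracketProduct α n)) n₀ n₁ n₂ = 0 from h, Int.cast_zero,
    sub_zero, abs_mul] at hbound
  exact (le_div_iff₀' (abs_pos.2 hβ)).2 hbound

theorem exists_abs_signedFract_lt_of_psi {α β C ε : ℝ} (hα : Irrational α) (hβ : β ≠ 0)
    (hC : 4 / |β| < C) (hε : 0 < ε) :
    ∃ N : ℤ, 0 < N ∧ ∀ m : ℤ, 0 < m → psi C (bracketQuadratic α β) m N →
      |signedFract (α * m)| < ε := by
  have hK : 0 ≤ 4 / |β| := by positivity
  obtain ⟨N, hN, hlarge⟩ := exists_lt_abs_Δ2_bracketProduct hα hK hε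
  refine ⟨N, hN, fun m hm hpsi ↦ ?_⟩
  by_contra! hεm
  obtain ⟨n, hn, hnN, hΔ⟩ := hlarge m hm hεm
  obtain ⟨l, -, hCl, hzero⟩ := hpsi n hn hnN
  have hm' : (1 : ℝ) ≤ m := by exact_mod_cast hm
  have hKl : 4 / |β| < l := hC.trans_le ((le_mul_of_one_le_right (by linarith) hm').trans hCl)
  exact (hΔ l hKl).not_ge (abs_Δ2_bracketProduct_le hβ hzero)

theorem characterization_general (α β : ℝ) (hα : Irrational α) (hβ : β ≠ 0)
    (g : ℤ → ℤ) (hg : ∀ n : ℤ, g n = round (β * n * round (α * n))) :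
    ∃ C : ℝ, 1 ≤ C ∧
      ((∀ ε : ℝ, 0 < ε → ∃ N : ℤ, 0 < N ∧ ∀ m : ℤ, 0 < m → psi C g m N →
          |α * m - round (α * m)| < ε) ∧
        (∀ N : ℤ, 0 < N → ∃ ε : ℝ, 0 < ε ∧ ∀ m : ℤ, 0 < m →
          |α * m - round (α * m)| < ε → psi C g m N)) := by
  obtain rfl : g = bracketQuadratic α β := by
    funext n
    rw [hg, bracketQuadratic, bracketProduct, Int.cast_mul, mul_assoc]
  refine ⟨4 / |β| + 1, by linarith [show 0 ≤ 4 / |β| by positivity], fun ε hε ↦ ?_, fun N _ ↦ ?_⟩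
  · exact exists_abs_signedFract_lt_of_psi hα hβ (lt_add_one _) hε
  · obtain ⟨ε, hε, h⟩ :=
      eventually_almostPeriods_iff.1 (eventually_psi_bracketQuadratic α β (4 / |β| + 1) N)
    exact ⟨ε, hε, fun m _ ↦ h m⟩

theorem irrational_of_linearIndependent {x y : ℝ} (h : LinearIndependent ℚ ![1, x, y]) :
    Irrational x := by
  rintro ⟨q, rfl⟩
  have h₁ := Fintype.linearIndependent_iff.1 h ![-q, 1, 0]
    (by simp [Fin.sum_univ_three, Rat.smul_def]) 1
  simp at h₁

theorem characterization (α β : ℝ) (hα : 0 < α) (hβ : 0 < β)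
    (hind : LinearIndependent ℚ ![(1 : ℝ), α, α ^ 2])
    (hβ' : (∃ b : ℤ, β = (b : ℝ)) ∨ Irrational β)
    (g : ℤ → ℤ) (hg : ∀ n : ℤ, g n = round (β * n * round (α * n))) :
    ∃ C : ℝ, 1 ≤ C ∧
      ((∀ ε : ℝ, 0 < ε → ∃ N : ℤ, 0 < N ∧ ∀ m : ℤ, 0 < m → psi C g m N →
          |α * m - round (α * m)| < ε) ∧
        (∀ N : ℤ, 0 < N → ∃ ε : ℝ, 0 < ε ∧ ∀ m : ℤ, 0 < m →
          |α * m - round (α * m)| < ε → psi C g m N)) :=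
  characterization_general α β (irrational_of_linearIndependent hind) hβ.ne' g hg

end Stmt7
end
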